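/- Let g : (0,∞) → ℝ be smooth and compactly supported, let q ≥ 1 and d be integers with gcd(d,q) = 1. Then Σ_{n=1}^∞ d(n) e(nd/q) g(n) = q^{−1} ∫_0^∞ (log x + 2γ − 2 log q) g(x) dx + Σ_{n=1}^∞ d(n) e(−n d̄/q) g₁(n) + Σ_{n=1}^∞ d(n) e(n d̄/q) g₂(n), where g₁(n) = −(2π/q) ∫_0^∞ g(x) Y₀(4π√(nx)/q) dx and g₂(n) = (4/q) ∫_0^∞ g(x) K₀(4π√(nx)/q) dx, and d̄ denotes the inverse of d modulo q. -/

import Mathlib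

open Real MeasureTheory

noncomputable section

/-- `e(t) = exp(2πit)`. -/
def e2pi (t : ℝ) : ℂ := Complex.exp (2 * Real.pi * Complex.I * t)

/-- Kloosterman sum `S(m, n; q)`. -/
def kloosterman (m n : ℤ) (q : ℕ) : ℂ :=
  ∑ x ∈ (Finset.range q).filter (fun x => Nat.Coprime x q),
    e2pi ((((m * x + n * ((((x : ZMod q))⁻¹).val : ℤ)) : ℤ) : ℝ) / q)

/-- The divisor function `d(n)`. -/
def dd (n : ℕ) : ℕ := n.divisors.card

/-- The `k`-fold divisor function. -/
def dk : ℕ → ℕ → ℕ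
  | 0, n => if n = 1 then 1 else 0
  | (k+1), n => ∑ m ∈ n.divisors, dk k (n / m)

/-- An admissible weight supported in `[X,2X] × [X,2X]`. -/
def AdmissibleWeight (X : ℝ) (f : ℝ → ℝ → ℝ) : Prop :=
  ContDiff ℝ (⊤ : ℕ∞) (fun p : ℝ × ℝ => f p.1 p.2) ∧
  (∀ x y : ℝ, f x y ≠ 0 → x ∈ Set.Icc X (2*X) ∧ y ∈ Set.Icc X (2*X)) ∧
  ∀ (i j : ℕ) (x y : ℝ),
    |iteratedDeriv i (fun x' => iteratedDeriv j (fun y' => f x' y') y) x| ≤ X ^ (-(i:ℝ) - (j:ℝ))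

def Hk (k : ℕ) : ℝ := ∑ j ∈ Finset.range k, 1/((j:ℝ)+1)

def besselJ0 (z : ℝ) : ℝ := ∑' k : ℕ, (-1)^k * (z/2)^(2*k) / ((Nat.factorial k : ℝ))^2

def besselI0 (z : ℝ) : ℝ := ∑' k : ℕ, (z/2)^(2*k) / ((Nat.factorial k : ℝ))^2

def besselY0 (z : ℝ) : ℝ :=
  (2/Real.pi) * ((Real.log (z/2) + Real.eulerMascheroniConstant) * besselJ0 z
    + ∑' k : ℕ, (-1)^k * Hk (k+1) * (z/2)^(2*(k+1)) / ((Nat.factorial (k+1) : ℝ))^2)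

def besselK0 (z : ℝ) : ℝ :=
  -(Real.log (z/2) + Real.eulerMascheroniConstant) * besselI0 z
    + ∑' k : ℕ, Hk (k+1) * (z/2)^(2*(k+1)) / ((Nat.factorial (k+1) : ℝ))^2

def besselJn (ν : ℕ) (z : ℝ) : ℝ :=
  ∑' m : ℕ, (-1)^m * (z/2)^(2*m+ν) / ((Nat.factorial m : ℝ) * (Nat.factorial (m+ν) : ℝ))

namespace Vor

open Filter Topology Set

/-- Coefficient power series are differentiable termwise. -/
lemma ps_summable (a : ℕ → ℂ) (ha : ∀ k, ‖a k‖ ≤ 4 ^ k / (Nat.factorial k : ℝ)) (w : ℂ) :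
    Summable (fun k => a k * w ^ k) := by
  apply Summable.of_norm_bounded (g := fun k => (4 * ‖w‖) ^ k / (Nat.factorial k : ℝ))
    (Real.summable_pow_div_factorial _)
  intro k
  rw [norm_mul, norm_pow, mul_pow, mul_div_right_comm]
  exact mul_le_mul_of_nonneg_right (ha k) (by positivity)

lemma ps_hasDerivAt (a : ℕ → ℂ) (ha : ∀ k, ‖a k‖ ≤ 4 ^ k / (Nat.factorial k : ℝ)) (w : ℂ) :
    HasDerivAt (fun w => ∑' k, a k * w ^ k) (∑' k : ℕ, ((k : ℂ) + 1) * a (k + 1) * w ^ k) w := by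
  have hs : Summable (fun k : ℕ => 4 * ((4 * (‖w‖ + 1)) ^ (k - 1) / (Nat.factorial (k - 1) : ℝ))) := by
    rw [← summable_nat_add_iff 1]
    simpa using (Real.summable_pow_div_factorial (4 * (‖w‖ + 1))).mul_left 4
  have h := hasDerivAt_tsum_of_isPreconnected (𝕜 := ℂ) (g := fun (k : ℕ) w => a k * w ^ k)
    (g' := fun (k : ℕ) w => a k * ((k : ℂ) * w ^ (k - 1)))
    (t := Metric.ball (0 : ℂ) (‖w‖ + 1)) (y₀ := w) (y := w) hs Metric.isOpen_ball
    (convex_ball _ _).isPreconnected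
    (fun k y _ => (hasDerivAt_pow k y).const_mul _)
    (fun k y hy => by
      rcases k with _ | k
      · simp
      · have hy' : ‖y‖ ≤ ‖w‖ + 1 := by
          have := Metric.mem_ball.1 hy
          rw [dist_zero_right] at this; exact this.le
        have h1 := ha (k + 1)
        rw [norm_mul, norm_mul, norm_pow]
        simp only [Nat.add_sub_cancel]
        have h2 : ‖((k + 1 : ℕ) : ℂ)‖ = (k : ℝ) + 1 := by
          rw [Complex.norm_natCast]; push_cast; ring
        rw [h2]
        calc ‖a (k + 1)‖ * (((k : ℝ) + 1) * ‖y‖ ^ k)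
            ≤ (4 ^ (k + 1) / ((Nat.factorial (k + 1) : ℕ) : ℝ)) * (((k : ℝ) + 1) * (‖w‖ + 1) ^ k) := by
              gcongr
          _ = _ := by
              rw [Nat.factorial_succ, mul_pow]; push_cast
              have : (Nat.factorial k : ℝ) ≠ 0 := by positivity
              field_simp
              try ring)
    (by simp) (ps_summable a ha w) (by simp)
  refine h.congr_deriv ?_
  rw [Summable.tsum_eq_zero_add]
  · simp only [Nat.cast_zero, zero_mul, mul_zero, zero_add, Nat.add_sub_cancel]
    apply tsum_congr; intro k; push_cast; ring
  · rw [← summable_nat_add_iff 1]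
    have : Summable (fun k : ℕ => (((k : ℂ) + 1) * a (k + 1)/4) * (w ) ^ k) := by
      apply ps_summable
      intro k
      have h1 := ha (k + 1)
      have h2 : ‖((k : ℂ) + 1)‖ = (k : ℝ) + 1 := by
        have := Complex.norm_natCast (k + 1); push_cast at this; exact this
      rw [norm_div, norm_mul, h2]
      rw [Nat.factorial_succ] at h1; push_cast at h1
      rw [le_div_iff₀ (by positivity)] at h1 ⊢
      have : ‖(4:ℂ)‖ = 4 := by simp
      rw [this]
      have h3 : (4:ℝ)^(k+1) = 4 * 4^k := by ring
      nlinarith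
    refine (this.mul_left 4).congr fun k => ?_
    simp only [Nat.add_sub_cancel]; push_cast; ring

lemma Hk_nonneg (k : ℕ) : 0 ≤ Hk k := Finset.sum_nonneg fun _ _ => by positivity
lemma Hk_le (k : ℕ) : Hk k ≤ k := by
  unfold Hk
  calc _ ≤ ∑ j ∈ Finset.range k, (1:ℝ) := by
        apply Finset.sum_le_sum; intro j _
        rw [div_le_one (by positivity)]; linarith [(Nat.cast_nonneg j : (0:ℝ) ≤ j)]
    _ = _ := by simp
lemma Hk_succ (k : ℕ) : Hk (k + 1) = Hk k + 1 / ((k : ℝ) + 1) := by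
  unfold Hk; rw [Finset.sum_range_succ]

lemma coef_bound (k : ℕ) (x : ℝ) (hx0 : 0 ≤ x) (hx : x ≤ ((k : ℝ) + 1) ^ 2) :
    x / (Nat.factorial k : ℝ) ^ 2 ≤ 4 ^ k / (Nat.factorial k : ℝ) := by
  have h1 : (1:ℝ) ≤ (Nat.factorial k : ℝ) := by exact_mod_cast Nat.factorial_pos k
  have h2 : ((k:ℝ) + 1) ≤ 2 ^ k := by exact_mod_cast Nat.lt_two_pow_self (n := k)
  have h3 : x ≤ 4 ^ k := by
    calc x ≤ _ := hx
      _ ≤ (2 ^ k) ^ 2 := by gcongr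
      _ = 4 ^ k := by rw [← pow_mul, mul_comm, pow_mul]; norm_num
  have h0 : (0:ℝ) < (Nat.factorial k : ℝ) := by linarith
  rw [div_le_div_iff₀ (by positivity) (by positivity)]
  have h4 : (0:ℝ) ≤ 4 ^ k := by positivity
  have h5 : (Nat.factorial k : ℝ) ≤ (Nat.factorial k : ℝ) ^ 2 := by nlinarith
  calc _ ≤ 4 ^ k * (Nat.factorial k : ℝ) := by gcongr
    _ ≤ _ := by gcongr

def cP (k : ℕ) : ℂ := ((1 / (Nat.factorial k : ℝ) ^ 2 : ℝ) : ℂ)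
def cQ (k : ℕ) : ℂ := ((Hk k / (Nat.factorial k : ℝ) ^ 2 : ℝ) : ℂ)
def cP2 (k : ℕ) : ℂ := (((k : ℝ) / (Nat.factorial k : ℝ) ^ 2 : ℝ) : ℂ)
def cQ2 (k : ℕ) : ℂ := (((k : ℝ) * Hk k / (Nat.factorial k : ℝ) ^ 2 : ℝ) : ℂ)
def P (w : ℂ) : ℂ := ∑' k, cP k * w ^ k
def Q (w : ℂ) : ℂ := ∑' k, cQ k * w ^ k
def P2 (w : ℂ) : ℂ := ∑' k, cP2 k * w ^ k
def Q2 (w : ℂ) : ℂ := ∑' k, cQ2 k * w ^ k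
def P1 (w : ℂ) : ℂ := ∑' k : ℕ, ((k : ℂ) + 1) * cP (k + 1) * w ^ k
def Q1 (w : ℂ) : ℂ := ∑' k : ℕ, ((k : ℂ) + 1) * cQ (k + 1) * w ^ k

lemma cP_le (k : ℕ) : ‖cP k‖ ≤ 4 ^ k / (Nat.factorial k : ℝ) := by
  unfold cP
  rw [Complex.norm_real, Real.norm_of_nonneg (by positivity)]
  apply coef_bound _ _ (by norm_num)
  have : (0:ℝ) ≤ k := Nat.cast_nonneg k
  nlinarith
lemma cQ_le (k : ℕ) : ‖cQ k‖ ≤ 4 ^ k / (Nat.factorial k : ℝ) := by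
  unfold cQ
  have := Hk_nonneg k
  rw [Complex.norm_real, Real.norm_of_nonneg (by positivity)]
  apply coef_bound _ _ this
  have h : (0:ℝ) ≤ k := Nat.cast_nonneg k
  nlinarith [Hk_le k]
lemma cP2_le (k : ℕ) : ‖cP2 k‖ ≤ 4 ^ k / (Nat.factorial k : ℝ) := by
  unfold cP2
  rw [Complex.norm_real, Real.norm_of_nonneg (by positivity)]
  have h : (0:ℝ) ≤ k := Nat.cast_nonneg k
  apply coef_bound _ _ h
  nlinarith
lemma cQ2_le (k : ℕ) : ‖cQ2 k‖ ≤ 4 ^ k / (Nat.factorial k : ℝ) := by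
  unfold cQ2
  have := Hk_nonneg k
  rw [Complex.norm_real, Real.norm_of_nonneg (by positivity)]
  have h : (0:ℝ) ≤ k := Nat.cast_nonneg k
  apply coef_bound _ _ (by positivity)
  nlinarith [Hk_le k]

lemma P_deriv (w : ℂ) : HasDerivAt P (P1 w) w := ps_hasDerivAt cP cP_le w
lemma Q_deriv (w : ℂ) : HasDerivAt Q (Q1 w) w := ps_hasDerivAt cQ cQ_le w

lemma P1_summable (w : ℂ) : Summable (fun k : ℕ => ((k : ℂ) + 1) * cP (k + 1) * w ^ k) := by
  apply ps_summable
  intro k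
  have e : ((k : ℂ) + 1) * cP (k + 1) = (((1 / ((k : ℝ) + 1)) / (Nat.factorial k : ℝ) ^ 2 : ℝ) : ℂ) := by
    unfold cP; rw [Nat.factorial_succ]; push_cast
    have : (Nat.factorial k : ℂ) ≠ 0 := by exact_mod_cast Nat.factorial_ne_zero k
    have : (k : ℂ) + 1 ≠ 0 := by exact_mod_cast Nat.succ_ne_zero k
    field_simp
  rw [e, Complex.norm_real, Real.norm_of_nonneg (by positivity)]
  apply coef_bound _ _ (by positivity)
  have h : (0:ℝ) ≤ k := Nat.cast_nonneg k
  have : 1 / ((k:ℝ) + 1) ≤ 1 := by rw [div_le_one (by positivity)]; linarith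
  nlinarith

lemma P2_deriv (w : ℂ) : HasDerivAt P2 (P w) w := by
  refine (ps_hasDerivAt cP2 cP2_le w).congr_deriv ?_
  unfold P
  apply tsum_congr; intro k
  unfold cP cP2; rw [Nat.factorial_succ]; push_cast
  have : (Nat.factorial k : ℂ) ≠ 0 := by exact_mod_cast Nat.factorial_ne_zero k
  have : (k : ℂ) + 1 ≠ 0 := by exact_mod_cast Nat.succ_ne_zero k
  field_simp

lemma Q2_deriv (w : ℂ) : HasDerivAt Q2 (Q w + P1 w) w := by
  refine (ps_hasDerivAt cQ2 cQ2_le w).congr_deriv ?_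
  unfold Q P1
  rw [← (ps_summable cQ cQ_le w).tsum_add (P1_summable w)]
  apply tsum_congr; intro k
  unfold cQ cP cQ2; rw [Nat.factorial_succ, Hk_succ]; push_cast
  have : (Nat.factorial k : ℂ) ≠ 0 := by exact_mod_cast Nat.factorial_ne_zero k
  have : (k : ℂ) + 1 ≠ 0 := by exact_mod_cast Nat.succ_ne_zero k
  field_simp

lemma P2_eq (w : ℂ) : P2 w = w * P1 w := by
  unfold P2 P1
  rw [(ps_summable cP2 cP2_le w).tsum_eq_zero_add, ← tsum_mul_left]
  have : cP2 0 = 0 := by simp [cP2]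
  rw [this, zero_mul, zero_add]
  apply tsum_congr; intro k
  unfold cP2 cP; push_cast; ring

lemma Q2_eq (w : ℂ) : Q2 w = w * Q1 w := by
  unfold Q2 Q1
  rw [(ps_summable cQ2 cQ2_le w).tsum_eq_zero_add, ← tsum_mul_left]
  have : cQ2 0 = 0 := by simp [cQ2]
  rw [this, zero_mul, zero_add]
  apply tsum_congr; intro k
  unfold cQ2 cQ; push_cast; ring

lemma P_zero : P 0 = 1 := by
  unfold P; rw [tsum_eq_single 0]
  · simp [cP]
  · intro b hb; simp [hb]
lemma Q_zero : Q 0 = 0 := by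
  unfold Q; rw [tsum_eq_single 0]
  · simp [cQ, Hk]
  · intro b hb; simp [hb]
lemma P2_zero : P2 0 = 0 := by rw [P2_eq]; simp
lemma Q2_zero : Q2 0 = 0 := by rw [Q2_eq]; simp

lemma P_cont : Continuous P := continuous_iff_continuousAt.2 fun w => (P_deriv w).continuousAt
lemma Q_cont : Continuous Q := continuous_iff_continuousAt.2 fun w => (Q_deriv w).continuousAt
lemma P2_cont : Continuous P2 := continuous_iff_continuousAt.2 fun w => (P2_deriv w).continuousAt
lemma Q2_cont : Continuous Q2 := continuous_iff_continuousAt.2 fun w => (Q2_deriv w).continuousAt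

end Vor

namespace Vor

open Filter Topology Set

/-- The basic dominating function. -/
lemma dom_int (n : ℤ) {α β : ℝ} (hα : 0 < α) (hβ : 0 < β) :
    IntegrableOn (fun t : ℝ => t ^ n * rexp (-(α * t) - β / t)) (Ioi 0) := by
  set k := n.natAbs
  obtain ⟨N, hN⟩ : ∃ N : ℕ, (N : ℤ) = n + k := ⟨(n + k).toNat, by omega⟩
  have h1 : IntegrableOn (fun t : ℝ => (Nat.factorial k / β ^ k) * (t ^ (N : ℝ) * rexp (-α * t ^ (1:ℝ)))) (Ioi 0) :=
    (integrableOn_rpow_mul_exp_neg_mul_rpow (s := N) (p := 1)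
      (by linarith [(Nat.cast_nonneg N : (0:ℝ) ≤ N)]) one_pos hα).const_mul _
  refine Integrable.mono' h1 ?_ ?_
  · apply ContinuousOn.aestronglyMeasurable _ measurableSet_Ioi
    apply ContinuousOn.mul
    · exact ContinuousOn.zpow₀ continuousOn_id _ (fun t ht => Or.inl (ne_of_gt ht))
    · apply Continuous.comp_continuousOn Real.continuous_exp
      apply ContinuousOn.sub (by fun_prop)
      exact continuousOn_const.div continuousOn_id (fun t ht => ne_of_gt ht)
  · filter_upwards [ae_restrict_mem measurableSet_Ioi] with t ht
    have ht : 0 < t := ht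
    rw [Real.norm_of_nonneg (by positivity), sub_eq_add_neg, Real.exp_add]
    have h2 := Real.pow_div_factorial_le_exp (β / t) (by positivity) k
    have h3 : rexp (-(β / t)) ≤ Nat.factorial k / β ^ k * t ^ k := by
      rw [Real.exp_neg, inv_le_comm₀ (Real.exp_pos _) (by positivity)]
      refine le_trans (le_of_eq ?_) h2
      rw [div_pow]; field_simp
    have h4 : t ^ (N : ℝ) = t ^ n * t ^ k := by
      rw [Real.rpow_natCast, ← zpow_natCast, ← zpow_natCast, hN, zpow_add₀ ht.ne']
    rw [h4, Real.rpow_one]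
    calc _ = t ^ n * rexp (-(α * t)) * rexp (-(β / t)) := by ring
      _ ≤ t ^ n * rexp (-(α * t)) * (Nat.factorial k / β ^ k * t ^ k) := by gcongr
      _ = _ := by rw [neg_mul]; ring

def In (n : ℤ) (a b : ℂ) : ℂ := ∫ t in Ioi (0:ℝ), (t : ℂ) ^ n * Complex.exp (-(a * t) - b / t)

lemma In_norm (n : ℤ) (a b : ℂ) {t : ℝ} (ht : 0 < t) :
    ‖(t : ℂ) ^ n * Complex.exp (-(a * t) - b / t)‖ = t ^ n * rexp (-(a.re * t) - b.re / t) := by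
  rw [norm_mul, norm_zpow, Complex.norm_real, Real.norm_of_nonneg ht.le, Complex.norm_exp]
  congr 2
  rw [Complex.sub_re, Complex.neg_re, Complex.re_mul_ofReal, Complex.div_ofReal_re]

lemma In_meas (n : ℤ) (a b : ℂ) : AEStronglyMeasurable
    (fun t : ℝ => (t : ℂ) ^ n * Complex.exp (-(a * t) - b / t)) (volume.restrict (Ioi 0)) := by
  apply ContinuousOn.aestronglyMeasurable _ measurableSet_Ioi
  have hc : ContinuousOn (fun t : ℝ => (t : ℂ)) (Ioi 0) := by fun_prop
  have hne : ∀ t ∈ Ioi (0:ℝ), (t : ℂ) ≠ 0 := fun t ht => by exact_mod_cast ne_of_gt ht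
  apply ContinuousOn.mul
  · exact ContinuousOn.zpow₀ hc _ (fun t ht => Or.inl (hne t ht))
  · apply Continuous.comp_continuousOn Complex.continuous_exp
    apply ContinuousOn.sub (by fun_prop)
    exact continuousOn_const.div hc hne

lemma In_int (n : ℤ) {a b : ℂ} (ha : 0 < a.re) (hb : 0 < b.re) :
    IntegrableOn (fun t : ℝ => (t : ℂ) ^ n * Complex.exp (-(a * t) - b / t)) (Ioi 0) := by
  refine Integrable.mono' (dom_int n ha hb) (In_meas n a b) ?_
  filter_upwards [ae_restrict_mem measurableSet_Ioi] with t ht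
  exact (In_norm n a b ht).le

lemma In_deriv_b (n : ℤ) {a b : ℂ} (ha : 0 < a.re) (hb : 0 < b.re) :
    HasDerivAt (fun b => In n a b) (-In (n - 1) a b) b := by
  have hs : {z : ℂ | b.re / 2 < z.re} ∈ 𝓝 b :=
    (isOpen_lt continuous_const Complex.continuous_re).mem_nhds (by simp; linarith)
  have := (hasDerivAt_integral_of_dominated_loc_of_deriv_le (𝕜 := ℂ)
    (μ := volume.restrict (Ioi (0:ℝ)))
    (F := fun b t => (t : ℂ) ^ n * Complex.exp (-(a * t) - b / t))
    (F' := fun b t => -((t : ℂ) ^ (n - 1) * Complex.exp (-(a * t) - b / t)))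
    (bound := fun t => t ^ (n - 1) * rexp (-(a.re * t) - (b.re / 2) / t)) hs
    (Eventually.of_forall fun b => In_meas n a b) (In_int n ha hb) (In_meas _ a b).neg
    ?_ (dom_int _ ha (by linarith)) ?_).2
  · rw [integral_neg] at this
    exact this
  · filter_upwards [ae_restrict_mem measurableSet_Ioi] with t ht x hx
    have ht : 0 < t := ht
    have hx : b.re / 2 < x.re := hx
    rw [norm_neg, In_norm _ _ _ ht]
    gcongr
  · filter_upwards [ae_restrict_mem measurableSet_Ioi] with t ht x hx
    have ht : (t : ℂ) ≠ 0 := by exact_mod_cast ne_of_gt ht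
    have := (((hasDerivAt_id x).div_const (t : ℂ)).const_sub (-(a * t))).cexp.const_mul ((t : ℂ) ^ n)
    refine this.congr_deriv ?_
    rw [zpow_sub_one₀ ht]
    simp only [id]
    field_simp

lemma In_deriv_a (n : ℤ) {a b : ℂ} (ha : 0 < a.re) (hb : 0 < b.re) :
    HasDerivAt (fun a => In n a b) (-In (n + 1) a b) a := by
  have hs : {z : ℂ | a.re / 2 < z.re} ∈ 𝓝 a :=
    (isOpen_lt continuous_const Complex.continuous_re).mem_nhds (by simp; linarith)
  have := (hasDerivAt_integral_of_dominated_loc_of_deriv_le (𝕜 := ℂ)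
    (μ := volume.restrict (Ioi (0:ℝ)))
    (F := fun a t => (t : ℂ) ^ n * Complex.exp (-(a * t) - b / t))
    (F' := fun a t => -((t : ℂ) ^ (n + 1) * Complex.exp (-(a * t) - b / t)))
    (bound := fun t => t ^ (n + 1) * rexp (-((a.re / 2) * t) - b.re / t)) hs
    (Eventually.of_forall fun a => In_meas n a b) (In_int n ha hb) (In_meas _ a b).neg
    ?_ (dom_int _ (by linarith) hb) ?_).2
  · rw [integral_neg] at this
    exact this
  · filter_upwards [ae_restrict_mem measurableSet_Ioi] with t ht x hx
    have ht : 0 < t := ht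
    have hx : a.re / 2 < x.re := hx
    rw [norm_neg, In_norm _ _ _ ht]
    gcongr
  · filter_upwards [ae_restrict_mem measurableSet_Ioi] with t ht x hx
    have ht : (t : ℂ) ≠ 0 := by exact_mod_cast ne_of_gt ht
    have := (((hasDerivAt_id x).mul_const (t : ℂ)).neg.sub_const (b / t)).cexp.const_mul ((t : ℂ) ^ n)
    refine this.congr_deriv ?_
    rw [zpow_add_one₀ ht]
    simp only [id, Pi.neg_apply]
    ring

lemma int_subst (f : ℝ → ℂ) {b : ℝ} (hb : 0 < b) :
    ∫ t in Ioi (0:ℝ), ((b / t ^ 2 : ℝ) : ℂ) * f (b / t) = ∫ t in Ioi (0:ℝ), f t := by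
  have h1 := integral_comp_rpow_Ioi (fun y => (b : ℂ) * f (b * y)) (p := -1) (by norm_num)
  have h2 := integral_comp_mul_left_Ioi f 0 hb
  rw [integral_const_mul, h2] at h1
  rw [mul_zero] at h1
  have h3 : (b : ℂ) * (b⁻¹ • ∫ x in Ioi (0:ℝ), f x) = ∫ x in Ioi (0:ℝ), f x := by
    rw [Complex.real_smul]; push_cast
    have : (b : ℂ) ≠ 0 := by exact_mod_cast hb.ne'
    field_simp
  rw [h3] at h1
  rw [← h1]
  apply setIntegral_congr_fun measurableSet_Ioi
  intro t ht
  have ht : 0 < t := ht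
  simp only [Complex.real_smul]
  have e1 : t ^ (-1 - 1 : ℝ) = 1 / t ^ 2 := by
    rw [show (-1 - 1 : ℝ) = -((2 : ℕ) : ℝ) by norm_num, Real.rpow_neg ht.le, Real.rpow_natCast]; simp
  rw [e1, Real.rpow_neg_one]
  push_cast
  simp [div_eq_mul_inv]
  ring

/-- scaling -/
lemma In_scale {a : ℝ} (ha : 0 < a) (b : ℂ) : In (-1) a b = In (-1) 1 (a * b) := by
  unfold In
  have h2 := integral_comp_mul_left_Ioi (fun t : ℝ => (t : ℂ) ^ (-1 : ℤ) * Complex.exp (-(1 * t) - (a * b) / t)) 0 ha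
  rw [mul_zero] at h2
  have ha' : (a : ℂ) ≠ 0 := by exact_mod_cast ha.ne'
  have h3 := congrArg (fun z => (a : ℂ) * z) h2
  simp only [Complex.real_smul] at h3
  rw [Complex.ofReal_inv, mul_inv_cancel_left₀ ha', ← integral_const_mul] at h3
  rw [← h3]
  apply setIntegral_congr_fun measurableSet_Ioi
  intro t ht
  have ht : (t : ℂ) ≠ 0 := by exact_mod_cast ne_of_gt ht
  simp only [zpow_neg, zpow_one]
  push_cast
  have e : -((a:ℂ) * t) - b / t = -(1 * (a * t)) - a * b / (a * t) := by field_simp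
  rw [e]; field_simp

lemma In_two {b : ℝ} (hb : 0 < b) : (b : ℂ) * In (-2) 1 b = In 0 1 b := by
  unfold In
  conv_rhs => rw [← int_subst _ hb]
  rw [← integral_const_mul]
  apply setIntegral_congr_fun measurableSet_Ioi
  intro t ht
  have ht : (t : ℂ) ≠ 0 := by exact_mod_cast ne_of_gt ht
  have hb : (b : ℂ) ≠ 0 := by exact_mod_cast ne_of_gt hb
  simp only [zpow_zero]
  push_cast
  rw [show (-2 : ℤ) = -((2 : ℕ) : ℤ) by norm_num, zpow_neg, zpow_natCast]
  have e : -(1 * (b / t:ℂ)) - b / (b/t) = -(1 * t) - b / t := by field_simp; ring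
  rw [e, one_mul, one_mul]
  ring

end Vor

namespace Vor

open Filter Topology Set

lemma log_bd {t : ℝ} (ht : 0 < t) : |Real.log t| ≤ t + 2 * t ^ (-(1/2) : ℝ) := by
  have h1 := Real.log_le_sub_one_of_pos ht
  have h2 := Real.log_le_sub_one_of_pos (Real.rpow_pos_of_pos ht (-(1/2)))
  rw [Real.log_rpow ht] at h2
  have h3 := Real.rpow_pos_of_pos ht (-(1/2))
  rw [abs_le]; constructor <;> linarith

lemma logexp_dom : IntegrableOn (fun t : ℝ => (t + 2 * t ^ (-(1/2) : ℝ)) * rexp (-t)) (Ioi 0) := by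
  have h1 := (integrableOn_rpow_mul_exp_neg_mul_rpow (s := 1) (p := 1) (b := 1) (by norm_num) one_pos one_pos)
  have h2 := (integrableOn_rpow_mul_exp_neg_mul_rpow (s := -(1/2)) (p := 1) (b := 1) (by norm_num) one_pos one_pos)
  refine (h1.add (h2.const_mul 2)).congr_fun ?_ measurableSet_Ioi
  intro t ht
  simp only [Real.rpow_one, Pi.add_apply]
  rw [neg_mul, one_mul]; ring

def Lb (b : ℝ) : ℂ := ∫ t in Ioi (0:ℝ), (Real.log t : ℂ) * Complex.exp (-(1 * t) - b / t)

lemma Lb_meas (b : ℝ) : AEStronglyMeasurable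
    (fun t : ℝ => (Real.log t : ℂ) * Complex.exp (-(1 * t) - b / t)) (volume.restrict (Ioi 0)) := by
  apply AEStronglyMeasurable.mul
  · exact (Complex.measurable_ofReal.comp Real.measurable_log).aestronglyMeasurable
  · have := In_meas 0 1 b
    simpa using this

lemma exp_norm (b : ℝ) {t : ℝ} (ht : 0 < t) :
    ‖Complex.exp (-(1 * t) - b / t)‖ = rexp (-((1:ℂ).re * t) - (b:ℂ).re / t) := by
  have h := In_norm 0 1 b ht
  simpa using h

lemma Lb_norm {b : ℝ} (hb : 0 ≤ b) {t : ℝ} (ht : 0 < t) :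
    ‖(Real.log t : ℂ) * Complex.exp (-(1 * t) - b / t)‖ ≤ (t + 2 * t ^ (-(1/2) : ℝ)) * rexp (-t) := by
  have h := exp_norm b ht
  rw [norm_mul, h, Complex.norm_real, Real.norm_eq_abs]
  have h2 := log_bd ht
  have h3 : rexp (-((1:ℂ).re * t) - (b:ℂ).re / t) ≤ rexp (-t) := by
    apply Real.exp_le_exp.2
    have : 0 ≤ b / t := by positivity
    simp; linarith
  have h4 := Real.exp_pos (-((1:ℂ).re * t) - (b:ℂ).re / t)
  have := abs_nonneg (Real.log t)
  exact mul_le_mul h2 h3 h4.le (by positivity)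

lemma Lb_int {b : ℝ} (hb : 0 ≤ b) : IntegrableOn
    (fun t : ℝ => (Real.log t : ℂ) * Complex.exp (-(1 * t) - b / t)) (Ioi 0) := by
  refine Integrable.mono' logexp_dom (Lb_meas b) ?_
  filter_upwards [ae_restrict_mem measurableSet_Ioi] with t ht
  exact Lb_norm hb ht

lemma Lb_zero : Lb 0 = -(Real.eulerMascheroniConstant : ℂ) := by
  have h1 := Complex.hasDerivAt_GammaIntegral (s := 1) (by simp)
  have h2 : HasDerivAt Complex.GammaIntegral (-(Real.eulerMascheroniConstant : ℂ)) 1 := by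
    refine Complex.hasDerivAt_Gamma_one.congr_of_eventuallyEq ?_
    have : {z : ℂ | 0 < z.re} ∈ 𝓝 (1:ℂ) :=
      (isOpen_lt continuous_const Complex.continuous_re).mem_nhds (by simp)
    filter_upwards [this] with z hz
    exact (Complex.Gamma_eq_integral hz).symm
  rw [← h1.unique h2]
  unfold Lb
  apply setIntegral_congr_fun measurableSet_Ioi
  intro t ht
  simp

lemma Lb_tendsto : Tendsto Lb (𝓝[>] 0) (𝓝 (-(Real.eulerMascheroniConstant : ℂ))) := by
  rw [← Lb_zero]
  unfold Lb
  apply tendsto_integral_filter_of_dominated_convergence (fun t : ℝ => (t + 2 * t ^ (-(1/2) : ℝ)) * rexp (-t))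
  · exact Eventually.of_forall fun b => Lb_meas b
  · filter_upwards [self_mem_nhdsWithin] with b hb
    filter_upwards [ae_restrict_mem measurableSet_Ioi] with t ht
    exact Lb_norm (le_of_lt hb) ht
  · exact logexp_dom
  · filter_upwards with t
    apply Tendsto.mono_left _ nhdsWithin_le_nhds
    apply Continuous.tendsto'
    · fun_prop
    · rfl

lemma In0_bound : ∃ C : ℝ, ∀ b : ℝ, 0 < b → ‖1 - In 0 1 b‖ ≤ C * √b := by
  have h2 := (integrableOn_rpow_mul_exp_neg_mul_rpow (s := -(1/2)) (p := 1) (b := 1) (by norm_num) one_pos one_pos)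
  refine ⟨∫ t in Ioi (0:ℝ), t ^ (-(1/2) : ℝ) * rexp (-1 * t ^ (1:ℝ)), fun b hb => ?_⟩
  have e1 : (1:ℂ) = ∫ t in Ioi (0:ℝ), Complex.exp (-(1 * t)) := by
    have := integral_exp_neg_Ioi_zero
    have h3 : ((∫ t in Ioi (0:ℝ), rexp (-t) : ℝ) : ℂ) = 1 := by rw [this]; simp
    rw [← integral_complex_ofReal] at h3
    refine h3.symm.trans ?_
    apply setIntegral_congr_fun measurableSet_Ioi
    intro t _
    simp
  have i1 : IntegrableOn (fun t : ℝ => Complex.exp (-(1 * t))) (Ioi 0) := by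
    by_contra hcon
    have := integral_undef hcon
    rw [this] at e1; exact one_ne_zero e1
  have i2 := In_int 0 (a := 1) (b := b) (by simp) (by simpa using hb)
  have e3 : 1 - In 0 1 b = ∫ t in Ioi (0:ℝ), (Complex.exp (-(1 * t)) - (t : ℂ) ^ (0:ℤ) * Complex.exp (-(1 * t) - b / t)) := by
    rw [integral_sub i1 i2, ← e1]; rfl
  rw [e3]
  rw [mul_comm, ← integral_const_mul]
  refine norm_integral_le_of_norm_le (h2.const_mul _) ?_
  filter_upwards [ae_restrict_mem measurableSet_Ioi] with t ht
  have ht : 0 < t := ht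
  have e2 : Complex.exp (-(1 * t)) - (t : ℂ) ^ (0:ℤ) * Complex.exp (-(1 * t) - b / t)
      = ((rexp (-t) * (1 - rexp (-(b / t))) : ℝ) : ℂ) := by
    push_cast
    rw [mul_sub, ← Complex.exp_add]; simp [sub_eq_add_neg]
  rw [e2, Complex.norm_real]
  have hx : 0 ≤ b / t := by positivity
  have h5 : rexp (-(b/t)) ≤ 1 := by rw [Real.exp_le_one_iff]; linarith
  have h6 : 1 - rexp (-(b/t)) ≤ √(b/t) := by
    by_cases h : b / t ≤ 1
    · have h7 := Real.one_sub_le_exp_neg (b / t)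
      have : b / t ≤ √(b/t) := by
        apply Real.le_sqrt_of_sq_le; nlinarith
      linarith
    · have : 1 ≤ √(b/t) := by rw [Real.one_le_sqrt]; linarith
      have := Real.exp_pos (-(b/t))
      linarith
  rw [Real.norm_of_nonneg (mul_nonneg (Real.exp_pos _).le (by linarith))]
  rw [Real.rpow_one, Real.rpow_neg ht.le, ← Real.sqrt_eq_rpow, neg_one_mul]
  rw [Real.sqrt_div hb.le] at h6
  calc _ ≤ rexp (-t) * (√b / √t) := by gcongr
    _ = _ := by rw [div_eq_mul_inv]; ring

lemma In_ibp {b : ℝ} (hb : 0 < b) : In (-1) 1 b = 2 * Lb b - Real.log b * In 0 1 b := by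
  have hb' : (b : ℂ) ≠ 0 := by exact_mod_cast hb.ne'
  have hsub : ∫ t in Ioi (0:ℝ), ((b / t ^ 2 : ℝ) : ℂ) * ((Real.log t : ℂ) * Complex.exp (-(1 * t) - b / t))
      = Real.log b * In 0 1 b - Lb b := by
    have := int_subst (fun t : ℝ => (Real.log (b / t) : ℂ) * Complex.exp (-(1 * t) - b / t)) hb
    have e1 : ∀ t ∈ Ioi (0:ℝ), ((b / t ^ 2 : ℝ) : ℂ) * ((Real.log t : ℂ) * Complex.exp (-(1 * t) - b / t)) =
        ((b / t ^ 2 : ℝ) : ℂ) * ((Real.log (b / (b / t)) : ℂ) * Complex.exp (-(1 * ((b / t : ℝ) : ℂ)) - b / ((b / t : ℝ) : ℂ))) := by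
      intro t ht
      have ht' : t ≠ 0 := ne_of_gt ht
      have ht : (t : ℂ) ≠ 0 := by exact_mod_cast ne_of_gt ht
      have e : -(1 * ((b / t : ℝ) : ℂ)) - b / ((b / t : ℝ) : ℂ) = -(1 * t) - b / t := by
        push_cast; field_simp; ring
      have e' : b / (b / t) = t := by field_simp
      rw [e, e']
    rw [setIntegral_congr_fun measurableSet_Ioi e1]
    rw [this]
    unfold In Lb
    rw [← integral_const_mul, ← integral_sub ((In_int 0 (by simp) (by simpa using hb)).const_mul _) (Lb_int hb.le)]
    apply setIntegral_congr_fun measurableSet_Ioi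
    intro t ht
    simp only [zpow_zero]
    rw [Real.log_div hb.ne' (ne_of_gt ht)]
    push_cast; ring
  have hsubi : IntegrableOn (fun t : ℝ => ((b / t ^ 2 : ℝ) : ℂ) * ((Real.log t : ℂ) * Complex.exp (-(1 * t) - b / t))) (Ioi 0) := by
    have h1 := dom_int (-1) (α := 1) (β := b/2) one_pos (by linarith)
    have d1 := (dom_int (-1) (α := 1) (β := b) one_pos hb).const_mul b
    have d2 := (dom_int (-3) (α := 1) (β := b) one_pos hb).const_mul (2 * b)
    have d3 := (dom_int (-2) (α := 1) (β := b) one_pos hb).const_mul (2 * b)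
    refine Integrable.mono' ((d1.add d2).add d3) ?_ ?_
    · refine AEStronglyMeasurable.mul ?_ (Lb_meas b)
      have : Measurable fun t : ℝ => ((b / t ^ 2 : ℝ) : ℂ) :=
        Complex.measurable_ofReal.comp (by fun_prop)
      exact this.aestronglyMeasurable
    · filter_upwards [ae_restrict_mem measurableSet_Ioi] with t ht
      have ht : 0 < t := ht
      have h := exp_norm b ht
      rw [norm_mul, norm_mul, h, Complex.norm_real, Complex.norm_real, Real.norm_eq_abs, Real.norm_eq_abs,
        abs_of_nonneg (by positivity)]
      have h2 := log_bd ht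
      have h3 : t ^ (-(1/2) : ℝ) ≤ 1 + t⁻¹ := by
        rw [Real.rpow_neg ht.le, ← Real.sqrt_eq_rpow, ← Real.sqrt_inv]
        have := Real.sq_sqrt (inv_nonneg.2 ht.le)
        nlinarith [sq_nonneg (√t⁻¹ - 1), Real.sqrt_nonneg t⁻¹]
      simp only [Pi.add_apply, Complex.one_re, Complex.ofReal_re]
      have e3 : t ^ (-3 : ℤ) = (t^3)⁻¹ := by
        rw [show (-3 : ℤ) = -((3 : ℕ) : ℤ) by norm_num, zpow_neg, zpow_natCast]
      have e2 : t ^ (-2 : ℤ) = (t^2)⁻¹ := by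
        rw [show (-2 : ℤ) = -((2 : ℕ) : ℤ) by norm_num, zpow_neg, zpow_natCast]
      have e1 : t ^ (-1 : ℤ) = t⁻¹ := by simp
      rw [e1, e2, e3]
      calc _ ≤ b / t ^ 2 * ((t + 2 * (1 + t⁻¹)) * rexp (-(1 * t) - b / t)) := by
            gcongr; linarith
        _ = _ := by field_simp; ring
  have hI1 := In_int (-1) (a := 1) (b := b) (by simp) (by simpa using hb)
  have hLi := Lb_int hb.le
  have key := integral_Ioi_of_hasDerivAt_of_tendsto (a := 0) (m := 0)
    (f := fun t : ℝ => (Real.log t : ℂ) * Complex.exp (-(1 * t) - b / t))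
    (f' := fun t : ℝ => ((t : ℂ) ^ (-1 : ℤ) * Complex.exp (-(1 * t) - b / t)
      - (Real.log t : ℂ) * Complex.exp (-(1 * t) - b / t))
      + ((b / t ^ 2 : ℝ) : ℂ) * ((Real.log t : ℂ) * Complex.exp (-(1 * t) - b / t)))
    ?_ ?_ ((hI1.sub hLi).add hsubi) ?_
  · have k2 := integral_add (hI1.sub hLi) hsubi
    simp only [Pi.sub_apply] at k2
    rw [k2, integral_sub hI1 hLi, hsub] at key
    simp only [Real.log_zero, Complex.ofReal_zero, zero_mul, sub_zero] at key
    change In (-1) 1 b - Lb b + _ = 0 at key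
    linear_combination key
  · -- continuity at 0
    rw [← continuousWithinAt_Ioi_iff_Ici]
    rw [ContinuousWithinAt]
    simp only [Real.log_zero, Complex.ofReal_zero, zero_mul]
    have hz : Tendsto (fun t : ℝ => (t + 2 * t ^ (1/2 : ℝ)) / b) (𝓝[>] 0) (𝓝 0) := by
      apply Tendsto.mono_left _ nhdsWithin_le_nhds
      have : Continuous (fun t : ℝ => (t + 2 * t ^ (1/2 : ℝ)) / b) := by
        apply Continuous.div_const
        exact continuous_id.add (continuous_const.mul (Real.continuous_rpow_const (by norm_num)))
      exact this.tendsto' _ _ (by rw [Real.zero_rpow (by norm_num)]; simp)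
    refine squeeze_zero_norm' ?_ hz
    filter_upwards [Ioo_mem_nhdsGT (show (0:ℝ) < 1 by norm_num)] with t ht
    have ht1 : t < 1 := ht.2
    have ht : 0 < t := ht.1
    have h := exp_norm b ht
    rw [norm_mul, h, Complex.norm_real, Real.norm_eq_abs]
    have h2 := log_bd ht
    have h3 : rexp (-((1:ℂ).re * t) - (b:ℂ).re / t) ≤ t / b := by
      have : t / b = (b / t)⁻¹ := by field_simp
      rw [this]
      have hx : 0 < b / t := by positivity
      have := Real.add_one_le_exp (b / t)
      calc _ ≤ rexp (-(b/t)) := by apply Real.exp_le_exp.2; simp; linarith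
        _ = (rexp (b/t))⁻¹ := Real.exp_neg _
        _ ≤ _ := by gcongr; linarith
    calc |Real.log t| * rexp (-((1:ℂ).re * t) - (b:ℂ).re / t)
        ≤ (t + 2 * t ^ (-(1/2) : ℝ)) * (t / b) := by gcongr
      _ = (t * t + 2 * (t ^ (-(1/2) : ℝ) * t)) / b := by ring
      _ ≤ _ := by
        have e : t ^ (-(1/2) : ℝ) * t = t ^ (1/2 : ℝ) := by
          rw [← Real.rpow_add_one ht.ne']; norm_num
        rw [e]
        gcongr
        nlinarith
  · intro t ht
    have ht' : t ≠ 0 := ne_of_gt ht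
    have htc : (t : ℂ) ≠ 0 := by exact_mod_cast ht'
    have h1 := (Real.hasDerivAt_log ht').ofReal_comp
    have h2 : HasDerivAt (fun t : ℝ => (t : ℂ)) 1 t := by
      simpa using (hasDerivAt_id t).ofReal_comp
    have h3 := ((h2.const_mul (1:ℂ)).neg.sub ((hasDerivAt_const t (b:ℂ)).div h2 htc)).cexp
    refine (h1.mul h3).congr_deriv ?_
    simp only [zpow_neg, zpow_one, Pi.sub_apply, Pi.neg_apply, Pi.div_apply]
    push_cast
    field_simp
    ring
  · have hz : Tendsto (fun t : ℝ => (t ^ (1:ℝ) * rexp (-1 * t) + 2 * (t ^ (-(1/2):ℝ) * rexp (-1 * t)))) atTop (𝓝 0) := by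
      have a1 := tendsto_rpow_mul_exp_neg_mul_atTop_nhds_zero 1 1 one_pos
      have a2 := tendsto_rpow_mul_exp_neg_mul_atTop_nhds_zero (-(1/2)) 1 one_pos
      simpa using a1.add (a2.const_mul 2)
    refine squeeze_zero_norm' ?_ hz
    filter_upwards [eventually_gt_atTop 0] with t ht
    refine (Lb_norm hb.le ht).trans (le_of_eq ?_)
    rw [Real.rpow_one, neg_one_mul]; ring

end Vor

namespace Vor

open Filter Topology Set

lemma mvt_zero (f f' : ℝ → ℂ) (M : ℝ) (hd : ∀ x ∈ Ioc (0:ℝ) (1/2), HasDerivAt f (f' x) x)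
    (hM : ∀ x ∈ Ioc (0:ℝ) (1/2), ‖f' x‖ ≤ M) (h0 : Tendsto f (𝓝[>] 0) (𝓝 0)) :
    ∀ b ∈ Ioc (0:ℝ) (1/2), ‖f b‖ ≤ M * b := by
  intro b hb
  have h1 : ∀ᶠ ε in 𝓝[>] (0:ℝ), ‖f b - f ε‖ ≤ M * (b - ε) := by
    filter_upwards [Ioo_mem_nhdsGT hb.1] with ε hε
    have := (convex_Icc ε b).norm_image_sub_le_of_norm_hasDerivWithin_le (f := f) (f' := f') (C := M)
      (fun x hx => (hd x ⟨lt_of_lt_of_le hε.1 hx.1, hx.2.trans hb.2⟩).hasDerivWithinAt)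
      (fun x hx => hM x ⟨lt_of_lt_of_le hε.1 hx.1, hx.2.trans hb.2⟩)
      (left_mem_Icc.2 hε.2.le) (right_mem_Icc.2 hε.2.le)
    rwa [Real.norm_of_nonneg (by linarith [hε.2])] at this
  have h2 : Tendsto (fun ε => ‖f b - f ε‖) (𝓝[>] 0) (𝓝 ‖f b - 0‖) := (tendsto_const_nhds.sub h0).norm
  have h3 : Tendsto (fun ε : ℝ => M * (b - ε)) (𝓝[>] 0) (𝓝 (M * (b - 0))) := by
    apply Tendsto.mono_left _ nhdsWithin_le_nhds
    exact Continuous.tendsto (by fun_prop) 0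
  have := le_of_tendsto_of_tendsto h2 h3 h1
  simpa using this

lemma ode_unique (u v : ℝ → ℂ) (hu : ∀ x ∈ Ioc (0:ℝ) (1/2), HasDerivAt u (-v x / x) x)
    (hv : ∀ x ∈ Ioc (0:ℝ) (1/2), HasDerivAt v (-u x) x)
    (hu0 : Tendsto u (𝓝[>] 0) (𝓝 0)) (hv0 : Tendsto v (𝓝[>] 0) (𝓝 0)) :
    ∀ b ∈ Ioc (0:ℝ) (1/2), u b = 0 := by
  have step : ∀ M : ℝ, (∀ b ∈ Ioc (0:ℝ) (1/2), ‖u b‖ ≤ M) → ∀ b ∈ Ioc (0:ℝ) (1/2), ‖u b‖ ≤ M / 2 := by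
    intro M hM b hb
    have hM0 : 0 ≤ M := (norm_nonneg _).trans (hM b hb)
    have h1 := mvt_zero v (fun x => -u x) M hv (fun x hx => by rw [norm_neg]; exact hM x hx) hv0
    have h2 := mvt_zero u (fun x => -v x / x) M hu (fun x hx => by
      rw [norm_div, norm_neg, Complex.norm_real, Real.norm_of_nonneg hx.1.le, div_le_iff₀ hx.1]
      exact h1 x hx) hu0 b hb
    nlinarith [hb.1, hb.2]
  have hbd : ∃ M : ℝ, ∀ b ∈ Ioc (0:ℝ) (1/2), ‖u b‖ ≤ M := by
    have h1 : ∀ᶠ b in 𝓝[>] (0:ℝ), ‖u b‖ < 1 := by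
      have := hu0.norm
      rw [norm_zero] at this
      exact this.eventually (gt_mem_nhds one_pos)
    obtain ⟨δ, hδ, h2⟩ := mem_nhdsGT_iff_exists_Ioc_subset.1 h1
    have hδ : 0 < δ := hδ
    obtain ⟨C, hC⟩ := (isCompact_Icc (a := δ) (b := (1/2:ℝ))).exists_bound_of_continuousOn (f := u)
      (fun x hx => (hu x ⟨lt_of_lt_of_le hδ hx.1, hx.2⟩).continuousAt.continuousWithinAt)
    refine ⟨max 1 C, fun b hb => ?_⟩
    by_cases h : b ≤ δ
    · exact (le_of_lt (h2 ⟨hb.1, h⟩)).trans (le_max_left _ _)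
    · exact (hC b ⟨(not_le.1 h).le, hb.2⟩).trans (le_max_right _ _)
  obtain ⟨M, hM⟩ := hbd
  have hn : ∀ n : ℕ, ∀ b ∈ Ioc (0:ℝ) (1/2), ‖u b‖ ≤ M * (1/2) ^ n := by
    intro n
    induction n with
    | zero => simpa using hM
    | succ n ih =>
      intro b hb
      have := step _ ih b hb
      rw [pow_succ]; linarith
  intro b hb
  have h3 : Tendsto (fun n : ℕ => M * (1/2 : ℝ) ^ n) atTop (𝓝 (M * 0)) :=
    (tendsto_pow_atTop_nhds_zero_of_lt_one (by norm_num) (by norm_num)).const_mul M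
  have := ge_of_tendsto' h3 (fun n => hn n b hb)
  rw [mul_zero] at this
  exact norm_le_zero_iff.1 this

lemma log_mul_tendsto (f : ℂ → ℂ) (f' : ℂ) (hf : HasDerivAt f f' 0) (h0 : f 0 = 0) :
    Tendsto (fun b : ℝ => (Real.log b : ℂ) * f b) (𝓝[>] 0) (𝓝 0) := by
  have h1 : (fun b : ℝ => f (b : ℂ)) =O[𝓝[>] 0] (fun b : ℝ => b) := by
    have := hf.isBigO_sub
    simp only [h0, sub_zero] at this
    have h2 : Tendsto (fun b : ℝ => (b : ℂ)) (𝓝[>] 0) (𝓝 0) :=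
      (Complex.continuous_ofReal.tendsto' 0 0 (by simp)).mono_left nhdsWithin_le_nhds
    refine (this.comp_tendsto h2).trans ?_
    exact Asymptotics.IsBigO.of_bound 1 (Eventually.of_forall fun b => by simp)
  have h3 : (fun b : ℝ => (Real.log b : ℂ)) =O[𝓝[>] 0] (fun b : ℝ => Real.log b) :=
    Asymptotics.IsBigO.of_bound 1 (Eventually.of_forall fun b => by simp)
  refine (h3.mul h1).trans_tendsto ?_
  have := tendsto_log_mul_rpow_nhdsGT_zero one_pos
  simpa using this

def S (L w : ℂ) : ℂ := -(L + 2 * Real.eulerMascheroniConstant) * P w + 2 * Q w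

lemma In0_tendsto_log : Tendsto (fun b : ℝ => (Real.log b : ℂ) * (1 - In 0 1 b)) (𝓝[>] 0) (𝓝 0) := by
  obtain ⟨C, hC⟩ := In0_bound
  have h1 : Tendsto (fun b : ℝ => |C| * |Real.log b * b ^ (1/2 : ℝ)|) (𝓝[>] 0) (𝓝 0) := by
    simpa using (tendsto_log_mul_rpow_nhdsGT_zero (show (0:ℝ) < 1/2 by norm_num)).abs.const_mul |C|
  refine squeeze_zero_norm' ?_ h1
  filter_upwards [self_mem_nhdsWithin] with b hb
  have hb : 0 < b := hb
  rw [norm_mul, Complex.norm_real, abs_mul, Real.norm_eq_abs, ← Real.sqrt_eq_rpow, abs_of_nonneg (Real.sqrt_nonneg b)]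
  have := (hC b hb).trans (mul_le_mul_of_nonneg_right (le_abs_self C) (Real.sqrt_nonneg b))
  have h3 := abs_nonneg (Real.log b)
  nlinarith

lemma In0_tendsto : Tendsto (fun b : ℝ => 1 - In 0 1 b) (𝓝[>] 0) (𝓝 0) := by
  obtain ⟨C, hC⟩ := In0_bound
  have h1 : Tendsto (fun b : ℝ => C * √b) (𝓝[>] 0) (𝓝 0) := by
    apply Tendsto.mono_left _ nhdsWithin_le_nhds
    exact Continuous.tendsto' (by fun_prop) _ _ (by simp)
  refine squeeze_zero_norm' ?_ h1
  filter_upwards [self_mem_nhdsWithin] with b hb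
  exact hC b hb

lemma ofReal_tendsto : Tendsto (fun b : ℝ => (b : ℂ)) (𝓝[>] 0) (𝓝 0) :=
  (Complex.continuous_ofReal.tendsto' 0 0 (by simp)).mono_left nhdsWithin_le_nhds

lemma F_small : ∀ b ∈ Ioc (0:ℝ) (1/2), In (-1) 1 b = S (Real.log b) b := by
  set g : ℂ := (Real.eulerMascheroniConstant : ℂ) with hg
  have main := ode_unique (fun b => In (-1) 1 b - S (Real.log b) b)
    (fun b => In 0 1 b - (P b + (Real.log b + 2 * g) * P2 b - 2 * Q2 b)) ?_ ?_ ?_ ?_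
  · intro b hb
    exact sub_eq_zero.1 (main b hb)
  · intro b hb
    have hb0 : 0 < b := hb.1
    have hbc : (b : ℂ) ≠ 0 := by exact_mod_cast hb0.ne'
    have h1 := (In_deriv_b (-1) (a := 1) (b := b) (by simp) (by simpa using hb0)).comp_ofReal
    have h2 := (P_deriv b).comp_ofReal
    have h3 := (Q_deriv b).comp_ofReal
    have h4 := (Real.hasDerivAt_log hb0.ne').ofReal_comp
    have h5 := h1.sub (((h4.add_const (2 * g)).neg.mul h2).add (h3.const_mul 2))
    refine h5.congr_deriv ?_
    have e := In_two hb0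
    rw [show (-1 : ℤ) - 1 = -2 by norm_num]
    rw [eq_div_iff hbc]
    rw [P2_eq, Q2_eq, ← e]
    push_cast
    field_simp
    simp only [Pi.neg_apply]
    ring
  · intro b hb
    have hb0 : 0 < b := hb.1
    have hbc : (b : ℂ) ≠ 0 := by exact_mod_cast hb0.ne'
    have h1 := (In_deriv_b 0 (a := 1) (b := b) (by simp) (by simpa using hb0)).comp_ofReal
    have h2 := (P_deriv b).comp_ofReal
    have h3 := (P2_deriv b).comp_ofReal
    have h3' := (Q2_deriv b).comp_ofReal
    have h4 := (Real.hasDerivAt_log hb0.ne').ofReal_comp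
    have h5 := h1.sub ((h2.add ((h4.add_const (2 * g)).mul h3)).sub (h3'.const_mul 2))
    refine h5.congr_deriv ?_
    rw [show (0 : ℤ) - 1 = -1 by norm_num]
    unfold S
    rw [P2_eq, ← hg]
    push_cast
    field_simp
    ring
  · have t1 := Lb_tendsto.const_mul 2
    have t2 := In0_tendsto_log
    have t3 := log_mul_tendsto (fun w => P w - 1) _ ((P_deriv 0).sub_const 1) (by simp [P_zero])
    have t4 : Tendsto (fun b : ℝ => 2 * g * P b) (𝓝[>] 0) (𝓝 (2 * g * P 0)) :=
      ((P_cont.tendsto 0).comp ofReal_tendsto).const_mul _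
    have t5 : Tendsto (fun b : ℝ => 2 * Q b) (𝓝[>] 0) (𝓝 (2 * Q 0)) :=
      ((Q_cont.tendsto 0).comp ofReal_tendsto).const_mul _
    have t6 := (((t1.add t2).add t3).add t4).sub t5
    rw [P_zero, Q_zero] at t6
    have e : 2 * -g + 0 + 0 + 2 * g * 1 - 2 * 0 = 0 := by ring
    rw [e] at t6
    refine t6.congr' ?_
    filter_upwards [self_mem_nhdsWithin] with b hb
    rw [In_ibp hb]
    unfold S
    ring
  · have t1 := In0_tendsto
    have t3 := log_mul_tendsto P2 _ (P2_deriv 0) P2_zero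
    have t4 : Tendsto (fun b : ℝ => P b) (𝓝[>] 0) (𝓝 (P 0)) :=
      ((P_cont.tendsto 0).comp ofReal_tendsto)
    have t5 : Tendsto (fun b : ℝ => 2 * Q2 b) (𝓝[>] 0) (𝓝 (2 * Q2 0)) :=
      ((Q2_cont.tendsto 0).comp ofReal_tendsto).const_mul _
    have t7 : Tendsto (fun b : ℝ => 2 * g * P2 b) (𝓝[>] 0) (𝓝 (2 * g * P2 0)) :=
      ((P2_cont.tendsto 0).comp ofReal_tendsto).const_mul _
    have t6 := (((((t1.const_sub 1)).sub t4).sub t3).sub t7).add t5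
    rw [P_zero, Q2_zero, P2_zero] at t6
    have e : (1:ℂ) - 0 - 1 - 0 - 2 * g * 0 + 2 * 0 = 0 := by ring
    rw [e] at t6
    refine t6.congr ?_
    intro b
    ring

lemma half_convex : Convex ℝ {z : ℂ | 0 < z.re} := convex_halfSpace_re_gt 0
lemma half_open : IsOpen {z : ℂ | 0 < z.re} := isOpen_lt continuous_const Complex.continuous_re

lemma freq_of_real {p : ℂ → Prop} {x₀ y : ℝ} (hxy : x₀ < y) (h : ∀ x ∈ Ioo x₀ y, p (x : ℂ)) :
    ∃ᶠ z in 𝓝[≠] (x₀ : ℂ), p z := by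
  have h1 : Tendsto (fun x : ℝ => (x : ℂ)) (𝓝[>] x₀) (𝓝[≠] (x₀ : ℂ)) := by
    apply tendsto_nhdsWithin_of_tendsto_nhds_of_eventually_within
    · exact (Complex.continuous_ofReal.tendsto x₀).mono_left nhdsWithin_le_nhds
    · filter_upwards [self_mem_nhdsWithin] with x hx
      have : x ≠ x₀ := ne_of_gt hx
      simpa using this
  apply h1.frequently
  apply Eventually.frequently
  filter_upwards [Ioo_mem_nhdsGT hxy] with x hx
  exact h x hx

lemma slit_of_re {z : ℂ} (hz : 0 < z.re) : z ∈ Complex.slitPlane := Or.inl hz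

lemma S_diff {f h : ℂ → ℂ} {z : ℂ} (hf : DifferentiableAt ℂ f z) (hh : DifferentiableAt ℂ h z) :
    DifferentiableAt ℂ (fun z => S (f z) (h z)) z := by
  unfold S
  have hP : DifferentiableAt ℂ (fun z => P (h z)) z :=
    DifferentiableAt.comp z (P_deriv (h z)).differentiableAt hh
  have hQ : DifferentiableAt ℂ (fun z => Q (h z)) z :=
    DifferentiableAt.comp z (Q_deriv (h z)).differentiableAt hh
  exact ((hf.add_const _).neg.mul hP).add (hQ.const_mul 2)

lemma F_one {b : ℂ} (hb : 0 < b.re) : In (-1) 1 b = S (Complex.log b) b := by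
  have := AnalyticOnNhd.eqOn_of_preconnected_of_frequently_eq (𝕜 := ℂ) (f := fun b => In (-1) 1 b)
    (g := fun b => S (Complex.log b) b) (z₀ := ((1/4 : ℝ) : ℂ)) (U := {z : ℂ | 0 < z.re}) ?_ ?_
    half_convex.isPreconnected (by simp) ?_
  · exact this hb
  · apply DifferentiableOn.analyticOnNhd _ half_open
    intro z hz
    exact (In_deriv_b (-1) (by simp) hz).differentiableAt.differentiableWithinAt
  · apply DifferentiableOn.analyticOnNhd _ half_open
    intro z hz
    exact (S_diff (Complex.differentiableAt_log (slit_of_re hz)) differentiableAt_id).differentiableWithinAt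
  · apply freq_of_real (show (1/4:ℝ) < 1/2 by norm_num)
    intro x hx
    rw [F_small x ⟨by linarith [hx.1], hx.2.le⟩, Complex.ofReal_log (by linarith [hx.1])]

/-- The main Bessel-type integral. -/
theorem F_eq {a b : ℂ} (ha : 0 < a.re) (hb : 0 < b.re) :
    In (-1) a b = S (Complex.log a + Complex.log b) (a * b) := by
  have := AnalyticOnNhd.eqOn_of_preconnected_of_frequently_eq (𝕜 := ℂ) (f := fun a => In (-1) a b)
    (g := fun a => S (Complex.log a + Complex.log b) (a * b)) (z₀ := ((1 : ℝ) : ℂ)) (U := {z : ℂ | 0 < z.re}) ?_ ?_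
    half_convex.isPreconnected (by simp) ?_
  · exact this ha
  · apply DifferentiableOn.analyticOnNhd _ half_open
    intro z hz
    exact (In_deriv_a (-1) hz hb).differentiableAt.differentiableWithinAt
  · apply DifferentiableOn.analyticOnNhd _ half_open
    intro z hz
    exact (S_diff ((Complex.differentiableAt_log (slit_of_re hz)).add_const _)
      (differentiableAt_id.mul_const b)).differentiableWithinAt
  · apply freq_of_real (show (1:ℝ) < 2 by norm_num)
    intro x hx
    have hx0 : 0 < x := by linarith [hx.1]
    have hb0 : b ≠ 0 := by rintro rfl; simp at hb
    have h1 : 0 < ((x : ℂ) * b).re := by rw [Complex.re_ofReal_mul]; positivity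
    rw [In_scale hx0, F_one h1, Complex.log_ofReal_mul hx0 hb0, Complex.ofReal_log hx0.le]

end Vor

namespace Vor
open Filter Topology Set
open scoped SchwartzMap

def bf (H : 𝓢(ℝ, ℂ)) (c : ℂ) (u : ℝ) : ℂ := H u * Complex.exp (-c / u)

def B (H : 𝓢(ℝ, ℂ)) (s c : ℂ) : ℂ := mellin (bf H c) s

lemma exp_le_one {c : ℂ} (hc : 0 ≤ c.re) {u : ℝ} (hu : 0 < u) : ‖Complex.exp (-c / u)‖ ≤ 1 := by
  rw [Complex.norm_exp, Real.exp_le_one_iff]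
  have : (-c / (u:ℂ)).re = -(c.re / u) := by
    rw [Complex.div_ofReal_re, Complex.neg_re, neg_div]
  rw [this]
  have := div_nonneg hc hu.le
  linarith

lemma exp_le_lin {c : ℂ} (hc : 0 < c.re) {u : ℝ} (hu : 0 < u) :
    ‖Complex.exp (-c / u)‖ ≤ (1 / c.re) * u := by
  rw [Complex.norm_exp]
  have : (-c / (u:ℂ)).re = -(c.re / u) := by
    rw [Complex.div_ofReal_re, Complex.neg_re, neg_div]
  rw [this, Real.exp_neg]
  have h1 : 0 < c.re / u := div_pos hc hu
  have h2 := Real.add_one_le_exp (c.re / u)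
  calc (rexp (c.re / u))⁻¹ ≤ (c.re / u)⁻¹ := by
        apply inv_anti₀ h1; linarith
    _ = _ := by field_simp

lemma bf_cont (H : 𝓢(ℝ, ℂ)) (c : ℂ) : ContinuousOn (bf H c) (Ioi 0) := by
  unfold bf
  apply ContinuousOn.mul H.continuous.continuousOn
  apply Complex.continuous_exp.comp_continuousOn
  apply ContinuousOn.div continuousOn_const (by fun_prop)
  intro x hx
  exact_mod_cast (ne_of_gt hx)

lemma bf_loc (H : 𝓢(ℝ, ℂ)) (c : ℂ) : LocallyIntegrableOn (bf H c) (Ioi 0) :=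
  (bf_cont H c).locallyIntegrableOn measurableSet_Ioi

lemma bf_norm (H : 𝓢(ℝ, ℂ)) {c : ℂ} (hc : 0 ≤ c.re) {u : ℝ} (hu : 0 < u) : ‖bf H c u‖ ≤ ‖H u‖ := by
  unfold bf
  rw [norm_mul]
  exact mul_le_of_le_one_right (norm_nonneg _) (exp_le_one hc hu)

lemma bf_top (H : 𝓢(ℝ, ℂ)) {c : ℂ} (hc : 0 ≤ c.re) (a : ℝ) :
    bf H c =O[atTop] fun x : ℝ => x ^ (-a) := by
  have h1 : bf H c =O[atTop] fun u : ℝ => H u := by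
    apply Asymptotics.IsBigO.of_bound 1
    filter_upwards [eventually_gt_atTop 0] with u hu
    simpa using bf_norm H hc hu
  refine h1.trans ?_
  have h2 := (H.isBigO_cocompact_rpow (-a)).mono (l := atTop) (by
    rw [cocompact_eq_atBot_atTop]; exact le_sup_right)
  refine h2.congr' EventuallyEq.rfl ?_
  filter_upwards [eventually_gt_atTop 0] with u hu
  rw [Real.norm_of_nonneg hu.le]

lemma H_bdd (H : 𝓢(ℝ, ℂ)) : ∃ C, 0 < C ∧ ∀ x, ‖H x‖ ≤ C := by
  obtain ⟨C, hC, h⟩ := H.decay 0 0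
  exact ⟨C, hC, fun x => by simpa using h x⟩

lemma bf_zero (H : 𝓢(ℝ, ℂ)) {c : ℂ} (hc : 0 ≤ c.re) :
    bf H c =O[𝓝[>] 0] fun x : ℝ => x ^ (-(0:ℝ)) := by
  obtain ⟨C, hC, h⟩ := H_bdd H
  apply Asymptotics.IsBigO.of_bound C
  filter_upwards [self_mem_nhdsWithin] with u hu
  simpa using (bf_norm H hc hu).trans (h u)

lemma bf_zero' (H : 𝓢(ℝ, ℂ)) {c : ℂ} (hc : 0 < c.re) :
    bf H c =O[𝓝[>] 0] fun x : ℝ => x ^ (-(-1:ℝ)) := by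
  obtain ⟨C, hC, h⟩ := H_bdd H
  apply Asymptotics.IsBigO.of_bound (C * (1 / c.re))
  filter_upwards [self_mem_nhdsWithin] with u hu
  have hu' : (0:ℝ) < u := hu
  unfold bf
  rw [norm_mul, neg_neg, Real.rpow_one, Real.norm_of_nonneg hu'.le, mul_assoc]
  exact mul_le_mul (h u) (exp_le_lin hc hu) (norm_nonneg _) hC.le

def ok (s c : ℂ) : Prop := (0 ≤ c.re ∧ 0 < s.re) ∨ (0 < c.re ∧ -1 < s.re)

lemma ok.succ {s c : ℂ} (h : ok s c) : ok (s + 1) c := by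
  rcases h with h | h
  · left; exact ⟨h.1, by simp; linarith [h.2]⟩
  · left; exact ⟨h.1.le, by simp; linarith [h.2]⟩

lemma ok.nn {s c : ℂ} (h : ok s c) : 0 ≤ c.re := by
  rcases h with h | h
  · exact h.1
  · exact h.1.le

lemma ok.s1 {s c : ℂ} (h : ok s c) : -1 < s.re := by
  rcases h with h | h
  · linarith [h.2]
  · exact h.2

lemma B_conv (H : 𝓢(ℝ, ℂ)) {s c : ℂ} (h : ok s c) : MellinConvergent (bf H c) s := by
  rcases h with h | h
  · exact mellinConvergent_of_isBigO_rpow (bf_loc H c) (bf_top H h.1 (s.re + 1)) (by linarith)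
      (bf_zero H h.1) h.2
  · exact mellinConvergent_of_isBigO_rpow (bf_loc H c) (bf_top H h.1.le (s.re + 1)) (by linarith)
      (bf_zero' H h.1) h.2

lemma B_diff (H : 𝓢(ℝ, ℂ)) {s c : ℂ} (hc : 0 ≤ c.re) (hs : 0 < s.re) :
    DifferentiableAt ℂ (fun s => B H s c) s :=
  mellin_differentiableAt_of_isBigO_rpow (bf_loc H c) (bf_top H hc (s.re + 1)) (by linarith)
      (bf_zero H hc) hs

def xD (H : 𝓢(ℝ, ℂ)) : 𝓢(ℝ, ℂ) :=
  SchwartzMap.smulLeftCLM ℂ (fun x : ℝ => x) (SchwartzMap.derivCLM ℝ ℂ H)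

lemma xD_apply (H : 𝓢(ℝ, ℂ)) (x : ℝ) : xD H x = x * deriv H x := by
  unfold xD
  rw [SchwartzMap.smulLeftCLM_apply_apply (by fun_prop), SchwartzMap.derivCLM_apply]
  simp

lemma B_ibp (H : 𝓢(ℝ, ℂ)) {s c : ℂ} (h : ok s c) :
    c * B H s c = -(s + 1) * B H (s + 1) c - B (xD H) (s + 1) c := by
  have i0 : IntegrableOn (fun u : ℝ => (u:ℂ) ^ (s - 1) • bf H c u) (Ioi 0) := B_conv H h
  have i1 : IntegrableOn (fun u : ℝ => (u:ℂ) ^ (s + 1 - 1) • bf H c u) (Ioi 0) := B_conv H h.succ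
  have i2 : IntegrableOn (fun u : ℝ => (u:ℂ) ^ (s + 1 - 1) • bf (xD H) c u) (Ioi 0) := B_conv (xD H) h.succ
  set f : ℝ → ℂ := fun u => (u:ℂ) ^ (s + 1) * bf H c u with hf
  set f' : ℝ → ℂ := fun u => (s + 1) * ((u:ℂ) ^ (s + 1 - 1) • bf H c u) +
      (u:ℂ) ^ (s + 1 - 1) • bf (xD H) c u + c * ((u:ℂ) ^ (s - 1) • bf H c u) with hf'
  have s1 := h.s1
  have sne : s + 1 ≠ 0 := by
    intro h0
    have := congrArg Complex.re h0
    simp at this; linarith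
  have hIntble : IntegrableOn f' (Ioi 0) := ((i1.const_mul _).add i2).add (i0.const_mul _)
  have key : ∫ u in Ioi (0:ℝ), f' u = 0 - f 0 := by
    apply integral_Ioi_of_hasDerivAt_of_tendsto _ _ hIntble
    · have : Tendsto f atTop (𝓝 0) := by
        have o1 : f =O[atTop] fun u : ℝ => u ^ (s.re + 1) * u ^ (-(s.re + 2)) := by
          apply Asymptotics.IsBigO.mul _ (bf_top H h.nn _)
          apply Asymptotics.IsBigO.of_bound 1
          filter_upwards [eventually_gt_atTop 0] with u hu
          rw [Complex.norm_cpow_eq_rpow_re_of_pos hu]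
          simp [abs_of_pos (Real.rpow_pos_of_pos hu _)]
        apply o1.trans_tendsto
        refine (tendsto_rpow_neg_atTop one_pos).congr' ?_
        filter_upwards [eventually_gt_atTop 0] with u hu
        rw [← Real.rpow_add hu]; congr 1; ring
      exact this
    · obtain ⟨C, hC, hb⟩ := H_bdd H
      have f0 : f 0 = 0 := by simp [hf, Complex.zero_cpow sne]
      rw [← continuousWithinAt_Ioi_iff_Ici]
      unfold ContinuousWithinAt
      rw [f0]
      apply squeeze_zero_norm' (a := fun u : ℝ => u ^ (s.re + 1) * C)
      · filter_upwards [self_mem_nhdsWithin] with u hu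
        have hu' : (0:ℝ) < u := hu
        rw [hf, norm_mul, Complex.norm_cpow_eq_rpow_re_of_pos hu']
        simp only [Complex.add_re, Complex.one_re]
        gcongr
        exact (bf_norm H h.nn hu).trans (hb u)
      · have : Tendsto (fun u : ℝ => u ^ (s.re + 1) * C) (𝓝 0) (𝓝 ((0:ℝ) ^ (s.re + 1) * C)) := by
          apply Tendsto.mul_const
          exact (Real.continuousAt_rpow_const 0 (s.re+1) (Or.inr (by linarith))).tendsto
        rw [Real.zero_rpow (by linarith), zero_mul] at this
        exact this.mono_left nhdsWithin_le_nhds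
    · intro u hu
      have hu' : (0:ℝ) < u := hu
      have une : (u:ℂ) ≠ 0 := by exact_mod_cast hu'.ne'
      have d1 : HasDerivAt (fun u : ℝ => (u:ℂ) ^ (s + 1)) ((s + 1) * (u:ℂ) ^ (s + 1 - 1)) u := by
        have := (hasDerivAt_id (u:ℂ)).cpow_const (c := s + 1) (Or.inl (by simpa using hu'))
        have := this.comp_ofReal
        simpa using this
      have d2 : HasDerivAt (fun u : ℝ => Complex.exp (-c / u)) (Complex.exp (-c / u) * (c / u ^ 2)) u := by
        have := ((hasDerivAt_const (u:ℂ) (-c)).div (hasDerivAt_id (u:ℂ)) une).cexp.comp_ofReal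
        refine this.congr_deriv ?_
        simp
      have d3 := d1.mul ((H.hasDerivAt u).mul d2)
      refine d3.congr_deriv ?_
      simp only [hf', bf, xD_apply, smul_eq_mul, Pi.mul_apply]
      have e1 : (u:ℂ) ^ (s + 1) = (u:ℂ) ^ (s - 1) * u ^ 2 := by
        rw [← Complex.cpow_natCast, ← Complex.cpow_add _ _ une]; congr 1; push_cast; ring
      have e2 : (u:ℂ) ^ (s + 1 - 1) = (u:ℂ) ^ (s - 1) * u := by
        nth_rw 3 [← Complex.cpow_one (u:ℂ)]
        rw [← Complex.cpow_add _ _ une]; congr 1; ring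
      rw [e1, e2]
      field_simp
      ring
  have f0 : f 0 = 0 := by simp [hf, Complex.zero_cpow sne]
  rw [f0, sub_zero] at key
  have split : ∫ u in Ioi (0:ℝ), f' u = (s + 1) * B H (s + 1) c + B (xD H) (s + 1) c + c * B H s c := by
    unfold B mellin
    rw [← integral_const_mul, ← integral_const_mul, ← integral_add (i1.const_mul _) i2]
    exact integral_add ((i1.const_mul _).add i2) (i0.const_mul _)
  rw [split] at key
  linear_combination key

/-- twice integrated by parts -/
def R (H : 𝓢(ℝ, ℂ)) (s c : ℂ) : ℂ :=
  (s + 1) * ((s + 2) * B H (s + 2) c + B (xD H) (s + 2) c)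
    + (s + 2) * B (xD H) (s + 2) c + B (xD (xD H)) (s + 2) c

lemma B_R (H : 𝓢(ℝ, ℂ)) {s c : ℂ} (h : ok s c) : c ^ 2 * B H s c = R H s c := by
  have h1 := B_ibp H h
  have h2 := B_ibp H h.succ
  have h3 := B_ibp (xD H) h.succ
  have e : s + 1 + 1 = s + 2 := by ring
  rw [e] at h2 h3
  unfold R
  linear_combination c * h1 - (s + 1) * h2 - h3

lemma B_bdd (H : 𝓢(ℝ, ℂ)) : ∃ C, 0 ≤ C ∧ ∀ s c : ℂ, 0 ≤ c.re → 1 ≤ s.re → s.re ≤ 5 → ‖B H s c‖ ≤ C := by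
  have i0 := (H.integrable_pow_mul volume 0).integrableOn (s := Ioi (0:ℝ))
  have i4 := (H.integrable_pow_mul volume 4).integrableOn (s := Ioi (0:ℝ))
  have i5 := i0.add i4
  refine ⟨∫ u in Ioi (0:ℝ), (‖u‖^0 * ‖H u‖ + ‖u‖^4 * ‖H u‖), integral_nonneg (fun u => by positivity), ?_⟩
  intro s c hc h1 h5
  unfold B mellin
  apply norm_integral_le_of_norm_le i5
  filter_upwards [ae_restrict_mem measurableSet_Ioi] with u hu
  have hu' : (0:ℝ) < u := hu
  rw [norm_smul, Complex.norm_cpow_eq_rpow_re_of_pos hu', Pi.add_apply, Real.norm_of_nonneg hu'.le]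
  have h2 : u ^ (s - 1).re ≤ 1 + u ^ 4 := by
    simp only [Complex.sub_re, Complex.one_re]
    rcases le_total u 1 with h | h
    · have := Real.rpow_le_one hu'.le h (show 0 ≤ s.re - 1 by linarith)
      have : 0 ≤ u ^ 4 := by positivity
      linarith
    · have := Real.rpow_le_rpow_of_exponent_le h (show s.re - 1 ≤ (4:ℕ) by push_cast; linarith)
      rw [Real.rpow_natCast] at this
      linarith
  calc u ^ (s - 1).re * ‖bf H c u‖ ≤ (1 + u ^ 4) * ‖H u‖ := by
        gcongr
        exact bf_norm H hc hu
    _ = _ := by ring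

lemma R_bdd (H : 𝓢(ℝ, ℂ)) : ∃ C, 0 ≤ C ∧ ∀ s c : ℂ, 0 ≤ c.re → ‖s‖ ≤ 4 → 0 ≤ s.re → s.re ≤ 3 → ‖R H s c‖ ≤ C := by
  obtain ⟨C0, p0, h0⟩ := B_bdd H
  obtain ⟨C1, p1, h1⟩ := B_bdd (xD H)
  obtain ⟨C2, p2, h2⟩ := B_bdd (xD (xD H))
  refine ⟨5 * (6 * C0 + C1) + 6 * C1 + C2, by positivity, ?_⟩
  intro s c hc hs hr hr3
  have a0 : 1 ≤ (s + 2).re := by simp; linarith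
  have a1 : (s + 2).re ≤ 5 := by simp; linarith
  have n1 : ‖s + 1‖ ≤ 5 := (norm_add_le _ _).trans (by simp; linarith)
  have n2 : ‖s + 2‖ ≤ 6 := (norm_add_le _ _).trans (by simp; linarith)
  unfold R
  refine (norm_add_le _ _).trans (add_le_add ((norm_add_le _ _).trans (add_le_add ?_ ?_)) (h2 _ _ hc a0 a1))
  · rw [norm_mul]
    refine mul_le_mul n1 ((norm_add_le _ _).trans (add_le_add ?_ (h1 _ _ hc a0 a1))) (norm_nonneg _) (by norm_num)
    rw [norm_mul]
    exact mul_le_mul n2 (h0 _ _ hc a0 a1) (norm_nonneg _) (by norm_num)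
  · rw [norm_mul]
    exact mul_le_mul n2 (h1 _ _ hc a0 a1) (norm_nonneg _) (by norm_num)

/-- decay bound for `B` -/
lemma B_decay (H : 𝓢(ℝ, ℂ)) : ∃ C, 0 ≤ C ∧ ∀ s c : ℂ, 0 ≤ c.re → c ≠ 0 → ‖s‖ ≤ 4 → 0 < s.re → s.re ≤ 3 →
    ‖B H s c‖ ≤ C / ‖c‖ ^ 2 := by
  obtain ⟨C, p, h⟩ := R_bdd H
  refine ⟨C, p, fun s c hc c0 hs h0 h3 => ?_⟩
  have e := B_R H (s := s) (c := c) (Or.inl ⟨hc, h0⟩)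
  have := h s c hc hs h0.le h3
  rw [← e, norm_mul, norm_pow] at this
  have : 0 < ‖c‖ := norm_pos_iff.mpr c0
  rw [le_div_iff₀ (by positivity)]
  linarith

/-- boundary value at s = 0 -/
def B0 (H : 𝓢(ℝ, ℂ)) (c : ℂ) : ℂ := R H 0 c / c ^ 2

lemma R_s_cont (H : 𝓢(ℝ, ℂ)) {c : ℂ} (hc : 0 ≤ c.re) : ContinuousAt (fun s => R H s c) 0 := by
  have hB (H : 𝓢(ℝ, ℂ)) : ContinuousAt (fun s : ℂ => B H (s + 2) c) 0 := by
    have h1 : ContinuousAt (fun s => B H s c) ((0:ℂ) + 2) := (B_diff H hc (by simp)).continuousAt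
    exact ContinuousAt.comp (f := fun s : ℂ => s + 2) (g := fun s => B H s c) h1 (by fun_prop)
  have c1 : ContinuousAt (fun s : ℂ => s + 1) 0 := by fun_prop
  have c2 : ContinuousAt (fun s : ℂ => s + 2) 0 := by fun_prop
  exact ((c1.mul ((c2.mul (hB H)).add (hB (xD H)))).add (c2.mul (hB (xD H)))).add (hB (xD (xD H)))

lemma B_tendsto (H : 𝓢(ℝ, ℂ)) {c : ℂ} (hc : 0 ≤ c.re) (c0 : c ≠ 0) :
    Tendsto (fun s : ℝ => B H (s:ℂ) c) (𝓝[>] 0) (𝓝 (B0 H c)) := by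
  have h1 : Tendsto (fun s : ℝ => R H (s:ℂ) c) (𝓝[>] 0) (𝓝 (R H 0 c)) :=
    (R_s_cont H hc).tendsto.comp ofReal_tendsto
  refine (h1.div_const (c^2)).congr' ?_
  filter_upwards [self_mem_nhdsWithin] with s hs
  have hs' : (0:ℝ) < s := hs
  rw [← B_R H (s := s) (c := c) (Or.inl ⟨hc, by simpa using hs'⟩)]
  field_simp

lemma B0_eq (H : 𝓢(ℝ, ℂ)) {c : ℂ} (hc : 0 < c.re) : B0 H c = B H 0 c := by
  unfold B0
  have c0 : c ≠ 0 := by rintro rfl; simp at hc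
  rw [← B_R H (s := 0) (c := c) (Or.inr ⟨hc, by simp⟩)]
  field_simp

lemma B_c_cont (H : 𝓢(ℝ, ℂ)) {s : ℂ} (hs : 0 < s.re) {c : ℂ} (hc : 0 ≤ c.re) :
    Tendsto (fun ε : ℝ => B H s (ε + c)) (𝓝[>] 0) (𝓝 (B H s c)) := by
  unfold B mellin
  have hi : IntegrableOn (fun u : ℝ => ‖(u:ℂ) ^ (s - 1) • bf H 0 u‖) (Ioi 0) :=
    (B_conv H (s := s) (c := 0) (Or.inl ⟨by simp, hs⟩)).norm
  apply tendsto_integral_filter_of_dominated_convergence (fun u : ℝ => ‖(u:ℂ) ^ (s - 1) • bf H 0 u‖)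
  · filter_upwards [self_mem_nhdsWithin] with ε hε
    have hε' : (0:ℝ) < ε := hε
    exact (B_conv H (s := s) (c := ε + c) (Or.inl ⟨by simp; linarith, hs⟩)).aestronglyMeasurable
  · filter_upwards [self_mem_nhdsWithin] with ε hε
    have hε' : (0:ℝ) < ε := hε
    filter_upwards [ae_restrict_mem measurableSet_Ioi] with u hu
    rw [norm_smul, norm_smul]
    gcongr
    refine (bf_norm H (by simp; linarith) hu).trans (by simp [bf])
  · exact hi
  · filter_upwards [ae_restrict_mem measurableSet_Ioi] with u hu
    apply Tendsto.const_smul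
    unfold bf
    apply Tendsto.const_mul
    have : Tendsto (fun ε : ℝ => Complex.exp (-(ε + c) / u)) (𝓝 0) (𝓝 (Complex.exp (-(((0:ℝ):ℂ) + c) / u))) := by
      apply Continuous.tendsto (f := fun ε : ℝ => Complex.exp (-(ε + c) / u))
      fun_prop
    simp only [Complex.ofReal_zero, zero_add] at this
    exact this.mono_left nhdsWithin_le_nhds

lemma B0_cont (H : 𝓢(ℝ, ℂ)) {c : ℂ} (hc : 0 ≤ c.re) (c0 : c ≠ 0) :
    Tendsto (fun ε : ℝ => B H 0 (ε + c)) (𝓝[>] 0) (𝓝 (B0 H c)) := by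
  have hh (H : 𝓢(ℝ, ℂ)) := B_c_cont H (s := 0 + 2) (by simp) hc
  have h1 : Tendsto (fun ε : ℝ => R H 0 (ε + c)) (𝓝[>] 0) (𝓝 (R H 0 c)) := by
    unfold R
    exact ((((hh H).const_mul _).add (hh (xD H))).const_mul _).add ((hh (xD H)).const_mul _) |>.add (hh (xD (xD H)))
  have h2 : Tendsto (fun ε : ℝ => ((ε:ℂ) + c)^2) (𝓝[>] 0) (𝓝 (c^2)) := by
    have := (ofReal_tendsto.add_const c).pow 2
    simpa using this
  refine (h1.div h2 (pow_ne_zero 2 c0)).congr' ?_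
  filter_upwards [self_mem_nhdsWithin] with ε hε
  have hε' : (0:ℝ) < ε := hε
  rw [← B0_eq H (by simp; linarith)]
  rfl

end Vor

namespace Vor
open Filter Topology Set
open scoped SchwartzMap FourierTransform

def TT (H : 𝓢(ℝ, ℂ)) (s μ y : ℝ) : ℂ := if 0 < y then (y:ℂ) ^ (-(s:ℂ) - 1) * H (μ / y) else 0

lemma TT_norm (H : 𝓢(ℝ, ℂ)) (s μ : ℝ) {y : ℝ} (hy : 0 < y) : ‖TT H s μ y‖ = y ^ (-s - 1) * ‖H (μ / y)‖ := by
  rw [TT, if_pos hy, norm_mul, Complex.norm_cpow_eq_rpow_re_of_pos hy]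
  simp

lemma TT_cont (H : 𝓢(ℝ, ℂ)) {s μ : ℝ} (hs : s ≤ 3) (hμ : 0 < μ) : Continuous (TT H s μ) := by
  rw [continuous_iff_continuousAt]
  intro y
  rcases lt_trichotomy y 0 with hy | hy | hy
  · have : TT H s μ =ᶠ[𝓝 y] fun _ => 0 := by
      filter_upwards [Iio_mem_nhds hy] with z hz
      rw [TT, if_neg (not_lt.mpr (le_of_lt hz))]
    exact continuousAt_const.congr this.symm
  · subst hy
    have h0 : TT H s μ 0 = 0 := by simp [TT]
    unfold ContinuousAt
    rw [h0]
    obtain ⟨C, hC, hd⟩ := H.decay 5 0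
    simp only [norm_iteratedFDeriv_zero] at hd
    apply squeeze_zero_norm' (a := fun y : ℝ => |y| ^ (4 - s) * (C / μ ^ 5))
    · filter_upwards with z
      rcases le_or_gt z 0 with hz | hz
      · rw [TT, if_neg (not_lt.mpr hz), norm_zero]; positivity
      · rw [TT_norm H s μ hz, abs_of_pos hz]
        have := hd (μ / z)
        rw [Real.norm_of_nonneg (by positivity)] at this
        have h2 : ‖H (μ / z)‖ ≤ z ^ 5 * (C / μ ^ 5) := by
          have e : z ^ 5 * (C / μ ^ 5) = C / (μ / z) ^ 5 := by field_simp
          rw [e, le_div_iff₀ (by positivity)]; linarith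
        calc z ^ (-s - 1) * ‖H (μ / z)‖ ≤ z ^ (-s - 1) * (z ^ 5 * (C / μ ^ 5)) := by gcongr
          _ = (z ^ (-s - 1) * z ^ ((5:ℕ):ℝ)) * (C / μ ^ 5) := by rw [Real.rpow_natCast]; ring
          _ = _ := by rw [← Real.rpow_add hz]; congr 2; push_cast; ring
    · have : Tendsto (fun y : ℝ => |y| ^ (4 - s) * (C / μ ^ 5)) (𝓝 0) (𝓝 (|(0:ℝ)| ^ (4 - s) * (C / μ ^ 5))) := by
        apply Tendsto.mul_const
        apply Tendsto.rpow_const (continuous_abs.tendsto 0)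
        right; linarith
      rwa [abs_zero, Real.zero_rpow (by linarith), zero_mul] at this
  · have : TT H s μ =ᶠ[𝓝 y] fun y => (y:ℂ) ^ (-(s:ℂ) - 1) * H (μ / y) := by
      filter_upwards [Ioi_mem_nhds hy] with z hz
      rw [TT, if_pos (show 0 < z from hz)]
    refine ContinuousAt.congr ?_ this.symm
    apply ContinuousAt.mul
    · refine ContinuousAt.cpow (by fun_prop) continuousAt_const ?_
      exact Or.inl (by simpa using hy)
    · apply ContinuousAt.comp (g := H) H.continuous.continuousAt
      exact continuousAt_const.div continuousAt_id hy.ne'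

lemma TT_bigO (H : 𝓢(ℝ, ℂ)) (s μ : ℝ) : TT H s μ =O[cocompact ℝ] fun x => |x| ^ (-(s+1)) := by
  obtain ⟨C, hC, hd⟩ := H_bdd H
  apply Asymptotics.IsBigO.of_bound C
  filter_upwards with y
  rcases le_or_gt y 0 with hz | hz
  · rw [TT, if_neg (not_lt.mpr hz), norm_zero]; positivity
  · rw [TT_norm H s μ hz, abs_of_pos hz, Real.norm_of_nonneg (by positivity), mul_comm, show -(s+1) = -s-1 by ring]
    gcongr
    exact hd _

lemma TT_fourier (H : 𝓢(ℝ, ℂ)) (s : ℝ) {μ : ℝ} (hμ : 0 < μ) (ν : ℝ) :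
    𝓕 (TT H s μ) ν = (μ:ℂ) ^ (-(s:ℂ)) * B H s (2 * π * Complex.I * (ν * μ)) := by
  rw [Real.fourier_real_eq_integral_exp_smul]
  have e1 : (fun v : ℝ => Complex.exp (↑(-2 * π * v * ν) * Complex.I) • TT H s μ v)
      = (Ioi (0:ℝ)).indicator (fun v => (v:ℂ) ^ (-(s:ℂ) - 1) •
        (fun t : ℝ => H (μ * t) * Complex.exp (-(2 * π * Complex.I * ν) / t)) v⁻¹) := by
    ext v
    by_cases hv : 0 < v
    · rw [indicator_of_mem (show v ∈ Ioi (0:ℝ) from hv), TT, if_pos hv]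
      simp only [smul_eq_mul, div_eq_mul_inv, Complex.ofReal_inv, inv_inv]
      rw [show (↑(-2 * π * v * ν) * Complex.I : ℂ) = (-(2 * π * Complex.I * ν) * v) by push_cast; ring]
      ring
    · rw [indicator_of_notMem (show v ∉ Ioi (0:ℝ) from hv), TT, if_neg hv, smul_zero]
  rw [e1, integral_indicator measurableSet_Ioi]
  change mellin (fun v : ℝ => (fun t : ℝ => H (μ * t) * Complex.exp (-(2 * π * Complex.I * ν) / t)) v⁻¹) (-(s:ℂ)) = _
  rw [mellin_comp_inv (fun t : ℝ => H (μ * t) * Complex.exp (-(2 * π * Complex.I * ν) / t)), neg_neg]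
  have e2 : (fun t : ℝ => H (μ * t) * Complex.exp (-(2 * π * Complex.I * ν) / t)) =
      fun t : ℝ => bf H (2 * π * Complex.I * (ν * μ)) (μ * t) := by
    ext t
    unfold bf
    congr 2
    have : (μ:ℂ) ≠ 0 := by exact_mod_cast hμ.ne'
    push_cast
    rw [show -(2 * π * Complex.I * (ν * μ)) = (μ:ℂ) * (-(2 * π * Complex.I * ν)) by ring, mul_div_mul_left _ _ this]
  rw [e2, mellin_comp_mul_left _ _ hμ, smul_eq_mul]
  rfl

lemma c_re (x : ℝ) : (2 * π * Complex.I * (x:ℂ)).re = 0 := by simp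

lemma c_norm (x : ℝ) : ‖2 * π * Complex.I * (x:ℂ)‖ = 2 * π * |x| := by
  simp [abs_of_pos Real.pi_pos]

lemma c_ne {x : ℝ} (hx : x ≠ 0) : 2 * π * Complex.I * (x:ℂ) ≠ 0 := by
  rw [← norm_pos_iff, c_norm]; positivity

/-- concrete decay -/
lemma B_decay' (H : 𝓢(ℝ, ℂ)) : ∃ C, 0 ≤ C ∧ ∀ (s : ℂ) (x : ℝ), x ≠ 0 → ‖s‖ ≤ 4 → 0 < s.re → s.re ≤ 3 →
    ‖B H s (2 * π * Complex.I * x)‖ ≤ C / x ^ 2 := by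
  obtain ⟨C, hC, h⟩ := B_decay H
  refine ⟨C, hC, fun s x hx h1 h2 h3 => ?_⟩
  refine (h s _ (c_re x).ge (c_ne hx) h1 h2 h3).trans ?_
  rw [c_norm, mul_pow, sq_abs]
  have : 0 < x ^ 2 := by positivity
  gcongr
  have := Real.pi_gt_three
  have h4 : 1 ≤ (2 * π) ^ 2 := by nlinarith
  nlinarith

lemma B_summable (H : 𝓢(ℝ, ℂ)) {s : ℝ} (h0 : 0 < s) (hs : s ≤ 3) {μ : ℝ} (hμ : 0 < μ) :
    Summable fun n : ℤ => B H s (2 * π * Complex.I * ((n:ℝ) * μ : ℝ)) := by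
  obtain ⟨C, hC, h⟩ := B_decay' H
  have := (Real.summable_one_div_int_pow (p := 2)).mpr (by norm_num)
  refine Summable.of_norm_bounded_eventually (g := fun n : ℤ => (C / μ ^ 2) * (1 / (n:ℝ) ^ 2)) (this.mul_left _) ?_
  have h0' : ∀ᶠ n : ℤ in cofinite, n ≠ 0 := by
    exact (Set.finite_singleton (0:ℤ)).compl_mem_cofinite
  filter_upwards [h0'] with n hn
  have hn' : (n:ℝ) ≠ 0 := by exact_mod_cast hn
  refine (h s _ (mul_ne_zero hn' hμ.ne') (by simp [abs_of_pos h0]; linarith) (by simpa) (by simpa)).trans ?_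
  rw [mul_pow]
  apply le_of_eq
  field_simp

lemma poisson2 (H : 𝓢(ℝ, ℂ)) {s : ℝ} (h0 : 0 < s) (hs : s ≤ 3) {μ : ℝ} (hμ : 0 < μ) (x : ℝ) :
    ∑' r : ℤ, TT H s μ (x + r) =
      (μ:ℂ) ^ (-(s:ℂ)) * ∑' j : ℤ, B H s (2 * π * Complex.I * ((j:ℝ) * μ : ℝ)) * e2pi (j * x) := by
  have hF (n : ℤ) : 𝓕 (TT H s μ) n = (μ:ℂ) ^ (-(s:ℂ)) * B H s (2 * π * Complex.I * ((n:ℝ) * μ : ℝ)) := by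
    have := TT_fourier H s hμ n
    push_cast at this ⊢
    exact this
  rw [Real.tsum_eq_tsum_fourier_of_rpow_decay_of_summable (TT_cont H hs hμ) (b := s + 1) (by linarith) (TT_bigO H s μ), ← tsum_mul_left]
  · apply tsum_congr
    intro n
    rw [hF, fourier_coe_apply, mul_assoc]
    congr 2
    unfold e2pi
    congr 1
    push_cast
    ring
  · simp only [hF]
    exact (B_summable H h0 hs hμ).mul_left _

/-- bundled test function -/
structure Dat where
  g : ℝ → ℝ
  sm : ContDiff ℝ (⊤ : ℕ∞) g
  cs : HasCompactSupport g
  z : ∀ x : ℝ, x ≤ 0 → g x = 0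

variable (D : Dat)

lemma Dat.cs' : HasCompactSupport (fun x => (D.g x : ℂ)) :=
  D.cs.comp_left (g := fun x : ℝ => (x:ℂ)) (by simp)

lemma Dat.sm' : ContDiff ℝ (⊤ : ℕ∞) (fun x => (D.g x : ℂ)) :=
  Complex.ofRealCLM.contDiff.comp D.sm

def Dat.gS : 𝓢(ℝ, ℂ) := D.cs'.toSchwartzMap D.sm'

lemma Dat.gS_apply (x : ℝ) : D.gS x = D.g x := rfl

def Dat.h : 𝓢(ℝ, ℂ) := 𝓕 D.gS

def Dat.hm : 𝓢(ℝ, ℂ) := SchwartzMap.compCLMOfContinuousLinearEquiv ℝ (ContinuousLinearEquiv.neg ℝ) D.h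

lemma Dat.hm_apply (x : ℝ) : D.hm x = D.h (-x) := rfl

lemma Dat.h_apply (ξ : ℝ) : D.h ξ = ∫ x : ℝ, Complex.exp (-(2 * π * Complex.I * ξ * x)) * D.g x := by
  unfold Dat.h
  rw [SchwartzMap.fourier_coe, Real.fourier_real_eq_integral_exp_smul]
  congr 1
  ext x
  rw [smul_eq_mul, D.gS_apply]
  congr 2
  push_cast
  ring

lemma poisson1 (m : ℝ) (hm : 0 < m) (a : ℝ) :
    ∑' n : ℤ, e2pi (n * a) * D.g (m * n) = ∑' k : ℤ, (1 / (m:ℂ)) * D.h ((k - a) / m) := by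
  have c1 : HasCompactSupport (fun y : ℝ => e2pi (y * a) * (D.g (m * y) : ℂ)) := by
    apply HasCompactSupport.mul_left
    exact D.cs'.comp_homeomorph (Homeomorph.mulLeft₀ m hm.ne')
  have c2 : ContDiff ℝ (⊤ : ℕ∞) (fun y : ℝ => e2pi (y * a) * (D.g (m * y) : ℂ)) := by
    apply ContDiff.mul
    · unfold e2pi
      have : ContDiff ℝ (⊤ : ℕ∞) (fun y : ℝ => ((y * a : ℝ) : ℂ)) :=
        Complex.ofRealCLM.contDiff.comp (contDiff_id.mul contDiff_const)
      exact (contDiff_const.mul this).cexp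
    · exact D.sm'.comp (contDiff_const.mul contDiff_id)
  have key := SchwartzMap.tsum_eq_tsum_fourier (c1.toSchwartzMap c2) 0
  have e1 : ∀ n : ℤ, (c1.toSchwartzMap c2) (0 + n) = e2pi (n * a) * D.g (m * n) := by
    intro n
    rw [zero_add]; rfl
  have e2 : ∀ n : ℤ, (𝓕 (c1.toSchwartzMap c2)) n * (fourier n ((0:ℝ):UnitAddCircle)) = (1 / (m:ℂ)) * D.h ((n - a) / m) := by
    intro n
    rw [fourier_coe_apply, SchwartzMap.fourier_coe, Real.fourier_real_eq_integral_exp_smul, D.h_apply]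
    have := Measure.integral_comp_mul_left (fun x : ℝ => Complex.exp (-(2 * π * Complex.I * ↑((n - a) / m) * x)) * D.g x) m
    rw [abs_of_pos (by positivity)] at this
    simp only [Complex.ofReal_zero, mul_zero, zero_div, Complex.exp_zero, mul_one]
    rw [one_div, ← Complex.ofReal_inv, ← Complex.real_smul]
    refine Eq.trans ?_ this
    congr 1
    ext y
    have m0 : (m:ℂ) ≠ 0 := by exact_mod_cast hm.ne'
    change _ • (e2pi (y * a) * (D.g (m * y) : ℂ)) = _
    rw [smul_eq_mul, ← mul_assoc, e2pi, ← Complex.exp_add]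
    congr 2
    push_cast
    field_simp
    ring
  simp only [e1, e2] at key
  exact key

/-- sums over an arithmetic progression -/
lemma sum_prog {q : ℕ} (hq : 1 ≤ q) (a : ℤ) (F : ℤ → ℂ) :
    ∑' k : ℤ, F (a + q * k) = ∑' l : ℤ, if (q:ℤ) ∣ l - a then F l else 0 := by
  have hq' : (q:ℤ) ≠ 0 := by exact_mod_cast (by omega : q ≠ 0)
  have hinj : Function.Injective (fun k : ℤ => a + q * k) := by
    intro x y h
    have h' : (q:ℤ) * x = q * y := by simpa using h
    exact mul_left_cancel₀ hq' h'
  rw [← hinj.tsum_eq (f := fun l : ℤ => if (q:ℤ) ∣ l - a then F l else 0)]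
  · apply tsum_congr
    intro k
    simp
  · intro l hl
    rw [Function.mem_support] at hl
    have : (q:ℤ) ∣ l - a := by
      by_contra h
      exact hl (if_neg h)
    obtain ⟨k, hk⟩ := this
    exact ⟨k, by simp only; omega⟩

end Vor

namespace Vor
open Filter Topology Set
open scoped SchwartzMap FourierTransform

lemma tsum_int_pnat (f : ℤ → ℂ) (hf : Summable f) :
    ∑' n : ℤ, f n = f 0 + ∑' n : ℕ+, (f (n:ℕ) + f (-((n:ℕ):ℤ))) := by
  have i1 : Function.Injective (fun n : ℕ => (n:ℤ) + 1) := fun a b h => by simpa using h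
  have i2 : Function.Injective (fun n : ℕ => -((n:ℤ) + 1)) := fun a b h => by simpa using h
  have s1 : Summable fun n : ℕ => f (n + 1) := hf.comp_injective i1
  have s2 : Summable fun n : ℕ => f (-(n + 1)) := hf.comp_injective i2
  rw [tsum_of_add_one_of_neg_add_one s1 s2,
    tsum_pnat_eq_tsum_succ (f := fun n : ℕ => f (n:ℕ) + f (-((n:ℕ):ℤ)))]
  push_cast
  rw [s1.tsum_add s2]
  ring

lemma e2pi_norm (x : ℝ) : ‖e2pi x‖ = 1 := by
  unfold e2pi
  rw [Complex.norm_exp]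
  simp

lemma e2pi_int (n : ℤ) : e2pi n = 1 := by
  unfold e2pi
  rw [show 2 * (π:ℂ) * Complex.I * ((n:ℝ):ℂ) = n * (2 * π * Complex.I) by push_cast; ring]
  exact Complex.exp_int_mul_two_pi_mul_I n

def cc (q : ℕ) (n : ℝ) : ℂ := 2 * π * Complex.I * ((n / (q:ℝ) ^ 2 : ℝ) : ℂ)

lemma cc_zero (q : ℕ) : cc q 0 = 0 := by simp [cc]

lemma col_sum (H : 𝓢(ℝ, ℂ)) {s : ℝ} (h0 : 0 < s) (hs : s ≤ 3) {q : ℕ} (hq : 1 ≤ q) (l : ℕ+) (x : ℝ) :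
    ∑' r : ℤ, TT H s (l / (q:ℝ) ^ 2) (x + r) = ((l / (q:ℝ) ^ 2 : ℝ) : ℂ) ^ (-(s:ℂ)) *
      (B H s 0 + ∑' j : ℕ+, (B H s (cc q ((l * j : ℕ+) : ℕ)) * e2pi (j * x)
        + B H s (cc q (-((l * j : ℕ+) : ℕ))) * e2pi (-(j * x)))) := by
  have hq' : (0:ℝ) < q := by exact_mod_cast hq
  have hl : (0:ℝ) < (l:ℕ) := by exact_mod_cast l.pos
  have hμ : 0 < l / (q:ℝ) ^ 2 := by positivity
  rw [poisson2 H h0 hs hμ, tsum_int_pnat]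
  · congr 2
    · simp [e2pi]
    · apply tsum_congr
      intro j
      congr 2
      · congr 1
        unfold cc
        congr 2
        push_cast; ring
      · congr 1
        unfold cc
        congr 2
        push_cast; ring
      · congr 1
        push_cast; ring
  · apply Summable.of_norm
    simp only [norm_mul, e2pi_norm, mul_one]
    exact (B_summable H h0 hs hμ).norm

lemma TT_scale (H : 𝓢(ℝ, ℂ)) (s μ : ℝ) {Q : ℝ} (hQ : 0 < Q) (y : ℝ) :
    TT H s (μ / Q) (Q * y) = (Q:ℂ) ^ (-(s:ℂ) - 1) * TT H s (μ / Q ^ 2) y := by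
  unfold TT
  by_cases hy : 0 < y
  · rw [if_pos hy, if_pos (by positivity)]
    push_cast
    rw [Complex.mul_cpow_ofReal_nonneg hQ.le hy.le, mul_assoc]
    congr 3
    field_simp
  · rw [if_neg hy, if_neg, mul_zero]
    intro h
    exact hy (by nlinarith [(mul_pos_iff_of_pos_left hQ).mp h])

lemma TT_neg (D : Dat) (s μ y : ℝ) : TT D.h s (-μ) y = TT D.hm s μ y := by
  unfold TT
  rw [D.hm_apply, neg_div]

def AA (D : Dat) (q : ℕ) (d : ℤ) (s : ℝ) (m l : ℤ) : ℂ := if (q:ℤ) ∣ l + m * d then TT D.h s (l / q) m else 0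

lemma dvd_iff {q : ℕ} {d db : ℤ} (hdb : (q:ℤ) ∣ d * db - 1) (m l : ℤ) : (q:ℤ) ∣ l + m * d ↔ (q:ℤ) ∣ m - (-(db * l)) := by
  obtain ⟨k, hk⟩ := hdb
  constructor
  · rintro ⟨t, ht⟩
    exact ⟨db * t - m * k, by linear_combination db * ht - m * hk⟩
  · rintro ⟨t, ht⟩
    exact ⟨d * t - l * k, by linear_combination d * ht - l * hk⟩

lemma row_sum (D : Dat) {q : ℕ} (hq : 1 ≤ q) (d : ℤ) (s : ℝ) {m : ℤ} (hm : 0 < m) :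
    ∑' n : ℤ, (m:ℂ) ^ (-(s:ℂ)) * (e2pi (n * (m * d / q)) * D.g (m * n)) = ∑' l : ℤ, AA D q d s m l := by
  have hq' : (0:ℝ) < q := by exact_mod_cast hq
  have hm' : (0:ℝ) < m := by exact_mod_cast hm
  have mc : (m:ℂ) ≠ 0 := by exact_mod_cast hm.ne'
  rw [tsum_mul_left, poisson1 D m hm', ← tsum_mul_left]
  have := sum_prog hq (-(m * d)) (fun l => TT D.h s (l / q) m)
  simp only [sub_neg_eq_add] at this
  unfold AA
  rw [← this]
  apply tsum_congr
  intro k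
  rw [TT, if_pos hm']
  rw [← mul_assoc]
  congr 1
  · push_cast
    rw [Complex.cpow_sub _ _ mc, Complex.cpow_one]
    field_simp
  · congr 1
    push_cast
    field_simp
    ring

lemma AA_summable (D : Dat) {q : ℕ} (hq : 1 ≤ q) (d : ℤ) {s : ℝ} (hs : 2 < s) : Summable (Function.uncurry (AA D q d s)) := by
  obtain ⟨C0, hC0, hb0⟩ := H_bdd D.h
  obtain ⟨C2, hC2, hb2⟩ := D.h.decay 2 0
  simp only [norm_iteratedFDeriv_zero] at hb2
  set u : ℤ → ℝ := fun m => (if 0 < m then (m:ℝ) ^ (1 - s) else 0) with hu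
  set w : ℤ → ℝ := fun l => (if l = 0 then C0 else 0) + C2 * q ^ 2 * (1 / (l:ℝ) ^ 2) with hw
  have su : Summable u := by
    have h1 : Summable fun n : ℕ => (n:ℝ) ^ (1 - s) := by
      rw [Real.summable_nat_rpow]; linarith
    have i : Function.Injective (fun n : ℕ => (n:ℤ)) := Nat.cast_injective
    have hs0 : ∀ x ∉ range (fun n : ℕ => (n:ℤ)), u x = 0 := by
      intro x hx
      simp only [hu]
      rw [if_neg]
      intro h
      exact hx ⟨x.toNat, by simp; omega⟩
    rw [← i.summable_iff hs0]
    refine Summable.of_nonneg_of_le (fun n => ?_) (fun n => ?_) h1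
    · simp only [hu, Function.comp]; split_ifs <;> positivity
    · simp only [hu, Function.comp]; split_ifs
      · simp
      · positivity
  have sw : Summable w := by
    apply Summable.add
    · apply summable_of_hasFiniteSupport
      apply (Set.finite_singleton (0:ℤ)).subset
      intro l hl
      by_contra h
      exact hl (if_neg h)
    · exact ((Real.summable_one_div_int_pow (p := 2)).mpr (by norm_num)).mul_left _
  have u0 : 0 ≤ u := fun m => by
    simp only [hu, Pi.zero_apply]; split_ifs with h
    · have : (0:ℝ) < m := by exact_mod_cast h
      positivity
    · exact le_rfl
  have w0 : 0 ≤ w := fun l => by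
    simp only [hw, Pi.zero_apply]; split_ifs <;> positivity
  refine Summable.of_norm_bounded (su.mul_of_nonneg sw u0 w0) ?_
  rintro ⟨m, l⟩
  simp only [Function.uncurry, AA]
  split_ifs with h
  swap
  · rw [norm_zero]; exact mul_nonneg (u0 m) (w0 l)
  by_cases hm : 0 < m
  swap
  · rw [TT, if_neg (by exact_mod_cast hm), norm_zero]; exact mul_nonneg (u0 m) (w0 l)
  have hm' : (0:ℝ) < m := by exact_mod_cast hm
  have m1 : (1:ℝ) ≤ m := by exact_mod_cast hm
  rw [TT_norm _ _ _ hm']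
  have um : u m = (m:ℝ) ^ (1 - s) := if_pos hm
  by_cases hl : l = 0
  · subst hl
    rw [um]
    have : w 0 = C0 := by simp [hw]
    rw [this]
    apply mul_le_mul _ (hb0 _) (norm_nonneg _) (by positivity)
    exact Real.rpow_le_rpow_of_exponent_le m1 (by linarith)
  · have hl' : (l:ℝ) ≠ 0 := by exact_mod_cast hl
    have : w l = C2 * q ^ 2 * (1 / (l:ℝ) ^ 2) := by simp [hw, hl]
    rw [this, um]
    have hq' : (0:ℝ) < q := by exact_mod_cast hq
    have := hb2 (l / q / m)
    have e : (m:ℝ) ^ (1 - s) = (m:ℝ) ^ (-s - 1) * (m:ℝ) ^ 2 := by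
      rw [← Real.rpow_natCast, ← Real.rpow_add hm']; congr 1; push_cast; ring
    rw [e, mul_assoc]
    gcongr
    rw [Real.norm_eq_abs, sq_abs] at this
    have hp : 0 < (l / q / m : ℝ) ^ 2 := by positivity
    rw [← le_div_iff₀' hp] at this
    refine this.trans (le_of_eq ?_)
    field_simp


lemma AA_col (D : Dat) {q : ℕ} (hq : 1 ≤ q) {d db : ℤ} (hdb : (q:ℤ) ∣ d * db - 1) (s : ℝ) (l : ℤ) :
    ∑' m : ℤ, AA D q d s m l = (q:ℂ) ^ (-(s:ℂ) - 1) * ∑' r : ℤ, TT D.h s (l / (q:ℝ) ^ 2) (-(db * l) / q + r) := by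
  have hq' : (0:ℝ) < q := by exact_mod_cast hq
  unfold AA
  simp only [dvd_iff hdb]
  rw [← sum_prog hq (-(db * l)) (fun m => TT D.h s (l / q) m), ← tsum_mul_left]
  apply tsum_congr
  intro r
  have := TT_scale D.h s l hq' (-(db * l) / q + r)
  push_cast at this ⊢
  rw [← this]
  congr 1
  field_simp

/-- dual coefficients -/
def W (D : Dat) (q : ℕ) (db : ℤ) (s : ℂ) (n : ℕ) : ℂ :=
  e2pi (-(n * db) / q) * (B D.h s (cc q n) + B D.hm s (cc q (-n)))
    + e2pi ((n * db) / q) * (B D.h s (cc q (-n)) + B D.hm s (cc q n))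

lemma pow_comb {q : ℕ} (hq : 1 ≤ q) (s : ℝ) (l : ℕ+) :
    (q:ℂ) ^ (-(s:ℂ) - 1) * ((l / (q:ℝ) ^ 2 : ℝ) : ℂ) ^ (-(s:ℂ)) = (q:ℂ) ^ ((s:ℂ) - 1) * (l:ℂ) ^ (-(s:ℂ)) := by
  have hq' : (0:ℝ) < q := by exact_mod_cast hq
  have hqc : (q:ℂ) ≠ 0 := by exact_mod_cast hq'.ne'
  have hl : (0:ℝ) < (l:ℕ) := by exact_mod_cast l.pos
  have e : ((l / (q:ℝ) ^ 2 : ℝ) : ℂ) = ((l:ℝ):ℂ) * (((q:ℝ) ^ (-2:ℝ) : ℝ):ℂ) := by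
    rw [← Complex.ofReal_mul, Real.rpow_neg hq'.le]
    norm_cast
  rw [e, Complex.mul_cpow_ofReal_nonneg hl.le (by positivity), Complex.ofReal_cpow hq'.le]
  have e2 : (((q:ℝ):ℂ) ^ ((-2:ℝ):ℂ)) ^ (-(s:ℂ)) = (q:ℂ) ^ (2 * (s:ℂ)) := by
    rw [← Complex.ofReal_cpow hq'.le, ← Complex.ofReal_neg, ← Complex.ofReal_cpow (by positivity),
      ← Real.rpow_mul hq'.le, Complex.ofReal_cpow hq'.le]
    push_cast
    congr 1
    ring
  rw [e2]
  have e3 : (q:ℂ) ^ ((s:ℂ) - 1) = (q:ℂ) ^ (-(s:ℂ) - 1) * (q:ℂ) ^ (2 * (s:ℂ)) := by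
    rw [← Complex.cpow_add _ _ hqc]; congr 1; ring
  rw [e3]
  simp only [Complex.ofReal_natCast]
  ring

lemma cc_summable (H : 𝓢(ℝ, ℂ)) {s : ℝ} (h0 : 0 < s) (hs : s ≤ 3) {q : ℕ} (hq : 1 ≤ q) (l : ℕ+) (x : ℝ) :
    Summable fun j : ℕ+ => (B H s (cc q ((l * j : ℕ+) : ℕ)) * e2pi (j * x)
        + B H s (cc q (-((l * j : ℕ+) : ℕ))) * e2pi (-(j * x))) := by
  have hq' : (0:ℝ) < q := by exact_mod_cast hq
  have hl : (0:ℝ) < (l:ℕ) := by exact_mod_cast l.pos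
  have hμ : 0 < l / (q:ℝ) ^ 2 := by positivity
  have h1 := (B_summable H h0 hs hμ).norm
  have i1 : Function.Injective (fun n : ℕ+ => ((n:ℕ):ℤ)) := fun a b h => by simpa using h
  have i2 : Function.Injective (fun n : ℕ+ => -((n:ℕ):ℤ)) := fun a b h => by simpa using h
  apply Summable.add
  · apply Summable.of_norm
    simp only [norm_mul, e2pi_norm, mul_one]
    refine (h1.comp_injective i1).congr ?_
    intro j
    simp only [Function.comp, cc]
    congr 4
    push_cast; ring
  · apply Summable.of_norm
    simp only [norm_mul, e2pi_norm, mul_one]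
    refine (h1.comp_injective i2).congr ?_
    intro j
    simp only [Function.comp, cc]
    congr 4
    push_cast; ring

lemma col_pair (D : Dat) {q : ℕ} (hq : 1 ≤ q) {d db : ℤ} (hdb : (q:ℤ) ∣ d * db - 1) {s : ℝ}
    (h0 : 0 < s) (hs : s ≤ 3) (l : ℕ+) :
    ∑' m : ℤ, AA D q d s m (l:ℕ) + ∑' m : ℤ, AA D q d s m (-((l:ℕ):ℤ)) =
      (q:ℂ) ^ ((s:ℂ) - 1) * (l:ℂ) ^ (-(s:ℂ)) * (B D.h s 0 + B D.hm s 0 + ∑' j : ℕ+, W D q db s (l * j : ℕ+)) := by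
  rw [AA_col D hq hdb, AA_col D hq hdb]
  have e1 := col_sum D.h h0 hs hq l (-(db * l) / q)
  have e2 := col_sum D.hm h0 hs hq l ((db * l) / q)
  have e3 : ∀ r : ℤ, TT D.h s (((-((l:ℕ):ℤ) : ℤ) : ℝ) / (q:ℝ) ^ 2) (-(db * ((-((l:ℕ):ℤ) : ℤ) : ℝ)) / q + r)
      = TT D.hm s (l / (q:ℝ) ^ 2) ((db * l) / q + r) := by
    intro r
    rw [← TT_neg]
    congr 1
    · push_cast; ring
    · push_cast; ring
  simp only [e3]
  rw [Int.cast_natCast, e1, e2, ← pow_comb hq s l]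
  have hsum : ∑' j : ℕ+, W D q db s (l * j : ℕ+) =
      ∑' j : ℕ+, (B D.h s (cc q ((l * j : ℕ+) : ℕ)) * e2pi (j * (-(db * l) / q))
        + B D.h s (cc q (-((l * j : ℕ+) : ℕ))) * e2pi (-(j * (-(db * l) / q)))) +
      ∑' j : ℕ+, (B D.hm s (cc q ((l * j : ℕ+) : ℕ)) * e2pi (j * ((db * l) / q))
        + B D.hm s (cc q (-((l * j : ℕ+) : ℕ))) * e2pi (-(j * ((db * l) / q)))) := by
    rw [← (cc_summable D.h h0 hs hq l _).tsum_add (cc_summable D.hm h0 hs hq l _)]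
    apply tsum_congr
    intro j
    unfold W
    have f1 : (j * (-(db * l) / q) : ℝ) = -(((l * j : ℕ+) : ℕ) * db) / q := by push_cast; ring
    have f2 : (-(j * (-(db * l) / q)) : ℝ) = (((l * j : ℕ+) : ℕ) * db) / q := by push_cast; ring
    have f3 : (j * ((db * l) / q) : ℝ) = (((l * j : ℕ+) : ℕ) * db) / q := by push_cast; ring
    have f4 : (-(j * ((db * l) / q)) : ℝ) = -(((l * j : ℕ+) : ℕ) * db) / q := by push_cast; ring
    rw [f2, f1, f4, f3]
    ring
  rw [hsum]
  ring

lemma tsum_pos_int (f : ℤ → ℂ) (hf : ∀ n ≤ 0, f n = 0) : ∑' n : ℤ, f n = ∑' n : ℕ+, f (n:ℕ) := by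
  have i1 : Function.Injective (fun n : ℕ+ => ((n:ℕ):ℤ)) := fun a b h => by simpa using h
  rw [← i1.tsum_eq (f := f)]
  intro n hn
  have : 0 < n := by
    by_contra h
    exact hn (hf n (not_lt.mp h))
  exact ⟨⟨n.toNat, by omega⟩, by simp; omega⟩

lemma zeta_pnat {s : ℝ} (hs : 1 < s) : ∑' l : ℕ+, (l:ℂ) ^ (-(s:ℂ)) = riemannZeta s := by
  rw [zeta_eq_tsum_one_div_nat_add_one_cpow (by simpa), tsum_pnat_eq_tsum_succ (f := fun n : ℕ => (n:ℂ) ^ (-(s:ℂ)))]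
  apply tsum_congr
  intro n
  rw [Complex.cpow_neg, one_div]
  push_cast
  rfl

lemma AA_zero (D : Dat) {q : ℕ} (hq : 1 ≤ q) {d db : ℤ} (hdb : (q:ℤ) ∣ d * db - 1) {s : ℝ} (h0 : 0 < s) :
    ∑' m : ℤ, AA D q d s m 0 = (q:ℂ) ^ (-(s:ℂ) - 1) * (riemannZeta (s + 1) * D.h 0) := by
  rw [AA_col D hq hdb]
  congr 1
  rw [tsum_pos_int]
  · have := zeta_pnat (s := s + 1) (by linarith)
    push_cast at this
    rw [← this, ← tsum_mul_right]
    apply tsum_congr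
    intro l
    have hl : (0:ℝ) < (l:ℕ) := by exact_mod_cast l.pos
    simp only [Int.cast_zero, mul_zero, neg_zero, zero_div, zero_add]
    rw [TT, if_pos (by simpa using hl)]
    simp only [zero_div]
    congr 2
    ring
  · intro n hn
    rw [TT, if_neg]
    simpa using hn

def Dsum (D : Dat) (q : ℕ) (d : ℤ) (s : ℂ) : ℂ :=
  ∑' p : ℕ+ × ℕ+, (p.1:ℂ) ^ (-s) * (e2pi (((p.1 * p.2 : ℕ+) : ℕ) * d / q) * D.g ((p.1 * p.2 : ℕ+) : ℕ))

lemma Dat.supp_fin (D : Dat) : {p : ℕ+ × ℕ+ | D.g ((p.1 * p.2 : ℕ+) : ℕ) ≠ 0}.Finite := by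
  obtain ⟨X, hX⟩ := D.cs.isCompact.bddAbove
  have : {p : ℕ+ × ℕ+ | D.g ((p.1 * p.2 : ℕ+) : ℕ) ≠ 0} ⊆
      (fun p : ℕ+ × ℕ+ => ((p.1:ℕ), (p.2:ℕ))) ⁻¹' ((Set.Iic ⌊X⌋₊ ×ˢ Set.Iic ⌊X⌋₊)) := by
    rintro ⟨m, n⟩ h
    have h1 := hX (subset_tsupport _ h)
    have hm := m.pos
    have hn := n.pos
    have h2 : (m:ℕ) * n ≤ ⌊X⌋₊ := Nat.le_floor (by simpa using h1)
    constructor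
    · exact le_trans (Nat.le_mul_of_pos_right _ hn) h2
    · exact le_trans (Nat.le_mul_of_pos_left _ hm) h2
  refine Set.Finite.subset (Set.Finite.preimage ?_ ((Set.finite_Iic _).prod (Set.finite_Iic _))) this
  rintro ⟨a, b⟩ _ ⟨a', b'⟩ _ h
  simpa using h

lemma Dsum_summable (D : Dat) (q : ℕ) (d : ℤ) (s : ℂ) : Summable fun p : ℕ+ × ℕ+ =>
    (p.1:ℂ) ^ (-s) * (e2pi (((p.1 * p.2 : ℕ+) : ℕ) * d / q) * D.g ((p.1 * p.2 : ℕ+) : ℕ)) := by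
  apply summable_of_hasFiniteSupport
  refine D.supp_fin.subset ?_
  intro p hp h
  apply hp
  simp only [h]
  simp

lemma Dsum_AA (D : Dat) {q : ℕ} (hq : 1 ≤ q) (d : ℤ) (s : ℝ) :
    Dsum D q d s = ∑' m : ℤ, ∑' l : ℤ, AA D q d s m l := by
  rw [tsum_pos_int]
  swap
  · intro m hm
    have : ∀ l, AA D q d s m l = 0 := by
      intro l
      unfold AA
      have : ¬ (0:ℝ) < m := by simpa using hm
      rw [TT, if_neg this]
      simp
    simp [this]
  rw [Dsum, (Dsum_summable D q d s).tsum_prod]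
  apply tsum_congr
  intro m
  rw [← row_sum D hq d s (by exact_mod_cast m.pos)]
  rw [tsum_pos_int]
  · apply tsum_congr
    intro n
    simp only
    push_cast
    congr 4
    ring
  · intro n hn
    rw [D.z _]
    · simp
    · have : (0:ℝ) < ((m:ℕ):ℤ) := by exact_mod_cast m.pos
      have h2 : (n:ℝ) ≤ 0 := by exact_mod_cast hn
      nlinarith

theorem ident_gt (D : Dat) {q : ℕ} (hq : 1 ≤ q) {d db : ℤ} (hdb : (q:ℤ) ∣ d * db - 1) {s : ℝ}
    (h2 : 2 < s) (hs : s ≤ 3) (hW : Summable fun p : ℕ+ × ℕ+ => (p.1:ℂ) ^ (-(s:ℂ)) * W D q db s (p.1 * p.2 : ℕ+)) :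
    Dsum D q d s = (q:ℂ) ^ (-(s:ℂ) - 1) * (riemannZeta (s + 1) * D.h 0)
      + (q:ℂ) ^ ((s:ℂ) - 1) * (riemannZeta s * (B D.h s 0 + B D.hm s 0))
      + (q:ℂ) ^ ((s:ℂ) - 1) * ∑' p : ℕ+ × ℕ+, (p.1:ℂ) ^ (-(s:ℂ)) * W D q db s (p.1 * p.2 : ℕ+) := by
  have hA := AA_summable D hq d h2
  have zs : Summable fun l : ℕ+ => (l:ℂ) ^ (-(s:ℂ)) := by
    have : Summable fun n : ℕ => (n:ℂ) ^ (-(s:ℂ)) := by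
      simpa [Complex.cpow_neg] using Complex.summable_one_div_nat_cpow.mpr (show 1 < (s:ℂ).re by simp; linarith)
    exact this.comp_injective PNat.coe_injective
  have h0 : 0 < s := by linarith
  rw [Dsum_AA D hq, ← hA.tsum_comm, tsum_int_pnat]
  swap
  · exact ((Equiv.prodComm ℤ ℤ).summable_iff.mpr hA).prod
  rw [AA_zero D hq hdb h0, add_assoc]
  congr 1
  simp only [col_pair D hq hdb h0 hs]
  rw [hW.tsum_prod, ← zeta_pnat (by linarith : 1 < s), ← tsum_mul_right, ← tsum_mul_left, ← tsum_mul_left, ← Summable.tsum_add]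
  · apply tsum_congr
    intro l
    simp only []
    rw [tsum_mul_left]
    ring
  · exact (zs.mul_right _).mul_left _
  · exact hW.prod.mul_left _

end Vor

namespace Vor
open Filter Topology Set
open scoped SchwartzMap FourierTransform

lemma flat_aux (n : ℕ) : ∀ f : ℝ → ℝ, ContDiff ℝ (⊤ : ℕ∞) f → HasCompactSupport f → (∀ x ≤ 0, f x = 0) →
    ∃ C, 0 ≤ C ∧ ∀ x, 0 ≤ x → |f x| ≤ C * x ^ n := by
  induction n with
  | zero =>
    intro f hf hc _
    obtain ⟨C, hC⟩ := hc.exists_bound_of_continuous hf.continuous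
    exact ⟨C, (norm_nonneg _).trans (hC 0), fun x _ => by simpa using hC x⟩
  | succ n ih =>
    intro f hf hc h0
    have hd : Differentiable ℝ f := hf.differentiable (by simp)
    have hd' : ContDiff ℝ (⊤ : ℕ∞) (deriv f) := by
      have : ContDiff ℝ ((⊤ : ℕ∞) + 1) f := by simpa using hf
      exact (contDiff_succ_iff_deriv.mp this).2.2
    have hz : ∀ x ≤ 0, deriv f x = 0 := by
      have hlt : ∀ x < 0, deriv f x = 0 := by
        intro x hx
        have : f =ᶠ[𝓝 x] fun _ => 0 := by
          filter_upwards [Iio_mem_nhds hx] with z hz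
          exact h0 z (le_of_lt hz)
        rw [this.deriv_eq]; simp
      intro x hx
      rcases hx.lt_or_eq with h | h
      · exact hlt x h
      · subst h
        have c1 : Tendsto (deriv f) (𝓝[<] 0) (𝓝 (deriv f 0)) := (hd'.continuous.tendsto 0).mono_left nhdsWithin_le_nhds
        have c2 : Tendsto (deriv f) (𝓝[<] 0) (𝓝 0) := by
          apply tendsto_const_nhds.congr'
          filter_upwards [self_mem_nhdsWithin] with z hz
          exact (hlt z hz).symm
        exact tendsto_nhds_unique c1 c2
    obtain ⟨C, hC, hb⟩ := ih (deriv f) hd' hc.deriv hz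
    refine ⟨C, hC, fun x hx => ?_⟩
    have := Convex.norm_image_sub_le_of_norm_deriv_le (f := f) (s := Icc 0 x) (x := 0) (y := x) (C := C * x ^ n)
      (fun y _ => hd y) (fun y hy => (hb y hy.1).trans (by
        have := pow_le_pow_left₀ hy.1 hy.2 n
        exact mul_le_mul_of_nonneg_left this hC)) (convex_Icc 0 x) (left_mem_Icc.mpr hx) (right_mem_Icc.mpr hx)
    rw [h0 0 le_rfl, sub_zero, sub_zero, Real.norm_eq_abs, Real.norm_eq_abs, abs_of_nonneg hx] at this
    rw [pow_succ]; linarith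

lemma Dat.cont (D : Dat) : Continuous D.g := D.sm.continuous

lemma Dat.integrable (D : Dat) : Integrable D.g := D.cont.integrable_of_hasCompactSupport D.cs

lemma Dat.flat (D : Dat) (n : ℕ) : ∃ C, 0 ≤ C ∧ ∀ x, 0 ≤ x → |D.g x| ≤ C * x ^ n := flat_aux n D.g D.sm D.cs D.z

/-- Mellin-type transform of g -/
def Dat.G (D : Dat) (s : ℂ) : ℂ := mellin (fun x : ℝ => (D.g x : ℂ)) (1 - s)

lemma Dat.loc (D : Dat) : LocallyIntegrableOn (fun x : ℝ => (D.g x : ℂ)) (Ioi 0) :=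
  (Complex.continuous_ofReal.comp D.cont).continuousOn.locallyIntegrableOn measurableSet_Ioi

lemma Dat.otop (D : Dat) (a : ℝ) : (fun x : ℝ => (D.g x : ℂ)) =O[atTop] fun x : ℝ => x ^ (-a) := by
  obtain ⟨X, hX⟩ := D.cs.isCompact.bddAbove
  apply Asymptotics.IsBigO.of_bound 1
  filter_upwards [eventually_gt_atTop X, eventually_gt_atTop 0] with x hx h0
  have : D.g x = 0 := by
    by_contra h
    exact absurd (hX (subset_tsupport _ h)) (not_le.mpr hx)
  rw [this]; simp

lemma Dat.ozero (D : Dat) (n : ℕ) : (fun x : ℝ => (D.g x : ℂ)) =O[𝓝[>] 0] fun x : ℝ => x ^ (-(-(n:ℝ))) := by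
  obtain ⟨C, hC, hb⟩ := D.flat n
  apply Asymptotics.IsBigO.of_bound C
  filter_upwards [self_mem_nhdsWithin] with x hx
  have hx' : (0:ℝ) < x := hx
  rw [neg_neg, Real.rpow_natCast, Complex.norm_real, Real.norm_eq_abs, Real.norm_of_nonneg (by positivity)]
  exact hb x hx'.le

lemma Dat.G_conv (D : Dat) (s : ℂ) : MellinConvergent (fun x : ℝ => (D.g x : ℂ)) (1 - s) := by
  obtain ⟨n, hn⟩ := exists_nat_gt (-(1 - s).re)
  exact mellinConvergent_of_isBigO_rpow D.loc (D.otop ((1 - s).re + 1)) (by linarith) (D.ozero n) (by linarith)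

lemma Dat.G_diff (D : Dat) (s : ℂ) : DifferentiableAt ℂ D.G s := by
  obtain ⟨n, hn⟩ := exists_nat_gt (-(1 - s).re)
  have := mellin_differentiableAt_of_isBigO_rpow D.loc (D.otop ((1 - s).re + 1)) (by linarith) (D.ozero n) (by linarith)
  exact DifferentiableAt.comp (g := mellin (fun x : ℝ => (D.g x : ℂ))) s this (by fun_prop)

lemma Dat.h_apply' (D : Dat) (ξ : ℝ) :
    D.h ξ = ∫ x in Ioi (0:ℝ), Complex.exp (-(2 * π * Complex.I * ξ * x)) * D.g x := by
  rw [D.h_apply, ← integral_indicator measurableSet_Ioi]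
  congr 1
  ext x
  by_cases hx : 0 < x
  · rw [indicator_of_mem (show x ∈ Ioi (0:ℝ) from hx)]
  · rw [indicator_of_notMem (show x ∉ Ioi (0:ℝ) from hx), D.z x (not_lt.mp hx)]; simp

lemma fub_eq (D : Dat) (σ : ℝ) (k : ℝ → ℂ) (δ : ℝ)
    (hk : IntegrableOn (fun u : ℝ => k u * Complex.exp (-(δ * u))) (Ioi 0)) :
    ∫ u in Ioi (0:ℝ), k u * Complex.exp (-(δ * u)) * D.h (σ * u) =
      ∫ x in Ioi (0:ℝ), D.g x * ∫ u in Ioi (0:ℝ), k u * Complex.exp (-((δ + 2 * π * Complex.I * (σ * x)) * u)) := by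
  have hg : IntegrableOn (fun x : ℝ => (D.g x : ℂ)) (Ioi 0) := D.integrable.ofReal.integrableOn
  have hIntble : Integrable (Function.uncurry fun u x : ℝ => Complex.exp (-(2 * π * Complex.I * (σ * u) * x)) *
      (k u * Complex.exp (-(δ * u)) * D.g x)) ((volume.restrict (Ioi 0)).prod (volume.restrict (Ioi 0))) := by
    refine Integrable.bdd_mul (c := 1) (hk.mul_prod hg) ?_ ?_
    · apply Continuous.aestronglyMeasurable
      fun_prop
    · filter_upwards with p
      rw [Complex.norm_exp]
      apply le_of_eq
      simp
  have e1 : ∫ u in Ioi (0:ℝ), k u * Complex.exp (-(δ * u)) * D.h (σ * u) =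
      ∫ u in Ioi (0:ℝ), ∫ x in Ioi (0:ℝ), Complex.exp (-(2 * π * Complex.I * (σ * u) * x)) *
      (k u * Complex.exp (-(δ * u)) * D.g x) := by
    congr 1
    ext u
    rw [D.h_apply', ← integral_const_mul]
    congr 1
    ext x
    push_cast
    ring
  rw [e1, integral_integral_swap hIntble]
  congr 1
  ext x
  rw [← integral_const_mul]
  congr 1
  ext u
  rw [show -((δ + 2 * π * Complex.I * (σ * x)) * u) = -(2 * π * Complex.I * (σ * u) * x) + -(δ * u) by ring, Complex.exp_add]
  ring

lemma fub_lim (D : Dat) (σ : ℝ) (k : ℝ → ℂ)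
    (hk : ∀ δ : ℝ, 0 < δ → IntegrableOn (fun u : ℝ => k u * Complex.exp (-(δ * u))) (Ioi 0))
    (hkh : IntegrableOn (fun u : ℝ => k u * D.h (σ * u)) (Ioi 0)) :
    Tendsto (fun δ : ℝ => ∫ x in Ioi (0:ℝ), D.g x *
      ∫ u in Ioi (0:ℝ), k u * Complex.exp (-((δ + 2 * π * Complex.I * (σ * x)) * u))) (𝓝[>] 0)
      (𝓝 (∫ u in Ioi (0:ℝ), k u * D.h (σ * u))) := by
  have h1 : Tendsto (fun δ : ℝ => ∫ u in Ioi (0:ℝ), k u * Complex.exp (-(δ * u)) * D.h (σ * u)) (𝓝[>] 0)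
      (𝓝 (∫ u in Ioi (0:ℝ), k u * D.h (σ * u))) := by
    apply tendsto_integral_filter_of_dominated_convergence (fun u : ℝ => ‖k u * D.h (σ * u)‖)
    · filter_upwards [self_mem_nhdsWithin] with δ hδ
      apply (hk δ hδ).aestronglyMeasurable.mul
      exact (D.h.continuous.comp (by fun_prop : Continuous fun u : ℝ => σ * u)).aestronglyMeasurable
    · filter_upwards [self_mem_nhdsWithin] with δ hδ
      have hδ' : (0:ℝ) < δ := hδ
      filter_upwards [ae_restrict_mem measurableSet_Ioi] with u hu
      have hu' : (0:ℝ) < u := hu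
      rw [norm_mul, norm_mul, norm_mul]
      have : ‖Complex.exp (-(δ * u))‖ ≤ 1 := by
        rw [Complex.norm_exp, Real.exp_le_one_iff]
        simp
        positivity
      gcongr
      exact mul_le_of_le_one_right (norm_nonneg _) this
    · exact hkh.norm
    · filter_upwards with u
      have : Tendsto (fun δ : ℝ => k u * Complex.exp (-(δ * u)) * D.h (σ * u)) (𝓝 0)
          (𝓝 (k u * Complex.exp (-(((0:ℝ):ℂ) * u)) * D.h (σ * u))) := by
        apply Continuous.tendsto (f := fun δ : ℝ => k u * Complex.exp (-(δ * u)) * D.h (σ * u))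
        fun_prop
      simp only [Complex.ofReal_zero, zero_mul, neg_zero, Complex.exp_zero, mul_one] at this
      exact this.mono_left nhdsWithin_le_nhds
  refine h1.congr' ?_
  filter_upwards [self_mem_nhdsWithin] with δ hδ
  exact fub_eq D σ k δ (hk δ hδ)

/-- combined lemma: identify the limit by dominated convergence -/
lemma fub_ident (D : Dat) (σ : ℝ) (k : ℝ → ℂ) (Φ : ℝ → ℝ → ℂ) (Φ0 : ℝ → ℂ) (b : ℝ → ℝ)
    (hk : ∀ δ : ℝ, 0 < δ → IntegrableOn (fun u : ℝ => k u * Complex.exp (-(δ * u))) (Ioi 0))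
    (hkh : IntegrableOn (fun u : ℝ => k u * D.h (σ * u)) (Ioi 0))
    (hΦ : ∀ δ : ℝ, 0 < δ → ∀ x : ℝ, 0 < x →
      ∫ u in Ioi (0:ℝ), k u * Complex.exp (-((δ + 2 * π * Complex.I * (σ * x)) * u)) = Φ δ x)
    (hm : ∀ δ : ℝ, 0 < δ → ContinuousOn (Φ δ) (Ioi 0))
    (hb : ∀ᶠ δ : ℝ in 𝓝[>] 0, ∀ x : ℝ, 0 < x → ‖D.g x * Φ δ x‖ ≤ b x)
    (hbi : IntegrableOn b (Ioi 0))
    (hl : ∀ x : ℝ, 0 < x → Tendsto (fun δ => Φ δ x) (𝓝[>] 0) (𝓝 (Φ0 x))) :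
    ∫ u in Ioi (0:ℝ), k u * D.h (σ * u) = ∫ x in Ioi (0:ℝ), D.g x * Φ0 x := by
  have h1 := fub_lim D σ k hk hkh
  refine tendsto_nhds_unique h1 ?_
  have h2 : Tendsto (fun δ : ℝ => ∫ x in Ioi (0:ℝ), (D.g x : ℂ) * Φ δ x) (𝓝[>] 0) (𝓝 (∫ x in Ioi (0:ℝ), D.g x * Φ0 x)) := by
    apply tendsto_integral_filter_of_dominated_convergence b
    · filter_upwards [self_mem_nhdsWithin] with δ hδ
      apply AEStronglyMeasurable.mul
      · exact (Complex.continuous_ofReal.comp D.cont).aestronglyMeasurable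
      · exact (hm δ hδ).aestronglyMeasurable measurableSet_Ioi
    · filter_upwards [hb] with δ hδ
      filter_upwards [ae_restrict_mem measurableSet_Ioi] with x hx
      exact hδ x hx
    · exact hbi
    · filter_upwards [ae_restrict_mem measurableSet_Ioi] with x hx
      exact (hl x hx).const_mul _
  refine h2.congr' ?_
  filter_upwards [self_mem_nhdsWithin] with δ hδ
  apply setIntegral_congr_fun measurableSet_Ioi
  intro x hx
  simp only
  rw [hΦ δ hδ x hx]

lemma B_zero_eq (H : 𝓢(ℝ, ℂ)) (s : ℂ) : B H s 0 = ∫ u in Ioi (0:ℝ), (u:ℂ) ^ (s - 1) * H u := by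
  unfold B mellin bf
  simp

lemma base_ne (δ : ℝ) (hδ : 0 ≤ δ) {σ x : ℝ} (hσ : σ ≠ 0) (hx : 0 < x) : (δ + 2 * π * Complex.I * (σ * x) : ℂ).im ≠ 0 := by
  have := Real.pi_pos
  simp
  exact ⟨hσ, hx.ne'⟩

lemma inv_slit {z : ℂ} (hz : z.im ≠ 0) : 1 / z ∈ Complex.slitPlane := by
  right
  rw [one_div, Complex.inv_im]
  have : z ≠ 0 := by rintro rfl; simp at hz
  have := Complex.normSq_pos.mpr this
  apply div_ne_zero _ this.ne'
  simpa using hz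

lemma base_norm (δ : ℝ) {σ x : ℝ} (hσ : |σ| = 1) (hx : 0 < x) :
    x ≤ ‖(δ + 2 * π * Complex.I * (σ * x) : ℂ)‖ := by
  have h1 := Complex.abs_im_le_norm (δ + 2 * π * Complex.I * (σ * x) : ℂ)
  have h2 : (δ + 2 * π * Complex.I * (σ * x) : ℂ).im = 2 * π * (σ * x) := by simp
  have h3 : |2 * π * (σ * x)| = 2 * π * x := by
    rw [abs_mul, abs_mul σ, hσ, abs_of_pos (by positivity : 0 < 2 * π), abs_of_pos hx, one_mul]
  rw [h2, h3] at h1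
  have := Real.pi_gt_three
  nlinarith

lemma gam_meas (s : ℝ) (r : ℂ) : AEStronglyMeasurable (fun t : ℝ => (t : ℂ) ^ ((s:ℂ) - 1) * Complex.exp (-(r * t))) (volume.restrict (Ioi (0:ℝ))) := by
  apply ContinuousOn.aestronglyMeasurable _ measurableSet_Ioi
  intro t ht
  apply ContinuousAt.continuousWithinAt
  have : ContinuousAt (fun t : ℝ => (t : ℂ) ^ ((s:ℂ) - 1)) t :=
    ContinuousAt.cpow (by fun_prop) continuousAt_const (Complex.ofReal_mem_slitPlane.2 ht)
  exact this.mul (by fun_prop)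

lemma gam_norm (s : ℝ) (r : ℂ) {t : ℝ} (ht : 0 < t) : ‖(t : ℂ) ^ ((s:ℂ) - 1) * Complex.exp (-(r * t))‖ = t ^ (s - 1) * rexp (-r.re * t ^ (1:ℝ)) := by
  rw [norm_mul, Complex.norm_cpow_eq_rpow_re_of_pos ht, Complex.norm_exp]
  simp

lemma gam_diff {s : ℝ} (hs : 0 < s) {r : ℂ} (hr : 0 < r.re) :
    DifferentiableAt ℂ (fun r : ℂ => ∫ t in Ioi (0:ℝ), (t : ℂ) ^ ((s:ℂ) - 1) * Complex.exp (-(r * t))) r := by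
  have hn : {z : ℂ | r.re / 2 < z.re} ∈ 𝓝 r :=
    (isOpen_lt continuous_const Complex.continuous_re).mem_nhds (by simp; linarith)
  have hI : ∀ (s' b : ℝ), 0 < s' → 0 < b → IntegrableOn (fun t : ℝ => t ^ (s' - 1) * rexp (-b * t ^ (1:ℝ))) (Ioi 0) :=
    fun s' b h1 h2 => integrableOn_rpow_mul_exp_neg_mul_rpow (by linarith) one_pos h2
  have := (hasDerivAt_integral_of_dominated_loc_of_deriv_le (𝕜 := ℂ)
    (μ := volume.restrict (Ioi (0:ℝ))) (x₀ := r)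
    (F := fun r t => (t : ℂ) ^ ((s:ℂ) - 1) * Complex.exp (-(r * t)))
    (F' := fun r t => -((t : ℂ) ^ (((s + 1 : ℝ):ℂ) - 1) * Complex.exp (-(r * t))))
    (bound := fun t => t ^ ((s + 1) - 1) * rexp (-(r.re / 2) * t ^ (1:ℝ))) hn
    (Eventually.of_forall fun r => gam_meas s r) ?_ (gam_meas (s + 1) r).neg
    ?_ (hI _ _ (by linarith) (by linarith)) ?_).2
  · exact this.differentiableAt
  · refine Integrable.mono' (hI s _ hs hr) (gam_meas s r) ?_
    filter_upwards [ae_restrict_mem measurableSet_Ioi] with t ht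
    exact (gam_norm s r ht).le
  · filter_upwards [ae_restrict_mem measurableSet_Ioi] with t ht x hx
    have ht : 0 < t := ht
    have hx : r.re / 2 < x.re := hx
    rw [norm_neg, gam_norm _ _ ht]
    gcongr
  · filter_upwards [ae_restrict_mem measurableSet_Ioi] with t ht x hx
    have ht : (t : ℂ) ≠ 0 := by exact_mod_cast ne_of_gt ht
    have := ((hasDerivAt_id x).mul_const (t : ℂ)).neg.cexp.const_mul ((t : ℂ) ^ ((s:ℂ) - 1))
    refine this.congr_deriv ?_
    rw [show (((s + 1 : ℝ):ℂ) - 1) = ((s:ℂ) - 1) + 1 by push_cast; ring, Complex.cpow_add _ _ ht, Complex.cpow_one]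
    simp only [id, Pi.neg_apply]
    ring

lemma gam_int {s : ℝ} {r : ℂ} (hs : 0 < s) (hr : 0 < r.re) :
    ∫ t in Ioi (0:ℝ), (t : ℂ) ^ ((s:ℂ) - 1) * Complex.exp (-(r * t)) = (1 / r) ^ (s:ℂ) * Complex.Gamma s := by
  have := AnalyticOnNhd.eqOn_of_preconnected_of_frequently_eq (𝕜 := ℂ)
    (f := fun r => ∫ t in Ioi (0:ℝ), (t : ℂ) ^ ((s:ℂ) - 1) * Complex.exp (-(r * t)))
    (g := fun r => (1 / r) ^ (s:ℂ) * Complex.Gamma s) (z₀ := ((1 : ℝ) : ℂ)) (U := {z : ℂ | 0 < z.re}) ?_ ?_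
    half_convex.isPreconnected (by simp) ?_
  · exact this hr
  · apply DifferentiableOn.analyticOnNhd _ half_open
    intro z hz
    exact (gam_diff hs hz).differentiableWithinAt
  · apply DifferentiableOn.analyticOnNhd _ half_open
    intro z hz
    have hz : 0 < z.re := hz
    have z0 : z ≠ 0 := by rintro rfl; simp at hz
    apply DifferentiableAt.differentiableWithinAt
    apply DifferentiableAt.mul_const
    refine DifferentiableAt.cpow ?_ (differentiableAt_const _) ?_
    · exact (differentiableAt_const _).div differentiableAt_id z0
    · left
      rw [one_div, Complex.inv_re]
      exact div_pos hz (Complex.normSq_pos.2 z0)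
  · apply freq_of_real (show (1:ℝ) < 2 by norm_num)
    intro x hx
    exact Complex.integral_cpow_mul_exp_neg_mul_Ioi (a := (s:ℂ)) (by simpa) (by linarith [hx.1])

lemma mellin_h (D : Dat) {σ : ℝ} (hσ : |σ| = 1) {s : ℝ} (hs : 0 < s)
    (hkh : IntegrableOn (fun u : ℝ => (u:ℂ) ^ ((s:ℂ) - 1) * D.h (σ * u)) (Ioi 0)) :
    ∫ u in Ioi (0:ℝ), (u:ℂ) ^ ((s:ℂ) - 1) * D.h (σ * u) =
      ∫ x in Ioi (0:ℝ), D.g x * ((1 / (2 * π * Complex.I * (σ * x))) ^ (s:ℂ) * Complex.Gamma s) := by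
  have σ0 : σ ≠ 0 := by rintro rfl; simp at hσ
  have hi : IntegrableOn (fun x : ℝ => ‖(x:ℂ) ^ ((1 - (s:ℂ)) - 1) • (D.g x : ℂ)‖ * ‖Complex.Gamma s‖) (Ioi 0) :=
    (D.G_conv s).norm.mul_const _
  refine fub_ident D σ (fun u => (u:ℂ) ^ ((s:ℂ) - 1))
    (fun δ x => (1 / (δ + 2 * π * Complex.I * (σ * x))) ^ (s:ℂ) * Complex.Gamma s) _
    (fun x : ℝ => ‖(x:ℂ) ^ ((1 - (s:ℂ)) - 1) • (D.g x : ℂ)‖ * ‖Complex.Gamma s‖) ?_ hkh ?_ ?_ ?_ hi ?_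
  · intro δ hδ
    have h1 := integrableOn_rpow_mul_exp_neg_mul_rpow (s := s - 1) (p := 1) (b := δ) (by linarith) one_pos hδ
    have h2 : IntegrableOn (fun u : ℝ => ((u ^ (s - 1) * rexp (-δ * u ^ (1:ℝ)) : ℝ) : ℂ)) (Ioi 0) := h1.ofReal
    refine IntegrableOn.congr_fun h2 ?_ measurableSet_Ioi
    intro u hu
    have hu' : (0:ℝ) < u := hu
    simp only [Real.rpow_one]
    push_cast
    rw [Complex.ofReal_cpow hu'.le]
    push_cast
    simp
  · intro δ hδ x hx
    have := gam_int (s := s) (r := δ + 2 * π * Complex.I * (σ * x)) (by simpa) (by simpa)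
    exact this
  · intro δ hδ
    apply ContinuousOn.mul_const
    intro x hx
    apply ContinuousAt.continuousWithinAt
    have ne := base_ne δ hδ.le σ0 hx
    refine ContinuousAt.cpow ?_ continuousAt_const (inv_slit ne)
    refine ContinuousAt.div continuousAt_const (by fun_prop) ?_
    intro h; rw [h] at ne; simp at ne
  · filter_upwards [self_mem_nhdsWithin] with δ hδ x hx
    rw [← mul_assoc, norm_mul, norm_mul, norm_smul, mul_comm ‖(D.g x : ℂ)‖]
    gcongr
    rw [Complex.norm_cpow_real, Complex.norm_cpow_eq_rpow_re_of_pos hx]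
    have := base_norm δ hσ hx
    simp only [Complex.sub_re, Complex.one_re, Complex.ofReal_re]
    rw [show 1 - s - 1 = -s by ring, Real.rpow_neg hx.le, ← Real.inv_rpow hx.le, norm_div, norm_one, one_div]
    gcongr
  · intro x hx
    apply Tendsto.mul_const
    have ne := base_ne 0 le_rfl σ0 hx
    have hc : ContinuousAt (fun δ : ℝ => (1 / (δ + 2 * π * Complex.I * (σ * x)) : ℂ) ^ (s:ℂ)) 0 := by
      refine ContinuousAt.cpow ?_ continuousAt_const (inv_slit ne)
      refine ContinuousAt.div continuousAt_const (by fun_prop) ?_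
      intro h; rw [h] at ne; simp at ne
    have := hc.tendsto
    simp only [Complex.ofReal_zero, zero_add] at this
    exact this.mono_left nhdsWithin_le_nhds

lemma inv_pow_I {x : ℝ} (hx : 0 < x) (s : ℝ) : (1 / (2 * π * Complex.I * ((1:ℝ) * x)) : ℂ) ^ (s:ℂ) =
    (2 * π : ℂ) ^ (-(s:ℂ)) * (x:ℂ) ^ (-(s:ℂ)) * Complex.exp (-(π * s / 2) * Complex.I) := by
  have hp := Real.pi_pos
  have h2 : (0:ℝ) < 2 * π := by positivity
  have e : (1 / (2 * π * Complex.I * ((1:ℝ) * x)) : ℂ) = (((2 * π * x)⁻¹ : ℝ) : ℂ) * (-Complex.I) := by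
    push_cast
    rw [← Complex.inv_I]
    have hp' : (π:ℂ) ≠ 0 := by exact_mod_cast hp.ne'
    field_simp
  have hr : (0:ℝ) < (2 * π * x)⁻¹ := by positivity
  rw [e, Complex.cpow_def_of_ne_zero (mul_ne_zero (by exact_mod_cast hr.ne') (by simp)),
    Complex.log_ofReal_mul hr (by simp), Complex.log_neg_I]
  have e2 : (2 * π : ℂ) = ((2 * π : ℝ) : ℂ) := by push_cast; ring
  rw [e2, Complex.cpow_def_of_ne_zero (by exact_mod_cast h2.ne'), Complex.cpow_def_of_ne_zero (by exact_mod_cast hx.ne'),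
    ← Complex.exp_add, ← Complex.exp_add, ← Complex.ofReal_log h2.le, ← Complex.ofReal_log hx.le, Real.log_inv, Real.log_mul h2.ne' hx.ne']
  congr 1
  push_cast
  ring

lemma inv_pow_negI {x : ℝ} (hx : 0 < x) (s : ℝ) : (1 / (2 * π * Complex.I * ((-1:ℝ) * x)) : ℂ) ^ (s:ℂ) =
    (2 * π : ℂ) ^ (-(s:ℂ)) * (x:ℂ) ^ (-(s:ℂ)) * Complex.exp ((π * s / 2) * Complex.I) := by
  have hp := Real.pi_pos
  have h2 : (0:ℝ) < 2 * π := by positivity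
  have e : (1 / (2 * π * Complex.I * ((-1:ℝ) * x)) : ℂ) = (((2 * π * x)⁻¹ : ℝ) : ℂ) * (Complex.I) := by
    push_cast
    have hi : Complex.I = -(Complex.I)⁻¹ := by simp
    rw [hi]
    have hp' : (π:ℂ) ≠ 0 := by exact_mod_cast hp.ne'
    have hx' : (x:ℂ) ≠ 0 := by exact_mod_cast hx.ne'
    simp
    field_simp
  have hr : (0:ℝ) < (2 * π * x)⁻¹ := by positivity
  rw [e, Complex.cpow_def_of_ne_zero (mul_ne_zero (by exact_mod_cast hr.ne') (by simp)),
    Complex.log_ofReal_mul hr (by simp), Complex.log_I]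
  have e2 : (2 * π : ℂ) = ((2 * π : ℝ) : ℂ) := by push_cast; ring
  rw [e2, Complex.cpow_def_of_ne_zero (by exact_mod_cast h2.ne'), Complex.cpow_def_of_ne_zero (by exact_mod_cast hx.ne'),
    ← Complex.exp_add, ← Complex.exp_add, ← Complex.ofReal_log h2.le, ← Complex.ofReal_log hx.le, Real.log_inv, Real.log_mul h2.ne' hx.ne']
  congr 1
  push_cast
  ring

lemma M_eq (D : Dat) {s : ℝ} (hs : 0 < s) :
    B D.h s 0 + B D.hm s 0 = 2 * (2 * π) ^ (-(s:ℂ)) * Complex.Gamma s * Complex.cos (π * s / 2) * D.G s := by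
  have i1 : IntegrableOn (fun u : ℝ => (u:ℂ) ^ ((s:ℂ) - 1) • bf D.h 0 u) (Ioi 0) :=
    B_conv D.h (s := s) (c := 0) (Or.inl ⟨by simp, by simpa⟩)
  have i2 : IntegrableOn (fun u : ℝ => (u:ℂ) ^ ((s:ℂ) - 1) • bf D.hm 0 u) (Ioi 0) :=
    B_conv D.hm (s := s) (c := 0) (Or.inl ⟨by simp, by simpa⟩)
  have h1 := mellin_h D (σ := 1) (by simp) hs (by simpa [bf] using i1)
  have h2 := mellin_h D (σ := -1) (by simp) hs (by simpa [bf, D.hm_apply] using i2)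
  rw [B_zero_eq, B_zero_eq]
  simp only [one_mul] at h1
  simp only [neg_mul, one_mul] at h2
  simp only [D.hm_apply]
  rw [h1, h2]
  have f1 : ∫ x in Ioi (0:ℝ), D.g x * ((1 / (2 * π * Complex.I * (((1:ℝ):ℂ) * x))) ^ (s:ℂ) * Complex.Gamma s)
      = (2 * π) ^ (-(s:ℂ)) * Complex.Gamma s * Complex.exp (-(π * s / 2) * Complex.I) * D.G s := by
    unfold Dat.G mellin
    rw [← integral_const_mul]
    apply setIntegral_congr_fun measurableSet_Ioi
    intro x hx
    simp only
    rw [inv_pow_I hx, smul_eq_mul, show (1 - (s:ℂ) - 1) = -s by ring]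
    ring
  have f2 : ∫ x in Ioi (0:ℝ), D.g x * ((1 / (2 * π * Complex.I * (((-1:ℝ):ℂ) * x))) ^ (s:ℂ) * Complex.Gamma s)
      = (2 * π) ^ (-(s:ℂ)) * Complex.Gamma s * Complex.exp ((π * s / 2) * Complex.I) * D.G s := by
    unfold Dat.G mellin
    rw [← integral_const_mul]
    apply setIntegral_congr_fun measurableSet_Ioi
    intro x hx
    simp only
    rw [inv_pow_negI hx, smul_eq_mul, show (1 - (s:ℂ) - 1) = -s by ring]
    ring
  rw [f1]
  rw [show Complex.cos (π * s / 2) = (Complex.exp ((π * s / 2) * Complex.I) + Complex.exp (-(π * s / 2) * Complex.I)) / 2 from rfl]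
  rw [f2]
  ring

lemma zeta_M (D : Dat) {s : ℝ} (hs : 1 < s) :
    riemannZeta s * (B D.h s 0 + B D.hm s 0) = riemannZeta (1 - s) * D.G s := by
  rw [M_eq D (by linarith), riemannZeta_one_sub]
  · ring
  · intro n h
    have := congrArg Complex.re h
    simp at this
    have h2 : (0:ℝ) ≤ n := Nat.cast_nonneg n
    linarith
  · intro h
    have := congrArg Complex.re h
    simp at this
    linarith

end Vor

namespace Vor
open Filter Topology Set
open scoped SchwartzMap FourierTransform

lemma B_cc_bound (H : 𝓢(ℝ, ℂ)) {q : ℕ} (hq : 1 ≤ q) : ∃ C, 0 ≤ C ∧ ∀ (s : ℂ) (n : ℝ), n ≠ 0 → ‖s‖ ≤ 4 → 0 < s.re → s.re ≤ 3 →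
    ‖B H s (cc q n)‖ ≤ C / n ^ 2 := by
  obtain ⟨C, hC, h⟩ := B_decay' H
  have hq' : (0:ℝ) < q := by exact_mod_cast hq
  refine ⟨C * (q:ℝ) ^ 4, by positivity, fun s n hn h1 h2 h3 => ?_⟩
  refine (h s (n / (q:ℝ) ^ 2) (by positivity) h1 h2 h3).trans (le_of_eq ?_)
  field_simp

lemma W_bound (D : Dat) {q : ℕ} (hq : 1 ≤ q) (db : ℤ) : ∃ C, 0 ≤ C ∧ ∀ (s : ℂ) (n : ℕ), 0 < n → ‖s‖ ≤ 4 → 0 < s.re → s.re ≤ 3 →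
    ‖W D q db s n‖ ≤ C / (n:ℝ) ^ 2 := by
  obtain ⟨C1, hC1, h1⟩ := B_cc_bound D.h hq
  obtain ⟨C2, hC2, h2⟩ := B_cc_bound D.hm hq
  refine ⟨2 * (C1 + C2), by positivity, fun s n hn a b c => ?_⟩
  have hn' : (n:ℝ) ≠ 0 := by positivity
  have hn2 : -(n:ℝ) ≠ 0 := neg_ne_zero.2 hn'
  have e1 := h1 s n hn' a b c
  have e2 := h1 s (-n) hn2 a b c
  have e3 := h2 s n hn' a b c
  have e4 := h2 s (-n) hn2 a b c
  rw [neg_sq] at e2 e4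
  unfold W
  refine (norm_add_le _ _).trans ?_
  rw [norm_mul, norm_mul, e2pi_norm, e2pi_norm, one_mul, one_mul]
  have f1 := norm_add_le (B D.h s (cc q n)) (B D.hm s (cc q (-n)))
  have f2 := norm_add_le (B D.h s (cc q (-n))) (B D.hm s (cc q n))
  have : 2 * (C1 + C2) / (n:ℝ) ^ 2 = C1 / n ^ 2 + C1 / n ^ 2 + C2 / n ^ 2 + C2 / n ^ 2 := by ring
  rw [this]
  linarith

lemma pnat_sq_summable : Summable fun p : ℕ+ × ℕ+ => (1:ℝ) / (((p.1 * p.2 : ℕ+) : ℕ) : ℝ) ^ 2 := by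
  have h : Summable fun n : ℕ+ => (1:ℝ) / ((n:ℕ):ℝ) ^ 2 :=
    ((Real.summable_one_div_nat_pow (p := 2)).mpr (by norm_num)).comp_injective PNat.coe_injective
  have := h.mul_of_nonneg h (fun _ => by positivity) (fun _ => by positivity)
  refine this.congr fun p => ?_
  push_cast
  ring

lemma pow_le_one' (n : ℕ+) {s : ℂ} (hs : 0 ≤ s.re) : ‖((n:ℕ):ℂ) ^ (-s)‖ ≤ 1 := by
  rw [Complex.norm_natCast_cpow_of_pos n.pos]
  apply Real.rpow_le_one_of_one_le_of_nonpos
  · exact_mod_cast n.pos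
  · simpa

lemma term_bound {D : Dat} {q : ℕ} {db : ℤ} {C : ℝ} (h : ∀ (s : ℂ) (n : ℕ), 0 < n → ‖s‖ ≤ 4 → 0 < s.re → s.re ≤ 3 →
    ‖W D q db s n‖ ≤ C / (n:ℝ) ^ 2) (p : ℕ+ × ℕ+) {s : ℂ} (h1 : ‖s‖ ≤ 4) (h2 : 0 < s.re) (h3 : s.re ≤ 3) :
    ‖(p.1:ℂ) ^ (-s) * W D q db s (p.1 * p.2 : ℕ+)‖ ≤ C * (1 / (((p.1 * p.2 : ℕ+) : ℕ) : ℝ) ^ 2) := by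
  rw [norm_mul]
  have e1 := pow_le_one' p.1 h2.le
  have e2 := h s (p.1 * p.2 : ℕ+) (p.1 * p.2).pos h1 h2 h3
  rw [mul_one_div]
  exact (mul_le_of_le_one_left (norm_nonneg _) e1).trans e2

lemma W_summable (D : Dat) {q : ℕ} (hq : 1 ≤ q) (db : ℤ) {s : ℂ} (h1 : ‖s‖ ≤ 4) (h2 : 0 < s.re) (h3 : s.re ≤ 3) :
    Summable fun p : ℕ+ × ℕ+ => (p.1:ℂ) ^ (-s) * W D q db s (p.1 * p.2 : ℕ+) := by
  obtain ⟨C, hC, h⟩ := W_bound D hq db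
  exact Summable.of_norm_bounded (pnat_sq_summable.mul_left C) fun p => term_bound h p h1 h2 h3

def UU : Set ℂ := {z : ℂ | 0 < z.re} ∩ Metric.ball 0 3

lemma UU_open : IsOpen UU := half_open.inter Metric.isOpen_ball
lemma UU_conv : Convex ℝ UU := half_convex.inter (convex_ball 0 3)
lemma UU_mem {s : ℝ} (h0 : 0 < s) (h3 : s < 3) : (s:ℂ) ∈ UU := by
  refine ⟨by simpa, ?_⟩
  simp [abs_of_pos h0, h3]
lemma UU_norm {s : ℂ} (h : s ∈ UU) : ‖s‖ < 3 := by simpa [UU] using h.2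
lemma UU_re {s : ℂ} (h : s ∈ UU) : s.re < 3 := (Complex.re_le_norm s).trans_lt (UU_norm h)

lemma cc_re (q : ℕ) (n : ℝ) : (cc q n).re = 0 := c_re _

lemma pow_diff (n : ℕ) (hn : n ≠ 0) (s : ℂ) : DifferentiableAt ℂ (fun s : ℂ => (n:ℂ) ^ (-s)) s := by
  have : (n:ℂ) ≠ 0 := by exact_mod_cast hn
  exact DifferentiableAt.const_cpow (by fun_prop) (Or.inl this)

lemma W_diff (D : Dat) (q : ℕ) (db : ℤ) (n : ℕ) {s : ℂ} (hs : 0 < s.re) : DifferentiableAt ℂ (fun s => W D q db s n) s := by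
  unfold W
  have h (H : 𝓢(ℝ, ℂ)) (n : ℝ) : DifferentiableAt ℂ (fun s => B H s (cc q n)) s := B_diff H (cc_re q n).ge hs
  exact (((h _ _).add (h _ _)).const_mul _).add (((h _ _).add (h _ _)).const_mul _)

lemma ident_all (D : Dat) {q : ℕ} (hq : 1 ≤ q) {d db : ℤ} (hdb : (q:ℤ) ∣ d * db - 1) {s : ℂ} (hs : s ∈ UU) :
    Dsum D q d s = (q:ℂ) ^ (-s - 1) * (riemannZeta (s + 1) * D.h 0)
      + (q:ℂ) ^ (s - 1) * (riemannZeta (1 - s) * D.G s)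
      + (q:ℂ) ^ (s - 1) * ∑' p : ℕ+ × ℕ+, (p.1:ℂ) ^ (-s) * W D q db s (p.1 * p.2 : ℕ+) := by
  have hqc : (q:ℂ) ≠ 0 := by exact_mod_cast (by lia : q ≠ 0)
  have := AnalyticOnNhd.eqOn_of_preconnected_of_frequently_eq (𝕜 := ℂ)
    (f := Dsum D q d)
    (g := fun s => (q:ℂ) ^ (-s - 1) * (riemannZeta (s + 1) * D.h 0)
      + (q:ℂ) ^ (s - 1) * (riemannZeta (1 - s) * D.G s)
      + (q:ℂ) ^ (s - 1) * ∑' p : ℕ+ × ℕ+, (p.1:ℂ) ^ (-s) * W D q db s (p.1 * p.2 : ℕ+))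
    (z₀ := ((2 : ℝ) : ℂ)) (U := UU) ?_ ?_
    UU_conv.isPreconnected (UU_mem (by norm_num) (by norm_num)) ?_
  · exact this hs
  · apply DifferentiableOn.analyticOnNhd _ UU_open
    unfold Dsum
    have hs (s : ℂ) : ∑' p : ℕ+ × ℕ+, (p.1:ℂ) ^ (-s) * (e2pi (((p.1 * p.2 : ℕ+) : ℕ) * d / q) * D.g ((p.1 * p.2 : ℕ+) : ℕ))
      = ∑ p ∈ D.supp_fin.toFinset, (p.1:ℂ) ^ (-s) * (e2pi (((p.1 * p.2 : ℕ+) : ℕ) * d / q) * D.g ((p.1 * p.2 : ℕ+) : ℕ)) := by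
      apply tsum_eq_sum
      intro p hp
      have : D.g ((p.1 * p.2 : ℕ+) : ℕ) = 0 := by
        by_contra h
        exact hp (by simpa using h)
      simp only [this]; simp
    simp only [hs]
    apply DifferentiableOn.fun_sum
    intro p _ z _
    exact ((pow_diff p.1 p.1.ne_zero z).mul_const _).differentiableWithinAt
  · apply DifferentiableOn.analyticOnNhd _ UU_open
    have hp : ∀ z : ℂ, DifferentiableAt ℂ (fun s : ℂ => (q:ℂ) ^ (s - 1)) z := fun z =>
      DifferentiableAt.const_cpow (by fun_prop) (Or.inl hqc)
    refine DifferentiableOn.add (DifferentiableOn.add ?_ ?_) ?_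
    · intro z hz
      have hz0 : 0 < z.re := hz.1
      apply DifferentiableAt.differentiableWithinAt
      refine DifferentiableAt.mul (DifferentiableAt.const_cpow (by fun_prop) (Or.inl hqc)) ?_
      apply DifferentiableAt.mul_const
      refine DifferentiableAt.comp (g := riemannZeta) z (differentiableAt_riemannZeta ?_) (by fun_prop)
      intro h
      have : z = 0 := by linear_combination h
      rw [this] at hz0; simp at hz0
    · intro z hz
      have hz0 : 0 < z.re := hz.1
      apply DifferentiableAt.differentiableWithinAt
      refine DifferentiableAt.mul (hp z) (DifferentiableAt.mul ?_ (D.G_diff z))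
      refine DifferentiableAt.comp (g := riemannZeta) z (differentiableAt_riemannZeta ?_) (by fun_prop)
      intro h
      have : z = 0 := by linear_combination -h
      rw [this] at hz0; simp at hz0
    · apply DifferentiableOn.mul (fun z _ => (hp z).differentiableWithinAt)
      obtain ⟨C, hC, h⟩ := W_bound D hq db
      refine Complex.differentiableOn_tsum_of_summable_norm (pnat_sq_summable.mul_left C) ?_ UU_open ?_
      · intro p z hz
        exact ((pow_diff p.1 p.1.ne_zero z).mul (W_diff D q db _ hz.1)).differentiableWithinAt
      · intro p z hz
        exact term_bound h p ((UU_norm hz).le.trans (by norm_num)) hz.1 (UU_re hz).le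
  · apply freq_of_real (show (2:ℝ) < 3 by norm_num)
    intro x hx
    have hx0 : 0 < x := by linarith [hx.1]
    have hW := W_summable D hq db (s := x) (by rw [Complex.norm_real, Real.norm_of_nonneg hx0.le]; linarith [hx.2]) (by simpa) (by simpa using hx.2.le)
    rw [ident_gt D hq hdb hx.1 hx.2.le hW, zeta_M D (by linarith [hx.1])]

/-- limit of W -/
def W0 (D : Dat) (q : ℕ) (db : ℤ) (n : ℕ) : ℂ :=
  e2pi (-(n * db) / q) * (B0 D.h (cc q n) + B0 D.hm (cc q (-n)))
    + e2pi ((n * db) / q) * (B0 D.h (cc q (-n)) + B0 D.hm (cc q n))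

lemma cc_ne {q : ℕ} (hq : 1 ≤ q) {n : ℝ} (hn : n ≠ 0) : cc q n ≠ 0 := by
  have hq' : (0:ℝ) < q := by exact_mod_cast hq
  exact c_ne (by positivity)

lemma W_tendsto (D : Dat) {q : ℕ} (hq : 1 ≤ q) (db : ℤ) {n : ℕ} (hn : 0 < n) :
    Tendsto (fun s : ℝ => W D q db s n) (𝓝[>] 0) (𝓝 (W0 D q db n)) := by
  have hn' : (n:ℝ) ≠ 0 := by positivity
  have hn2 : -(n:ℝ) ≠ 0 := neg_ne_zero.2 hn'
  have h (H : 𝓢(ℝ, ℂ)) (x : ℝ) (hx : x ≠ 0) : Tendsto (fun s : ℝ => B H s (cc q x)) (𝓝[>] 0) (𝓝 (B0 H (cc q x))) :=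
    B_tendsto H (cc_re q x).ge (cc_ne hq hx)
  unfold W W0
  exact (((h _ _ hn').add (h _ _ hn2)).const_mul _).add (((h _ _ hn2).add (h _ _ hn')).const_mul _)

lemma sum_tendsto (D : Dat) {q : ℕ} (hq : 1 ≤ q) (db : ℤ) :
    Tendsto (fun s : ℝ => ∑' p : ℕ+ × ℕ+, (p.1:ℂ) ^ (-(s:ℂ)) * W D q db s (p.1 * p.2 : ℕ+)) (𝓝[>] 0)
      (𝓝 (∑' p : ℕ+ × ℕ+, W0 D q db (p.1 * p.2 : ℕ+))) := by
  obtain ⟨C, hC, h⟩ := W_bound D hq db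
  refine tendsto_tsum_of_dominated_convergence (pnat_sq_summable.mul_left C) ?_ ?_
  · intro p
    have h1 : Tendsto (fun s : ℝ => (p.1:ℂ) ^ (-(s:ℂ))) (𝓝[>] 0) (𝓝 ((p.1:ℂ) ^ (-(0:ℂ)))) :=
      (pow_diff p.1 p.1.ne_zero 0).continuousAt.tendsto.comp ofReal_tendsto
    have := h1.mul (W_tendsto D hq db (p.1 * p.2).pos)
    simpa using this
  · filter_upwards [Ioo_mem_nhdsGT (show (0:ℝ) < 1 by norm_num)] with s hs p
    refine term_bound h p ?_ (by simpa using hs.1) (by simpa using hs.2.le.trans (by norm_num))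
    rw [Complex.norm_real, Real.norm_of_nonneg hs.1.le]; linarith [hs.2]

lemma Dsum_tendsto (D : Dat) (q : ℕ) (d : ℤ) :
    Tendsto (fun s : ℝ => Dsum D q d s) (𝓝[>] 0) (𝓝 (∑' p : ℕ+ × ℕ+, e2pi (((p.1 * p.2 : ℕ+) : ℕ) * d / q) * D.g ((p.1 * p.2 : ℕ+) : ℕ))) := by
  have hb := (Dsum_summable D q d 0).norm
  simp only [neg_zero, Complex.cpow_zero, one_mul] at hb
  unfold Dsum
  refine tendsto_tsum_of_dominated_convergence hb ?_ ?_
  · intro p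
    have h1 : Tendsto (fun s : ℝ => (p.1:ℂ) ^ (-(s:ℂ))) (𝓝[>] 0) (𝓝 ((p.1:ℂ) ^ (-(0:ℂ)))) :=
      (pow_diff p.1 p.1.ne_zero 0).continuousAt.tendsto.comp ofReal_tendsto
    simpa using h1.mul_const _
  · filter_upwards [self_mem_nhdsWithin] with s hs p
    rw [norm_mul]
    exact mul_le_of_le_one_left (norm_nonneg _) (pow_le_one' _ (by simpa using le_of_lt hs))

end Vor

namespace Vor
open Filter Topology Set
open scoped SchwartzMap FourierTransform

lemma G_zero (D : Dat) : D.G 0 = ((∫ x in Ioi (0:ℝ), D.g x : ℝ) : ℂ) := by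
  unfold Dat.G mellin
  rw [← integral_complex_ofReal]
  simp

lemma h_zero (D : Dat) : D.h 0 = ((∫ x in Ioi (0:ℝ), D.g x : ℝ) : ℂ) := by
  rw [D.h_apply', ← integral_complex_ofReal]
  simp

lemma G_deriv (D : Dat) : IntegrableOn (fun x => Real.log x * D.g x) (Ioi 0) ∧
    HasDerivAt D.G (-((∫ x in Ioi (0:ℝ), Real.log x * D.g x : ℝ) : ℂ)) 0 := by
  have h := mellin_hasDerivAt_of_isBigO_rpow (s := 1) D.loc (D.otop 2) (by norm_num) (D.ozero 0) (by norm_num)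
  constructor
  · have h1 : IntegrableOn (fun t : ℝ => (t:ℂ) ^ ((1:ℂ) - 1) • (Real.log t • (D.g t : ℂ))) (Ioi 0) := h.1
    have h2 := h1.re
    refine Integrable.congr h2 ?_
    filter_upwards with t
    simp
  · have h2 := h.2
    rw [show (1:ℂ) = 1 - 0 by simp] at h2
    have h3 := HasDerivAt.comp (0:ℂ) h2 ((hasDerivAt_id (0:ℂ)).const_sub 1)
    refine h3.congr_deriv ?_
    unfold mellin
    rw [← integral_complex_ofReal]
    simp

lemma A_deriv {q : ℕ} (hq : 1 ≤ q) (a : ℂ) : HasDerivAt (fun s : ℂ => (q:ℂ) ^ (a * s - 1)) (a * Real.log q / q) 0 := by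
  have hqc : (q:ℂ) ≠ 0 := by exact_mod_cast (by lia : q ≠ 0)
  have h1 : HasDerivAt (fun s : ℂ => a * s - 1) a 0 := by
    simpa using ((hasDerivAt_id (0:ℂ)).const_mul a).sub_const 1
  refine (h1.const_cpow (Or.inl hqc)).congr_deriv ?_
  rw [Complex.natCast_log]
  simp [Complex.cpow_neg]
  ring

lemma zeta_lim_pos : Tendsto (fun s : ℝ => riemannZeta (s + 1) - 1 / (s:ℂ)) (𝓝[>] 0) (𝓝 Real.eulerMascheroniConstant) := by
  have h : Tendsto (fun s : ℝ => (s:ℂ) + 1) (𝓝[>] 0) (𝓝[≠] 1) := by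
    apply tendsto_nhdsWithin_of_tendsto_nhds_of_eventually_within
    · have := ofReal_tendsto.add_const 1
      simpa using this
    · filter_upwards [self_mem_nhdsWithin] with s hs
      have : s ≠ 0 := ne_of_gt hs
      simpa
  have := tendsto_riemannZeta_sub_one_div.comp h
  refine this.congr fun s => ?_
  simp

lemma zeta_lim_neg : Tendsto (fun s : ℝ => riemannZeta (1 - s) + 1 / (s:ℂ)) (𝓝[>] 0) (𝓝 Real.eulerMascheroniConstant) := by
  have h : Tendsto (fun s : ℝ => 1 - (s:ℂ)) (𝓝[>] 0) (𝓝[≠] 1) := by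
    apply tendsto_nhdsWithin_of_tendsto_nhds_of_eventually_within
    · have := ofReal_tendsto.const_sub 1
      simpa using this
    · filter_upwards [self_mem_nhdsWithin] with s hs
      have : s ≠ 0 := ne_of_gt hs
      simpa
  have := tendsto_riemannZeta_sub_one_div.comp h
  refine this.congr fun s => ?_
  simp [div_neg]

lemma main_tendsto (D : Dat) {q : ℕ} (hq : 1 ≤ q) :
    Tendsto (fun s : ℝ => (q:ℂ) ^ (-(s:ℂ) - 1) * (riemannZeta (s + 1) * D.h 0)
      + (q:ℂ) ^ ((s:ℂ) - 1) * (riemannZeta (1 - s) * D.G s)) (𝓝[>] 0)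
      (𝓝 ((1 / (q : ℂ)) * (((∫ x in Set.Ioi (0:ℝ),
          (Real.log x + 2 * Real.eulerMascheroniConstant - 2 * Real.log q) * D.g x) : ℝ) : ℂ))) := by
  have hqc : (q:ℂ) ≠ 0 := by exact_mod_cast (by lia : q ≠ 0)
  set I : ℂ := ((∫ x in Ioi (0:ℝ), D.g x : ℝ) : ℂ) with hI
  have dA : HasDerivAt (fun s : ℂ => (q:ℂ) ^ (-s - 1) * I) ((-1) * Real.log q / q * I) 0 := by
    simpa using (A_deriv hq (-1)).mul_const I
  have dB := (A_deriv hq 1).mul (G_deriv D).2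
  have dd' := dA.sub dB
  have l3 := dd'.tendsto_slope_zero.comp (f := fun s : ℝ => (s:ℂ)) (x := 𝓝[>] 0) (y := 𝓝[≠] 0) (by
    apply tendsto_nhdsWithin_of_tendsto_nhds_of_eventually_within _ ofReal_tendsto
    filter_upwards [self_mem_nhdsWithin] with s hs
    have : s ≠ 0 := ne_of_gt hs
    simpa)
  have l1 := (dA.continuousAt.tendsto.comp ofReal_tendsto).mul zeta_lim_pos
  have l2 := (dB.continuousAt.tendsto.comp ofReal_tendsto).mul zeta_lim_neg
  have l := (l1.add l2).add l3
  have eint : (∫ x in Set.Ioi (0:ℝ), (Real.log x + 2 * Real.eulerMascheroniConstant - 2 * Real.log q) * D.g x)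
     = (∫ x in Set.Ioi (0:ℝ), Real.log x * D.g x) + (2 * Real.eulerMascheroniConstant - 2 * Real.log q) * ∫ x in Set.Ioi (0:ℝ), D.g x := by
    rw [← integral_const_mul, ← integral_add (G_deriv D).1 (D.integrable.integrableOn.const_mul _)]
    congr 1
    ext x
    ring
  rw [eint]
  have hval := G_zero D
  rw [← hI] at hval
  refine (l.congr' ?_).trans_eq ?_
  · filter_upwards [self_mem_nhdsWithin] with s hs
    have s0 : (s:ℂ) ≠ 0 := by exact_mod_cast ne_of_gt hs
    simp only [Function.comp, Pi.mul_apply, Pi.sub_apply, smul_eq_mul, zero_add, h_zero, ← hI, hval]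
    simp only [mul_zero, neg_zero, one_mul]
    field_simp
    ring
  · congr 1
    simp only [Pi.mul_apply, hval]
    simp [Complex.cpow_neg]
    rw [← hI]
    field_simp
    ring

theorem ident_zero (D : Dat) {q : ℕ} (hq : 1 ≤ q) {d db : ℤ} (hdb : (q:ℤ) ∣ d * db - 1) :
    ∑' p : ℕ+ × ℕ+, e2pi (((p.1 * p.2 : ℕ+) : ℕ) * d / q) * D.g ((p.1 * p.2 : ℕ+) : ℕ)
     = (1 / (q : ℂ)) * (((∫ x in Set.Ioi (0:ℝ),
          (Real.log x + 2 * Real.eulerMascheroniConstant - 2 * Real.log q) * D.g x) : ℝ) : ℂ)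
       + (1 / (q : ℂ)) * ∑' p : ℕ+ × ℕ+, W0 D q db (p.1 * p.2 : ℕ+) := by
  have hqc : (q:ℂ) ≠ 0 := by exact_mod_cast (by lia : q ≠ 0)
  have h1 : Tendsto (fun s : ℝ => (q:ℂ) ^ ((s:ℂ) - 1)) (𝓝[>] 0) (𝓝 (1 / (q:ℂ))) := by
    have := (A_deriv hq 1).continuousAt.tendsto.comp ofReal_tendsto
    simpa [Function.comp_def, Complex.cpow_neg] using this
  have h2 := (main_tendsto D hq).add (h1.mul (sum_tendsto D hq db))
  refine tendsto_nhds_unique (Dsum_tendsto D q d) (h2.congr' ?_)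
  filter_upwards [Ioo_mem_nhdsGT (show (0:ℝ) < 1 by norm_num)] with s hs
  exact (ident_all D hq hdb (UU_mem hs.1 (hs.2.trans (by norm_num)))).symm

end Vor

namespace Vor
open Filter Topology Set
open scoped SchwartzMap FourierTransform

lemma S_cont : Continuous fun p : ℂ × ℂ => S p.1 p.2 := by
  unfold S
  have h1 := P_cont
  have h2 := Q_cont
  fun_prop

lemma S_contAt {f g : ℝ → ℂ} {x : ℝ} (hf : ContinuousAt f x) (hg : ContinuousAt g x) : ContinuousAt (fun x => S (f x) (g x)) x :=
  S_cont.continuousAt.comp₂ hf hg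

lemma S_bound (R : ℝ) : ∃ M, 0 ≤ M ∧ ∀ L w : ℂ, ‖w‖ ≤ R → ‖S L w‖ ≤ M * (1 + ‖L‖) := by
  obtain ⟨C1, h1⟩ := (isCompact_closedBall (0:ℂ) R).exists_bound_of_continuousOn P_cont.continuousOn
  obtain ⟨C2, h2⟩ := (isCompact_closedBall (0:ℂ) R).exists_bound_of_continuousOn Q_cont.continuousOn
  have hγ : (0:ℝ) ≤ Real.eulerMascheroniConstant := by
    have := Real.one_half_lt_eulerMascheroniConstant; linarith
  set γ := Real.eulerMascheroniConstant with hγd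
  refine ⟨(1 + 2 * γ) * |C1| + 2 * |C2|, by positivity, fun L w hw => ?_⟩
  have hw' : w ∈ Metric.closedBall (0:ℂ) R := by simpa using hw
  have e1 := (h1 w hw').trans (le_abs_self C1)
  have e2 := (h2 w hw').trans (le_abs_self C2)
  unfold S
  refine (norm_add_le _ _).trans ?_
  rw [norm_mul, norm_mul, norm_neg]
  have e3 : ‖L + 2 * (γ:ℂ)‖ ≤ ‖L‖ + 2 * γ := by
    refine (norm_add_le _ _).trans ?_
    rw [norm_mul, Complex.norm_real, Real.norm_of_nonneg hγ]; simp
  have e4 : ‖(2:ℂ)‖ = 2 := by simp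
  rw [e4]
  have hL := norm_nonneg L
  have f1 : ‖L + 2 * (γ:ℂ)‖ * ‖P w‖ ≤ (‖L‖ + 2 * γ) * |C1| := mul_le_mul e3 e1 (norm_nonneg _) (by positivity)
  have g1 : 0 ≤ γ * (|C1| * ‖L‖) := by positivity
  have g2 : 0 ≤ |C2| * ‖L‖ := by positivity
  have g3 := abs_nonneg C1
  nlinarith

lemma log_bound {a : ℂ} {x A : ℝ} (hx : 0 < x) (h1 : x ≤ ‖a‖) (h2 : ‖a‖ ≤ A) : ‖Complex.log a‖ ≤ |Real.log x| + |Real.log A| + π := by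
  have e : Complex.log a = (Real.log ‖a‖ : ℂ) + a.arg * Complex.I := rfl
  rw [e]
  refine (norm_add_le _ _).trans ?_
  have h3 := Real.log_le_log hx h1
  have h4 := Real.log_le_log (hx.trans_le h1) h2
  have h5 := Complex.abs_arg_le_pi a
  have h6 : |Real.log ‖a‖| ≤ |Real.log x| + |Real.log A| := by
    rw [abs_le]
    have a1 := neg_abs_le (Real.log x)
    have a2 := le_abs_self (Real.log A)
    have a3 := abs_nonneg (Real.log x)
    have a4 := abs_nonneg (Real.log A)
    constructor <;> linarith
  rw [norm_mul, Complex.norm_I, Complex.norm_real, Complex.norm_real, mul_one, Real.norm_eq_abs, Real.norm_eq_abs]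
  linarith

lemma gS_bound (D : Dat) (Rc Kc : ℝ) : ∃ M K : ℝ, ∀ (a c : ℂ) (x : ℝ), 0 < x → x ≤ ‖a‖ → ‖a‖ ≤ 1 + 2 * π * x → ‖c‖ ≤ Rc →
    ‖Complex.log c‖ ≤ Kc → ‖(D.g x : ℂ) * S (Complex.log a + Complex.log c) (a * c)‖ ≤ M * (K * |D.g x| + |Real.log x * D.g x|) := by
  obtain ⟨X, hX⟩ := D.cs.isCompact.bddAbove
  obtain ⟨M, hM, hS⟩ := S_bound ((1 + 2 * π * X) * Rc)
  refine ⟨M, 1 + (|Real.log (1 + 2 * π * X)| + π + Kc), fun a c x hx h1 h2 h3 h4 => ?_⟩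
  by_cases hg : D.g x = 0
  · rw [hg]; simp
  have hxX : x ≤ X := hX (subset_tsupport _ hg)
  have hA : ‖a‖ ≤ 1 + 2 * π * X := h2.trans (by gcongr)
  have hw : ‖a * c‖ ≤ (1 + 2 * π * X) * Rc := by
    rw [norm_mul]
    exact mul_le_mul hA h3 (norm_nonneg _) ((norm_nonneg _).trans hA)
  have e1 := hS (Complex.log a + Complex.log c) (a * c) hw
  have e2 := log_bound hx h1 hA
  have e3 := norm_add_le (Complex.log a) (Complex.log c)
  rw [norm_mul, Complex.norm_real, Real.norm_eq_abs, abs_mul]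
  calc |D.g x| * ‖S (Complex.log a + Complex.log c) (a * c)‖ ≤ |D.g x| * (M * (1 + (|Real.log x| + |Real.log (1 + 2 * π * X)| + π + Kc))) := by
        gcongr
        refine e1.trans ?_
        gcongr
        linarith
    _ = _ := by ring

lemma bd_int (D : Dat) (M K : ℝ) : IntegrableOn (fun x => M * (K * |D.g x| + |Real.log x * D.g x|)) (Ioi 0) :=
  (((D.integrable.abs.integrableOn).const_mul K).add (G_deriv D).1.abs).const_mul M

lemma base_norm' {δ : ℝ} (h0 : 0 ≤ δ) (h1 : δ ≤ 1) {σ x : ℝ} (hσ : |σ| = 1) (hx : 0 < x) :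
    ‖(δ + 2 * π * Complex.I * (σ * x) : ℂ)‖ ≤ 1 + 2 * π * x := by
  refine (norm_add_le _ _).trans ?_
  have := c_norm (σ * x)
  push_cast at this
  rw [this, Complex.norm_real, Real.norm_of_nonneg h0, abs_mul, hσ, abs_of_pos hx, one_mul]
  linarith

lemma slit_im {z : ℂ} (hz : z.im ≠ 0) : z ∈ Complex.slitPlane := Or.inr hz

lemma B_int (D : Dat) {σ : ℝ} (hσ : |σ| = 1) (H : 𝓢(ℝ, ℂ)) (hH : ∀ u, H u = D.h (σ * u)) {c : ℂ} (hc : 0 < c.re) :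
    B H 0 c = ∫ x in Ioi (0:ℝ), D.g x * S (Complex.log (2 * π * Complex.I * (σ * x)) + Complex.log c) (2 * π * Complex.I * (σ * x) * c) := by
  have σ0 : σ ≠ 0 := by rintro rfl; simp at hσ
  have hconv : IntegrableOn (fun u : ℝ => (u:ℂ) ^ ((0:ℂ) - 1) • bf H c u) (Ioi 0) :=
    B_conv H (s := 0) (c := c) (Or.inr ⟨hc, by simp⟩)
  have ek (u : ℝ) : (u:ℂ) ^ ((0:ℂ) - 1) • bf H c u = (u:ℂ) ^ (-1:ℤ) * Complex.exp (-c / u) * D.h (σ * u) := by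
    unfold bf
    rw [hH, zero_sub, Complex.cpow_neg_one, zpow_neg_one, smul_eq_mul]
    ring
  simp only [ek] at hconv
  have e0 : B H 0 c = ∫ u in Ioi (0:ℝ), (u:ℂ) ^ (-1:ℤ) * Complex.exp (-c / u) * D.h (σ * u) := by
    unfold B mellin
    simp only [ek]
  rw [e0]
  obtain ⟨M, K, hMK⟩ := gS_bound D ‖c‖ ‖Complex.log c‖
  have comb (a : ℂ) (u : ℝ) : (u:ℂ) ^ (-1:ℤ) * Complex.exp (-c / u) * Complex.exp (-(a * u)) =
      (u:ℂ) ^ (-1:ℤ) * Complex.exp (-(a * u) - c / u) := by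
    rw [mul_assoc, ← Complex.exp_add]
    congr 2
    ring
  refine fub_ident D σ (fun u => (u:ℂ) ^ (-1:ℤ) * Complex.exp (-c / u))
    (fun δ x => S (Complex.log (δ + 2 * π * Complex.I * (σ * x)) + Complex.log c) ((δ + 2 * π * Complex.I * (σ * x)) * c)) _
    (fun x => M * (K * |D.g x| + |Real.log x * D.g x|)) ?_ hconv ?_ ?_ ?_ (bd_int D M K) ?_
  · intro δ hδ
    have := In_int (-1) (a := δ) (b := c) (by simpa) hc
    simpa only [comb] using this
  · intro δ hδ x hx
    simp only [comb]
    exact F_eq (a := δ + 2 * π * Complex.I * (σ * x)) (by simpa) hc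
  · intro δ hδ
    intro x hx
    have ne := base_ne δ hδ.le σ0 hx
    apply ContinuousAt.continuousWithinAt
    have h1 : ContinuousAt (fun x : ℝ => (δ + 2 * π * Complex.I * (σ * x) : ℂ)) x := by fun_prop
    have h2 : ContinuousAt (fun x : ℝ => Complex.log (δ + 2 * π * Complex.I * (σ * x) : ℂ) + Complex.log c) x :=
      (h1.clog (slit_im ne)).add continuousAt_const
    exact S_contAt h2 (h1.mul continuousAt_const)
  · filter_upwards [Ioo_mem_nhdsGT (show (0:ℝ) < 1 by norm_num)] with δ hδ x hx
    exact hMK _ c x hx (base_norm δ hσ hx) (base_norm' hδ.1.le hδ.2.le hσ hx) le_rfl le_rfl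
  · intro x hx
    have ne := base_ne 0 le_rfl σ0 hx
    have h1 : ContinuousAt (fun δ : ℝ => (δ + 2 * π * Complex.I * (σ * x) : ℂ)) 0 := by fun_prop
    have h2 : ContinuousAt (fun δ : ℝ => Complex.log (δ + 2 * π * Complex.I * (σ * x) : ℂ) + Complex.log c) 0 :=
      (h1.clog (slit_im ne)).add continuousAt_const
    have := (S_contAt h2 (h1.mul (continuousAt_const (y := c)))).tendsto
    simp only [Pi.mul_apply, Complex.ofReal_zero, zero_add] at this
    exact this.mono_left nhdsWithin_le_nhds

lemma B0_int (D : Dat) {σ : ℝ} (hσ : |σ| = 1) (H : 𝓢(ℝ, ℂ)) (hH : ∀ u, H u = D.h (σ * u)) {ν : ℝ} (hν : ν ≠ 0) :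
    B0 H (2 * π * Complex.I * ν) = ∫ x in Ioi (0:ℝ), D.g x * S (Complex.log (2 * π * Complex.I * (σ * x)) + Complex.log (2 * π * Complex.I * ν)) (2 * π * Complex.I * (σ * x) * (2 * π * Complex.I * ν)) := by
  have σ0 : σ ≠ 0 := by rintro rfl; simp at hσ
  have him : (2 * π * Complex.I * ν : ℂ).im ≠ 0 := by
    simp [hν, Real.pi_ne_zero]
  have h1 := B0_cont H (c := 2 * π * Complex.I * ν) (c_re ν).ge (c_ne hν)
  refine tendsto_nhds_unique h1 ?_
  have h2 : Tendsto (fun ε : ℝ => ∫ x in Ioi (0:ℝ), (D.g x : ℂ) * S (Complex.log (2 * π * Complex.I * (σ * x)) + Complex.log (ε + 2 * π * Complex.I * ν)) (2 * π * Complex.I * (σ * x) * (ε + 2 * π * Complex.I * ν))) (𝓝[>] 0)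
     (𝓝 (∫ x in Ioi (0:ℝ), D.g x * S (Complex.log (2 * π * Complex.I * (σ * x)) + Complex.log (2 * π * Complex.I * ν)) (2 * π * Complex.I * (σ * x) * (2 * π * Complex.I * ν)))) := by
    have c1 : ContinuousAt (fun ε : ℝ => (ε + 2 * π * Complex.I * ν : ℂ)) 0 := by fun_prop
    have c2 : ContinuousAt (fun ε : ℝ => Complex.log (ε + 2 * π * Complex.I * ν : ℂ)) 0 :=
      c1.clog (slit_im (by simpa using him))
    have t2 : ∀ᶠ ε : ℝ in 𝓝[>] 0, ‖Complex.log (ε + 2 * π * Complex.I * ν : ℂ)‖ < ‖Complex.log (((0:ℝ):ℂ) + 2 * π * Complex.I * ν : ℂ)‖ + 1 :=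
      (c2.norm.tendsto.mono_left nhdsWithin_le_nhds).eventually (gt_mem_nhds (by linarith))
    have t1 : ∀ᶠ ε : ℝ in 𝓝[>] 0, ‖(ε + 2 * π * Complex.I * ν : ℂ)‖ < ‖(((0:ℝ):ℂ) + 2 * π * Complex.I * ν : ℂ)‖ + 1 :=
      (c1.norm.tendsto.mono_left nhdsWithin_le_nhds).eventually (gt_mem_nhds (by linarith))
    obtain ⟨M, K, hMK⟩ := gS_bound D (‖(((0:ℝ):ℂ) + 2 * π * Complex.I * ν : ℂ)‖ + 1) (‖Complex.log (((0:ℝ):ℂ) + 2 * π * Complex.I * ν : ℂ)‖ + 1)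
    apply tendsto_integral_filter_of_dominated_convergence (fun x => M * (K * |D.g x| + |Real.log x * D.g x|))
    · filter_upwards with ε
      apply AEStronglyMeasurable.mul
      · exact (Complex.continuous_ofReal.comp D.cont).aestronglyMeasurable
      · apply ContinuousOn.aestronglyMeasurable _ measurableSet_Ioi
        intro x hx
        have ne := base_ne 0 le_rfl σ0 hx
        simp only [Complex.ofReal_zero, zero_add] at ne
        apply ContinuousAt.continuousWithinAt
        have h1 : ContinuousAt (fun x : ℝ => (2 * π * Complex.I * (σ * x) : ℂ)) x := by fun_prop
        have h2 : ContinuousAt (fun x : ℝ => Complex.log (2 * π * Complex.I * (σ * x) : ℂ) + Complex.log (ε + 2 * π * Complex.I * ν)) x :=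
          (h1.clog (slit_im ne)).add continuousAt_const
        exact S_contAt h2 (h1.mul continuousAt_const)
    · filter_upwards [t1, t2] with ε e1 e2
      filter_upwards [ae_restrict_mem measurableSet_Ioi] with x hx
      have b1 := base_norm 0 hσ hx
      have b2 := base_norm' le_rfl zero_le_one hσ hx
      simp only [Complex.ofReal_zero, zero_add] at b1 b2
      exact hMK _ _ x hx b1 b2 e1.le e2.le
    · exact bd_int D M K
    · filter_upwards [ae_restrict_mem measurableSet_Ioi] with x hx
      apply Tendsto.const_mul
      have h2 : ContinuousAt (fun ε : ℝ => Complex.log (2 * π * Complex.I * (σ * x) : ℂ) + Complex.log (ε + 2 * π * Complex.I * ν)) 0 :=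
          continuousAt_const.add c2
      have := (S_contAt h2 ((continuousAt_const (y := (2 * π * Complex.I * (σ * x) : ℂ))).mul c1)).tendsto
      simp only [Pi.mul_apply, Complex.ofReal_zero, zero_add] at this
      exact this.mono_left nhdsWithin_le_nhds
  refine h2.congr' ?_
  filter_upwards [self_mem_nhdsWithin] with ε hε
  rw [B_int D hσ H hH]
  have : (ε + 2 * π * Complex.I * ν : ℂ).re = ε := by simp
  rw [this]; exact hε

end Vor

namespace Vor
open Filter Topology Set
open scoped SchwartzMap FourierTransform

lemma Hk_zero : Hk 0 = 0 := by simp [Hk]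

lemma J0_eq (z : ℝ) : (besselJ0 z : ℂ) = P (((-(z / 2) ^ 2 : ℝ)) : ℂ) := by
  unfold besselJ0 P
  rw [Complex.ofReal_tsum]
  congr 1; ext k
  unfold cP
  rw [← Complex.ofReal_pow, ← Complex.ofReal_mul, neg_pow ((z / 2) ^ 2) k, ← pow_mul]
  congr 1; ring

lemma I0_eq (z : ℝ) : (besselI0 z : ℂ) = P ((((z / 2) ^ 2 : ℝ)) : ℂ) := by
  unfold besselI0 P
  rw [Complex.ofReal_tsum]
  congr 1; ext k
  unfold cP
  rw [← Complex.ofReal_pow, ← Complex.ofReal_mul, ← pow_mul]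
  congr 1; ring

lemma Q_succ (w : ℂ) : Q w = ∑' k, cQ (k + 1) * w ^ (k + 1) := by
  unfold Q
  rw [(ps_summable cQ cQ_le w).tsum_eq_zero_add]
  simp [cQ, Hk_zero]

lemma Ysum_eq (z : ℝ) : ((∑' k : ℕ, (-1)^k * Hk (k+1) * (z/2)^(2*(k+1)) / ((Nat.factorial (k+1) : ℝ))^2 : ℝ) : ℂ)
    = -Q (((-(z / 2) ^ 2 : ℝ)) : ℂ) := by
  rw [Q_succ, Complex.ofReal_tsum, ← tsum_neg]
  congr 1; ext k
  unfold cQ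
  rw [← Complex.ofReal_pow, ← Complex.ofReal_mul, ← Complex.ofReal_neg, neg_pow ((z / 2) ^ 2) (k + 1), ← pow_mul]
  congr 1; ring

lemma Ksum_eq (z : ℝ) : ((∑' k : ℕ, Hk (k+1) * (z/2)^(2*(k+1)) / ((Nat.factorial (k+1) : ℝ))^2 : ℝ) : ℂ)
    = Q ((((z / 2) ^ 2 : ℝ)) : ℂ) := by
  rw [Q_succ, Complex.ofReal_tsum]
  congr 1; ext k
  unfold cQ
  rw [← Complex.ofReal_pow, ← Complex.ofReal_mul, ← pow_mul]
  congr 1; ring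

lemma Y_rel {z : ℝ} :
    S (((2 * Real.log (z / 2) : ℝ) : ℂ) + π * Complex.I) ((-(z / 2) ^ 2 : ℝ) : ℂ)
      + S (((2 * Real.log (z / 2) : ℝ) : ℂ) - π * Complex.I) ((-(z / 2) ^ 2 : ℝ) : ℂ) = ((-(2 * π) * besselY0 z : ℝ) : ℂ) := by
  have hp : (π:ℂ) ≠ 0 := by exact_mod_cast Real.pi_ne_zero
  unfold S besselY0
  simp only [Complex.ofReal_mul, Complex.ofReal_add, J0_eq, Ysum_eq]
  push_cast
  field_simp
  ring

lemma K_rel {z : ℝ} :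
    S ((2 * Real.log (z / 2) : ℝ) : ℂ) (((z / 2) ^ 2 : ℝ) : ℂ)
      + S ((2 * Real.log (z / 2) : ℝ) : ℂ) (((z / 2) ^ 2 : ℝ) : ℂ) = ((4 * besselK0 z : ℝ) : ℂ) := by
  unfold S besselK0
  simp only [Complex.ofReal_mul, Complex.ofReal_add, I0_eq, Ksum_eq]
  push_cast
  ring

lemma logI {y : ℝ} (hy : 0 < y) : Complex.log (2 * π * Complex.I * (y:ℂ)) = ((Real.log (2 * π * y) : ℝ) : ℂ) + π / 2 * Complex.I := by
  have h : 0 < 2 * π * y := by have := Real.pi_pos; positivity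
  rw [show 2 * π * Complex.I * (y:ℂ) = ((2 * π * y : ℝ) : ℂ) * Complex.I by push_cast; ring,
    Complex.log_ofReal_mul h (by simp), Complex.log_I]

lemma logNI {y : ℝ} (hy : 0 < y) : Complex.log (2 * π * Complex.I * ((-y : ℝ):ℂ)) = ((Real.log (2 * π * y) : ℝ) : ℂ) - π / 2 * Complex.I := by
  have h : 0 < 2 * π * y := by have := Real.pi_pos; positivity
  rw [show 2 * π * Complex.I * ((-y : ℝ):ℂ) = ((2 * π * y : ℝ) : ℂ) * (-Complex.I) by push_cast; ring,
    Complex.log_ofReal_mul h (by simp), Complex.log_neg_I]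
  ring

lemma S_int (D : Dat) {σ : ℝ} (hσ : |σ| = 1) (c : ℂ) : IntegrableOn (fun x : ℝ =>
    (D.g x : ℂ) * S (Complex.log (2 * π * Complex.I * (σ * x)) + Complex.log c) (2 * π * Complex.I * (σ * x) * c)) (Ioi 0) := by
  have σ0 : σ ≠ 0 := by rintro rfl; simp at hσ
  obtain ⟨M, K, hMK⟩ := gS_bound D ‖c‖ ‖Complex.log c‖
  refine Integrable.mono' (bd_int D M K) ?_ ?_
  · apply AEStronglyMeasurable.mul
    · exact (Complex.continuous_ofReal.comp D.cont).aestronglyMeasurable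
    · apply ContinuousOn.aestronglyMeasurable _ measurableSet_Ioi
      intro x hx
      have ne := base_ne 0 le_rfl σ0 hx
      simp only [Complex.ofReal_zero, zero_add] at ne
      apply ContinuousAt.continuousWithinAt
      have h1 : ContinuousAt (fun x : ℝ => (2 * π * Complex.I * (σ * x) : ℂ)) x := by fun_prop
      have h2 : ContinuousAt (fun x : ℝ => Complex.log (2 * π * Complex.I * (σ * x) : ℂ) + Complex.log c) x :=
        (h1.clog (slit_im ne)).add continuousAt_const
      exact S_contAt h2 (h1.mul continuousAt_const)
  · filter_upwards [ae_restrict_mem measurableSet_Ioi] with x hx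
    have b1 := base_norm 0 hσ hx
    have b2 := base_norm' le_rfl zero_le_one hσ hx
    simp only [Complex.ofReal_zero, zero_add] at b1 b2
    exact hMK _ _ x hx b1 b2 le_rfl le_rfl

lemma z_rel {q n : ℕ} (hq : 1 ≤ q) (hn : 0 < n) {x : ℝ} (hx : 0 < x) :
    (4 * π * √(n * x) / q / 2) ^ 2 = (2 * π * x) * (2 * π * (n / (q:ℝ) ^ 2)) ∧
    2 * Real.log (4 * π * √(n * x) / q / 2) = Real.log (2 * π * x) + Real.log (2 * π * (n / (q:ℝ) ^ 2)) := by
  have hq' : (0:ℝ) < q := by exact_mod_cast hq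
  have hn' : (0:ℝ) < n := by exact_mod_cast hn
  have hp := Real.pi_pos
  have e : (4 * π * √(n * x) / q / 2) ^ 2 = (2 * π * x) * (2 * π * (n / (q:ℝ) ^ 2)) := by
    rw [div_pow, div_pow, mul_pow, Real.sq_sqrt (by positivity)]
    field_simp
    ring
  refine ⟨e, ?_⟩
  rw [← Real.log_mul (by positivity) (by positivity), ← e, Real.log_pow]
  norm_num

lemma Y_comb (D : Dat) {q n : ℕ} (hq : 1 ≤ q) (hn : 0 < n) : B0 D.h (cc q n) + B0 D.hm (cc q (-n)) =
    ((-(2 * π) * ∫ x in Ioi (0:ℝ), D.g x * besselY0 (4 * π * √(n * x) / q) : ℝ) : ℂ) := by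
  have hq' : (0:ℝ) < q := by exact_mod_cast hq
  have hn' : (0:ℝ) < n := by exact_mod_cast hn
  have hν : 0 < (n:ℝ) / (q:ℝ) ^ 2 := by positivity
  have hν2 : (-(n:ℝ)) / (q:ℝ) ^ 2 ≠ 0 := by rw [neg_div]; exact neg_ne_zero.2 hν.ne'
  unfold cc
  rw [B0_int D (σ := 1) (by simp) D.h (by simp) hν.ne', B0_int D (σ := -1) (by simp) D.hm (by simp [D.hm_apply]) hν2,
    ← integral_add (S_int D (by simp) _) (S_int D (by simp) _), ← integral_const_mul, ← integral_complex_ofReal]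
  apply setIntegral_congr_fun measurableSet_Ioi
  intro x hx
  have hx : 0 < x := hx
  obtain ⟨z1, z2⟩ := z_rel hq hn hx
  have := Y_rel (z := 4 * π * √(n * x) / q)
  simp only
  rw [← mul_add, show (((1:ℝ):ℂ) * (x:ℂ)) = (x:ℂ) by simp, show (((-1:ℝ):ℂ) * (x:ℂ)) = ((-x:ℝ):ℂ) by simp,
    neg_div, logI hx, logI hν, logNI hx, logNI hν]
  rw [z1, z2] at this
  rw [show -(2 * π) * (D.g x * besselY0 (4 * π * √(n * x) / q)) = D.g x * (-(2 * π) * besselY0 (4 * π * √(n * x) / q)) by ring,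
    Complex.ofReal_mul (D.g x), ← this]
  congr 3
  · push_cast; ring
  · push_cast
    linear_combination (4 * π ^ 2 * x * (n / q ^ 2) : ℂ) * Complex.I_sq
  · push_cast; ring
  · push_cast
    linear_combination (4 * π ^ 2 * x * (n / q ^ 2) : ℂ) * Complex.I_sq

lemma K_comb (D : Dat) {q n : ℕ} (hq : 1 ≤ q) (hn : 0 < n) : B0 D.h (cc q (-n)) + B0 D.hm (cc q n) =
    ((4 * ∫ x in Ioi (0:ℝ), D.g x * besselK0 (4 * π * √(n * x) / q) : ℝ) : ℂ) := by
  have hq' : (0:ℝ) < q := by exact_mod_cast hq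
  have hn' : (0:ℝ) < n := by exact_mod_cast hn
  have hν : 0 < (n:ℝ) / (q:ℝ) ^ 2 := by positivity
  have hν2 : (-(n:ℝ)) / (q:ℝ) ^ 2 ≠ 0 := by rw [neg_div]; exact neg_ne_zero.2 hν.ne'
  unfold cc
  rw [B0_int D (σ := 1) (by simp) D.h (by simp) hν2, B0_int D (σ := -1) (by simp) D.hm (by simp [D.hm_apply]) hν.ne',
    ← integral_add (S_int D (by simp) _) (S_int D (by simp) _), ← integral_const_mul, ← integral_complex_ofReal]
  apply setIntegral_congr_fun measurableSet_Ioi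
  intro x hx
  have hx : 0 < x := hx
  obtain ⟨z1, z2⟩ := z_rel hq hn hx
  have := K_rel (z := 4 * π * √(n * x) / q)
  simp only
  rw [← mul_add, show (((1:ℝ):ℂ) * (x:ℂ)) = (x:ℂ) by simp, show (((-1:ℝ):ℂ) * (x:ℂ)) = ((-x:ℝ):ℂ) by simp,
    neg_div, logI hx, logI hν, logNI hx, logNI hν]
  rw [z1, z2] at this
  rw [show 4 * (D.g x * besselK0 (4 * π * √(n * x) / q)) = D.g x * (4 * besselK0 (4 * π * √(n * x) / q)) by ring,
    Complex.ofReal_mul (D.g x), ← this]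
  congr 3
  · push_cast; ring
  · push_cast
    linear_combination -(4 * π ^ 2 * x * (n / q ^ 2) : ℂ) * Complex.I_sq
  · push_cast; ring
  · push_cast
    linear_combination -(4 * π ^ 2 * x * (n / q ^ 2) : ℂ) * Complex.I_sq

lemma regroup (f : ℕ → ℂ) (hf : Summable fun p : ℕ+ × ℕ+ => f (p.1 * p.2 : ℕ+)) :
    ∑' p : ℕ+ × ℕ+, f (p.1 * p.2 : ℕ+) = ∑' n : ℕ, (dd n : ℂ) * f n := by
  have e (x : Σ n : ℕ+, Nat.divisorsAntidiagonal n) :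
      f ((sigmaAntidiagonalEquivProd x).1 * (sigmaAntidiagonalEquivProd x).2 : ℕ+) = f (x.1 : ℕ) := by
    congr 1
    have := x.2.2
    rw [Nat.mem_divisorsAntidiagonal] at this
    exact this.1
  have hs : Summable fun x : (Σ n : ℕ+, Nat.divisorsAntidiagonal n) => f (x.1 : ℕ) := by
    have := (sigmaAntidiagonalEquivProd.summable_iff).2 hf
    simpa only [Function.comp_def, e] using this
  rw [← sigmaAntidiagonalEquivProd.tsum_eq]
  simp only [e]
  rw [hs.tsum_sigma]
  have h1 (n : ℕ+) : ∑' _ : Nat.divisorsAntidiagonal n, f (n:ℕ) = (dd n : ℂ) * f n := by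
    rw [tsum_fintype, Finset.sum_const, nsmul_eq_mul]
    congr 2
    rw [Finset.card_univ, Fintype.card_coe, dd]
    rw [← Nat.map_div_right_divisors, Finset.card_map]
  simp only [h1]
  refine PNat.coe_injective.tsum_eq (f := fun n : ℕ => (dd n : ℂ) * f n) ?_
  intro n hn
  rcases Nat.eq_zero_or_pos n with h | h
  · subst h; simp [dd] at hn
  · exact ⟨⟨n, h⟩, rfl⟩

lemma B0_bound (H : 𝓢(ℝ, ℂ)) {q : ℕ} (hq : 1 ≤ q) : ∃ C, 0 ≤ C ∧ ∀ n : ℝ, n ≠ 0 → ‖B0 H (cc q n)‖ ≤ C / n ^ 2 := by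
  obtain ⟨C, hC, h⟩ := B_cc_bound H hq
  refine ⟨C, hC, fun n hn => ?_⟩
  refine le_of_tendsto (B_tendsto H (cc_re q n).ge (cc_ne hq hn)).norm ?_
  filter_upwards [Ioo_mem_nhdsGT (show (0:ℝ) < 1 by norm_num)] with s hs
  refine h s n hn ?_ (by simpa using hs.1) (by simpa using hs.2.le.trans (by norm_num))
  rw [Complex.norm_real, Real.norm_of_nonneg hs.1.le]; linarith [hs.2]

lemma half_summable {q : ℕ} (hq : 1 ≤ q) (H1 H2 : 𝓢(ℝ, ℂ)) (u : ℕ → ℝ) (τ : ℝ) (hτ : |τ| = 1) :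
    Summable fun p : ℕ+ × ℕ+ => (e2pi (u (p.1 * p.2 : ℕ+)) * (B0 H1 (cc q (τ * ((p.1 * p.2 : ℕ+) : ℕ))) + B0 H2 (cc q (-(τ * ((p.1 * p.2 : ℕ+) : ℕ)))))) := by
  obtain ⟨C1, hC1, h1⟩ := B0_bound H1 hq
  obtain ⟨C2, hC2, h2⟩ := B0_bound H2 hq
  refine Summable.of_norm_bounded (pnat_sq_summable.mul_left (C1 + C2)) fun p => ?_
  have τ0 : τ ≠ 0 := by rintro rfl; simp at hτ
  have τ2 : τ ^ 2 = 1 := by rw [← sq_abs, hτ]; norm_num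
  have hn : (((p.1 * p.2 : ℕ+) : ℕ) : ℝ) ≠ 0 := by exact_mod_cast (p.1 * p.2).ne_zero
  set n : ℝ := (((p.1 * p.2 : ℕ+) : ℕ) : ℝ)
  have e1 := h1 (τ * n) (mul_ne_zero τ0 hn)
  have e2 := h2 (-(τ * n)) (neg_ne_zero.2 (mul_ne_zero τ0 hn))
  rw [neg_sq] at e2
  rw [mul_pow, τ2, one_mul] at e1 e2
  rw [norm_mul, e2pi_norm, one_mul, mul_one_div, add_div]
  exact (norm_add_le _ _).trans (add_le_add e1 e2)

def F1 (D : Dat) (q : ℕ) (db : ℤ) (n : ℕ) : ℂ :=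
  e2pi (-(n * db) / q) * (B0 D.h (cc q n) + B0 D.hm (cc q (-n)))

def F2 (D : Dat) (q : ℕ) (db : ℤ) (n : ℕ) : ℂ :=
  e2pi ((n * db) / q) * (B0 D.h (cc q (-n)) + B0 D.hm (cc q n))

def F0 (D : Dat) (q : ℕ) (d : ℤ) (n : ℕ) : ℂ :=
  e2pi ((n : ℝ) * (d : ℝ) / q) * (D.g n : ℂ)

theorem final (D : Dat) {q : ℕ} (hq : 1 ≤ q) {d db : ℤ} (hdb : (q:ℤ) ∣ d * db - 1) :
    (∑' n : ℕ, (dd n : ℂ) * (e2pi ((n : ℝ) * (d : ℝ) / q) * (D.g n : ℂ)))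
    = (1 / (q : ℂ)) *
        (((∫ x in Set.Ioi (0:ℝ),
          (Real.log x + 2 * Real.eulerMascheroniConstant - 2 * Real.log q) * D.g x) : ℝ) : ℂ)
      + (1 / (q : ℂ)) * (∑' n : ℕ, (dd n : ℂ) * (e2pi (-(n * db) / q) * (B0 D.h (cc q n) + B0 D.hm (cc q (-n))))
        + ∑' n : ℕ, (dd n : ℂ) * (e2pi ((n * db) / q) * (B0 D.h (cc q (-n)) + B0 D.hm (cc q n)))) := by
  have s1 : Summable fun p : ℕ+ × ℕ+ => F1 D q db (p.1 * p.2 : ℕ+) := by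
    refine (half_summable hq D.h D.hm (fun n => -(n * db) / q) 1 (by simp)).congr fun p => ?_
    unfold F1
    rw [one_mul]
  have s2 : Summable fun p : ℕ+ × ℕ+ => F2 D q db (p.1 * p.2 : ℕ+) := by
    refine (half_summable hq D.h D.hm (fun n => (n * db) / q) (-1) (by simp)).congr fun p => ?_
    unfold F2
    rw [neg_one_mul, neg_neg]
  have s0 : Summable fun p : ℕ+ × ℕ+ => F0 D q d (p.1 * p.2 : ℕ+) := by
    refine (Dsum_summable D q d 0).congr fun p => ?_
    unfold F0
    simp
  have := ident_zero D hq hdb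
  have r0 := regroup _ s0
  have r1 := regroup _ s1
  have r2 := regroup _ s2
  have e0 : ∑' p : ℕ+ × ℕ+, F0 D q d (p.1 * p.2 : ℕ+) = ∑' p : ℕ+ × ℕ+, e2pi (((p.1 * p.2 : ℕ+) : ℕ) * d / q) * D.g ((p.1 * p.2 : ℕ+) : ℕ) := by
    unfold F0; rfl
  have e1 : ∑' p : ℕ+ × ℕ+, W0 D q db (p.1 * p.2 : ℕ+) = ∑' p : ℕ+ × ℕ+, (F1 D q db (p.1 * p.2 : ℕ+) + F2 D q db (p.1 * p.2 : ℕ+)) := by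
    unfold W0 F1 F2; rfl
  rw [← e0, e1, s1.tsum_add s2, r0, r1, r2] at this
  unfold F0 F1 F2 at this
  exact this

lemma inv_dvd {q : ℕ} (hq : 1 ≤ q) {d : ℤ} (hd : Int.gcd d q = 1) : (q:ℤ) ∣ d * ((((d : ZMod q))⁻¹).val : ℤ) - 1 := by
  have : NeZero q := ⟨by lia⟩
  rw [← ZMod.intCast_eq_intCast_iff_dvd_sub]
  push_cast
  rw [ZMod.natCast_zmod_val]
  exact (ZMod.coe_int_mul_inv_eq_one (Int.isCoprime_iff_gcd_eq_one.2 hd)).symm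

end Vor

/-- Voronoi summation for the divisor function. -/
theorem voronoi_divisor (g : ℝ → ℝ) (hg : ContDiff ℝ (⊤ : ℕ∞) g)
    (hgc : HasCompactSupport g) (hg0 : ∀ x : ℝ, x ≤ 0 → g x = 0)
    (q : ℕ) (hq : 1 ≤ q) (d : ℤ) (hd : Int.gcd d q = 1) :
    (∑' n : ℕ, (dd n : ℂ) * e2pi ((n : ℝ) * (d : ℝ) / q) * (g n : ℂ))
    = (1 / (q : ℂ)) *
        (((∫ x in Set.Ioi (0:ℝ),
          (Real.log x + 2 * Real.eulerMascheroniConstant - 2 * Real.log q) * g x) : ℝ) : ℂ)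
      + (∑' n : ℕ, (dd n : ℂ) *
          e2pi (-(((n : ℝ) * ((((d : ZMod q))⁻¹).val : ℝ))) / q) *
          (((-(2 * Real.pi / q)) * ∫ x in Set.Ioi (0:ℝ),
              g x * besselY0 (4 * Real.pi * Real.sqrt ((n : ℝ) * x) / q) : ℝ) : ℂ))
      + (∑' n : ℕ, (dd n : ℂ) *
          e2pi (((n : ℝ) * ((((d : ZMod q))⁻¹).val : ℝ)) / q) *
          ((((4 / (q:ℝ))) * ∫ x in Set.Ioi (0:ℝ),
              g x * besselK0 (4 * Real.pi * Real.sqrt ((n : ℝ) * x) / q) : ℝ) : ℂ)) := by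
  have main := Vor.final ⟨g, hg, hgc, hg0⟩ hq (Vor.inv_dvd hq hd)
  rw [mul_add, ← tsum_mul_left, ← tsum_mul_left, ← add_assoc] at main
  refine (tsum_congr fun n => mul_assoc _ _ _).trans (main.trans ?_)
  congr 1
  · congr 1
    refine tsum_congr fun n => ?_
    rcases Nat.eq_zero_or_pos n with h | h
    · subst h; simp [dd]
    rw [Vor.Y_comb _ hq h, Complex.ofReal_mul, Complex.ofReal_mul, Int.cast_natCast]
    push_cast
    ring
  · refine tsum_congr fun n => ?_
    rcases Nat.eq_zero_or_pos n with h | h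
    · subst h; simp [dd]
    rw [Vor.K_comb _ hq h, Complex.ofReal_mul, Complex.ofReal_mul, Int.cast_natCast]
    push_cast
    ring
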